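/- There exist universal constants c, C > 0 such that for every dimension n and every isotropic random vector X in ℝⁿ with log-concave density, one has P(| |X| − √n | ≥ t√n) ≤ C·exp(−c·n^{1/2}·min(t³, t)) for all t ≥ 0. -/

import Mathlib

open MeasureTheory ProbabilityTheory Real
open scoped ENNReal RealInnerProductSpace Pointwise NNReal

noncomputable section

/-- A nonnegative function is log-concave if `f(λx+(1-λ)y) ≥ f(x)^λ f(y)^{1-λ}`. -/
def IsLogConcaveFn {E : Type*} [AddCommGroup E] [Module ℝ E] (f : E → ℝ) : Prop :=
  (∀ x, 0 ≤ f x) ∧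
  ∀ x y : E, ∀ l : ℝ, 0 ≤ l → l ≤ 1 →
    f x ^ l * f y ^ (1 - l) ≤ f (l • x + (1 - l) • y)

/-- Hilbert-Schmidt (Frobenius) norm of a matrix. -/
def hsNorm {n : ℕ} (A : Matrix (Fin n) (Fin n) ℝ) : ℝ :=
  Real.sqrt (∑ i, ∑ j, (A i j) ^ 2)

/-- Operator norm of a matrix acting on Euclidean space. -/
def opNorm {n : ℕ} (A : Matrix (Fin n) (Fin n) ℝ) : ℝ :=
  ‖LinearMap.toContinuousLinearMap (Matrix.toEuclideanLin A)‖

/-- Application of a matrix to a Euclidean vector. -/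
def mApp {n : ℕ} (A : Matrix (Fin n) (Fin n) ℝ) (x : EuclideanSpace ℝ (Fin n)) :
    EuclideanSpace ℝ (Fin n) := Matrix.toEuclideanLin A x

/-- The random vector `X` has density `f` with respect to Lebesgue measure. -/
def HasDensityFn {Ω : Type*} [MeasurableSpace Ω] (P : Measure Ω) {n : ℕ}
    (X : Ω → EuclideanSpace ℝ (Fin n)) (f : EuclideanSpace ℝ (Fin n) → ℝ) : Prop :=
  Measurable X ∧ Measure.map X P = volume.withDensity fun x => ENNReal.ofReal (f x)

/-- `X` is isotropic: centered with identity covariance. -/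
def Isotropic {Ω : Type*} [MeasurableSpace Ω] (P : Measure Ω) {n : ℕ}
    (X : Ω → EuclideanSpace ℝ (Fin n)) : Prop :=
  (∫ ω, X ω ∂P) = 0 ∧
  ∀ θ η : EuclideanSpace ℝ (Fin n), (∫ ω, ⟪X ω, θ⟫ * ⟪X ω, η⟫ ∂P) = ⟪θ, η⟫

/-- `X` is ψ_α with constant `b`. -/
def IsPsiAlpha {Ω : Type*} [MeasurableSpace Ω] (P : Measure Ω) {n : ℕ}
    (X : Ω → EuclideanSpace ℝ (Fin n)) (α b : ℝ) : Prop :=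
  ∀ p : ℝ, 2 ≤ p → ∀ y : EuclideanSpace ℝ (Fin n),
    (∫ ω, |⟪X ω, y⟫| ^ p ∂P) ^ (1/p) ≤ b * p ^ (1/α) * (∫ ω, ⟪X ω, y⟫ ^ 2 ∂P) ^ ((1:ℝ)/2)

/-- `G` is a standard Gaussian random vector in `ℝⁿ`. -/
def IsStdGaussian {Ω : Type*} [MeasurableSpace Ω] (P : Measure Ω) {n : ℕ}
    (G : Ω → EuclideanSpace ℝ (Fin n)) : Prop :=
  Measurable G ∧
  Measure.map G P = volume.withDensity fun x =>
    ENNReal.ofReal ((2 * π) ^ (-(n:ℝ)/2) * Real.exp (-‖x‖ ^ 2 / 2))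

/-- Surface area of the unit sphere `S^{k-1}` in `ℝᵏ`. -/
def sphereVol (k : ℕ) : ℝ := 2 * π ^ ((k : ℝ)/2) / Real.Gamma ((k : ℝ)/2)

/-- The marginal density `π_F g(x) = ∫_{F^⊥} g(x+y) dy`. -/
def marginalDensity {n : ℕ} (g : EuclideanSpace ℝ (Fin n) → ℝ)
    (F : Submodule ℝ (EuclideanSpace ℝ (Fin n))) (x : EuclideanSpace ℝ (Fin n)) : ℝ :=
  ∫ y : Fᗮ, g (x + y)

/-- `h_{k,p}(u) = vol(S^{k-1}) ∫₀^∞ t^{p+k-1} π_{u(E₀)} g(t u(θ₀)) dt`. -/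
def hkp {n : ℕ} (g : EuclideanSpace ℝ (Fin n) → ℝ)
    (E₀ : Submodule ℝ (EuclideanSpace ℝ (Fin n))) (θ₀ : EuclideanSpace ℝ (Fin n))
    (k : ℕ) (p : ℝ) (u : Matrix (Fin n) (Fin n) ℝ) : ℝ :=
  sphereVol k * ∫ t in Set.Ioi (0:ℝ), t ^ (p + (k:ℝ) - 1) *
    marginalDensity g (Submodule.map (Matrix.toEuclideanLin u) E₀) (t • mApp u θ₀)

/-- Support functional of the one-sided L_q-centroid body `Z⁺_q(w)`. -/
def suppZplus {m : ℕ} (w : EuclideanSpace ℝ (Fin m) → ℝ) (q : ℝ)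
    (y : EuclideanSpace ℝ (Fin m)) : ℝ :=
  (2 * ∫ x, (max ⟪x, y⟫ 0) ^ q * w x) ^ (1/q)

/-- Ball's body `K_q(w) = {x : q ∫₀^∞ t^{q-1} w(tx) dt ≥ 1}`. -/
def ballBody {m : ℕ} (w : EuclideanSpace ℝ (Fin m) → ℝ) (q : ℝ) :
    Set (EuclideanSpace ℝ (Fin m)) :=
  {x | 1 ≤ q * ∫ t in Set.Ioi (0:ℝ), t ^ (q-1) * w (t • x)}

/-- The one-sided L_q-centroid body `Z⁺_q(w)`, as the convex set with support
functional `suppZplus w q`. -/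
def ZplusBody {m : ℕ} (w : EuclideanSpace ℝ (Fin m) → ℝ) (q : ℝ) :
    Set (EuclideanSpace ℝ (Fin m)) :=
  {x | ∀ y, ⟪x, y⟫ ≤ suppZplus w q y}

/-!
Let `μ` be the law of `X`, let `Γ` be a tuple of `n` independent standard Gaussian vectors in a
`k`-dimensional space, and let `Z` be a further one. Given `X`, the norm of
`Y = ∑ i, X i • Γ i + √n • Z` is `R = √(‖X‖² + n)` times the norm of a standard Gaussian vector,
hence close to `R √k`, so a deviation estimate for `R` follows from one for `‖Y‖`.

Conditionally on a bounded `Γ`, the density `W(Γ, ·)` of `Y` is log-concave in `y` by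
Prékopa–Leindler, and replacing `Γ` by `Γ + D` costs at most a factor `exp (-(κ + ‖D‖² / 4))`. The
quadratic loss is absorbed by the strong log-concavity of the Gaussian weight on `Γ`, and the
Jacobian `r ^ (k - 1)` of polar coordinates makes the law of `‖Y‖` strictly log-concave. With
`k ≍ t √n` this gives `P(R ≤ ρ) P(R ≥ (1 + t) ρ) ≤ C exp (-c t³ √n)` for `t ≤ 1`, hence
concentration of `R` about its median; larger deviations follow by convexity. As `E R² = 2n`, the
median is within `O(n ^ (1 / 3))` of `√(2n)`, and `|‖X‖ - √n| ≤ 3 |R - √(2n)|`.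
-/

/-! ### The Prékopa–Leindler inequality -/

section BrunnMinkowskiReal

lemma volume_add_volume_le_volume_add_of_isCompact {A B : Set ℝ} (hA : IsCompact A)
    (hB : IsCompact B) (hAne : A.Nonempty) (hBne : B.Nonempty) :
    volume A + volume B ≤ volume (A + B) := by
  obtain ⟨a, haA, ha⟩ := hA.exists_isGreatest hAne
  obtain ⟨b, hbB, hb⟩ := hB.exists_isLeast hBne
  -- `A + b` and `a + B` lie on the two sides of `a + b`, hence are essentially disjoint.
  have left : volume A ≤ volume ((A + B) \ Set.Ici (a + b)) := calc
    volume A = volume ((fun x ↦ x + b) '' (A \ {a})) := by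
      rw [Set.image_add_right, measure_preimage_add_right, measure_sdiff_null (by simp)]
    _ ≤ _ := by
      refine measure_mono ?_
      rintro _ ⟨x, ⟨hx, hxa⟩, rfl⟩
      refine ⟨Set.add_mem_add hx hbB, ?_⟩
      have hlt : x < a := lt_of_le_of_ne (ha hx) hxa
      simpa using hlt
  have right : volume B ≤ volume ((A + B) ∩ Set.Ici (a + b)) := calc
    volume B = volume ((fun x ↦ a + x) '' B) := by
      rw [Set.image_add_left, measure_preimage_add]
    _ ≤ _ := by
      refine measure_mono ?_
      rintro _ ⟨x, hx, rfl⟩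
      exact ⟨Set.add_mem_add haA hx, by simpa using hb hx⟩
  calc volume A + volume B ≤ _ := add_le_add left right
    _ = volume (A + B) := by rw [add_comm, measure_inter_add_sdiff _ measurableSet_Ici]

lemma weighted_volume_add_le_volume {A B C : Set ℝ} {l : ℝ} (hl0 : 0 < l) (hl1 : l < 1)
    (hA : MeasurableSet A) (hB : MeasurableSet B) (hAne : A.Nonempty) (hBne : B.Nonempty)
    (hC : ∀ a ∈ A, ∀ b ∈ B, l * a + (1 - l) * b ∈ C) :
    ENNReal.ofReal l * volume A + ENNReal.ofReal (1 - l) * volume B ≤ volume C := by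
  obtain ⟨a₀, ha₀⟩ := hAne
  obtain ⟨b₀, hb₀⟩ := hBne
  have inner : ∀ K : Set ℝ, (K ⊆ A ∧ IsCompact K) → ∀ L : Set ℝ, (L ⊆ B ∧ IsCompact L) →
      ENNReal.ofReal l * volume K + ENNReal.ofReal (1 - l) * volume L ≤ volume C := by
    rintro K ⟨hKA, hK⟩ L ⟨hLB, hL⟩
    have hsum := volume_add_volume_le_volume_add_of_isCompact ((hK.insert a₀).smul l)
      ((hL.insert b₀).smul (1 - l)) (Set.insert_nonempty _ _).smul_set
      (Set.insert_nonempty _ _).smul_set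
    rw [Measure.addHaar_smul, Measure.addHaar_smul] at hsum
    simp only [Module.finrank_self, pow_one, abs_of_pos hl0, abs_of_pos (sub_pos.2 hl1)] at hsum
    refine le_trans (add_le_add ?_ ?_) (hsum.trans (measure_mono ?_))
    · gcongr; exact Set.subset_insert _ _
    · gcongr; exact Set.subset_insert _ _
    · rintro _ ⟨_, ⟨x, hx, rfl⟩, _, ⟨y, hy, rfl⟩, rfl⟩
      exact hC x (Set.insert_subset ha₀ hKA hx) y (Set.insert_subset hb₀ hLB hy)
  rw [hA.measure_eq_iSup_isCompact, hB.measure_eq_iSup_isCompact]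
  simp_rw [ENNReal.mul_iSup, iSup_and']
  exact ENNReal.biSup_add_biSup_le' ⟨∅, by simp⟩ ⟨∅, by simp⟩ inner

end BrunnMinkowskiReal

lemma rpow_mul_rpow_le_weighted_add {l : ℝ} (hl0 : 0 < l) (hl1 : l < 1) (a b : ℝ≥0∞) :
    a ^ l * b ^ (1 - l) ≤ ENNReal.ofReal l * a + ENNReal.ofReal (1 - l) * b := by
  have hm0 : 0 < 1 - l := sub_pos.2 hl1
  have young := ENNReal.young_inequality (a ^ l) (b ^ (1 - l)) (p := 1 / l) (q := 1 / (1 - l))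
    (by constructor <;> first | positivity | (field_simp; ring))
  rw [← ENNReal.rpow_mul, ← ENNReal.rpow_mul, mul_one_div_cancel hl0.ne',
    mul_one_div_cancel hm0.ne', ENNReal.rpow_one, ENNReal.rpow_one, ENNReal.div_eq_inv_mul,
    ENNReal.div_eq_inv_mul, ← ENNReal.ofReal_inv_of_pos (by positivity),
    ← ENNReal.ofReal_inv_of_pos (by positivity)] at young
  simpa using young

section LayerCake

variable {α : Type*} [MeasurableSpace α] (μ : Measure α) {f : α → ℝ≥0∞}

lemma lintegral_eq_setLIntegral_Ioo_measure_lt (hf : Measurable f) (hf1 : ∀ x, f x ≤ 1) :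
    ∫⁻ x, f x ∂μ = ∫⁻ t in Set.Ioo (0 : ℝ) 1, μ {x | ENNReal.ofReal t < f x} := by
  have hfin : ∀ x, f x ≠ ⊤ := fun x ↦ ne_top_of_le_ne_top ENNReal.one_ne_top (hf1 x)
  have beyond : ∀ t ∈ Set.Ici (1 : ℝ), μ {x | t < (f x).toReal} = 0 := by
    intro t ht
    rw [show {x | t < (f x).toReal} = ∅ from Set.eq_empty_of_forall_notMem fun x hx ↦ ?_,
      measure_empty]
    have hx1 : (f x).toReal ≤ 1 := ENNReal.toReal_mono ENNReal.one_ne_top (hf1 x)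
    exact absurd (hx1.trans ht) (not_le.2 hx)
  calc ∫⁻ x, f x ∂μ
      = ∫⁻ x, ENNReal.ofReal (f x).toReal ∂μ :=
        lintegral_congr fun x ↦ (ENNReal.ofReal_toReal (hfin x)).symm
    _ = ∫⁻ t in Set.Ioi (0 : ℝ), μ {x | t < (f x).toReal} :=
        lintegral_eq_lintegral_meas_lt μ (.of_forall fun x ↦ ENNReal.toReal_nonneg)
          hf.ennreal_toReal.aemeasurable
    _ = ∫⁻ t in Set.Ioo (0 : ℝ) 1, μ {x | t < (f x).toReal} := by
        rw [← Set.Ioo_union_Ici_eq_Ioi (zero_lt_one (α := ℝ)), lintegral_union measurableSet_Ici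
          (Set.disjoint_left.2 fun t ht ht' ↦ absurd ht.2 (not_lt.2 ht')),
          setLIntegral_congr_fun measurableSet_Ici beyond, lintegral_zero, add_zero]
    _ = _ := by
        refine setLIntegral_congr_fun measurableSet_Ioo fun t ht ↦ ?_
        simp_rw [ENNReal.ofReal_lt_iff_lt_toReal ht.1.le (hfin _)]

lemma setLIntegral_Ioo_measure_lt_le_lintegral (hf : Measurable f) :
    ∫⁻ t in Set.Ioo (0 : ℝ) 1, μ {x | ENNReal.ofReal t < f x} ≤ ∫⁻ x, f x ∂μ := calc
  _ = ∫⁻ t in Set.Ioo (0 : ℝ) 1, μ {x | ENNReal.ofReal t < min (f x) 1} := by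
    refine setLIntegral_congr_fun measurableSet_Ioo fun t ht ↦ ?_
    simp_rw [lt_min_iff, ENNReal.ofReal_lt_one, ht.2, and_true]
  _ = ∫⁻ x, min (f x) 1 ∂μ :=
    (lintegral_eq_setLIntegral_Ioo_measure_lt μ (hf.min measurable_const)
      fun _ ↦ min_le_right _ _).symm
  _ ≤ ∫⁻ x, f x ∂μ := lintegral_mono fun _ ↦ min_le_left _ _

lemma measurable_measure_ofReal_lt (f : α → ℝ≥0∞) :
    Measurable fun t : ℝ ↦ μ {x | ENNReal.ofReal t < f x} :=
  Antitone.measurable fun _ _ hst ↦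
    measure_mono fun _ hx ↦ lt_of_le_of_lt (ENNReal.ofReal_le_ofReal hst) hx

lemma lintegral_eq_iSup_lintegral_min_natCast (hf : Measurable f) :
    ∫⁻ x, f x ∂μ = ⨆ N : ℕ, ∫⁻ x, min (f x) N ∂μ := by
  rw [← lintegral_iSup (fun N ↦ hf.min measurable_const)
    fun a b hab x ↦ min_le_min_left _ (by exact_mod_cast hab)]
  refine lintegral_congr fun x ↦ le_antisymm ?_ (iSup_le fun N ↦ min_le_left _ _)
  rcases eq_or_ne (f x) ⊤ with hx | hx
  · simp [hx, ENNReal.iSup_natCast]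
  · obtain ⟨N, hN⟩ := ENNReal.exists_nat_gt hx
    exact le_iSup_of_le N (by simp [hN.le])

end LayerCake

/-- A measure `μ` satisfies the Prékopa–Leindler inequality at `l` with weight `q` if the hypothesis
`f x ^ l * g y ^ (1 - l) ≤ q x y * h (l x + (1 - l) y)` implies
`(∫ f) ^ l * (∫ g) ^ (1 - l) ≤ ∫ h`. Lebesgue measure has weight `1`; strongly log-concave measures
have a larger weight. -/
def PrekopaLeindler {E : Type*} [AddCommGroup E] [Module ℝ E] [MeasurableSpace E] (μ : Measure E)
    (l : ℝ) (q : E → E → ℝ≥0∞) : Prop :=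
  ∀ f g h : E → ℝ≥0∞, Measurable f → Measurable g → Measurable h →
    (∀ x y, f x ^ l * g y ^ (1 - l) ≤ q x y * h (l • x + (1 - l) • y)) →
    (∫⁻ x, f x ∂μ) ^ l * (∫⁻ x, g x ∂μ) ^ (1 - l) ≤ ∫⁻ x, h x ∂μ

section PrekopaLeindlerReal

variable {l : ℝ} {f g h : ℝ → ℝ≥0∞}

lemma weighted_lintegral_add_le_of_iSup_eq_one (hl0 : 0 < l) (hl1 : l < 1)
    (hf : Measurable f) (hg : Measurable g) (hh : Measurable h)
    (hf1 : ⨆ x, f x = 1) (hg1 : ⨆ x, g x = 1)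
    (hfgh : ∀ x y, f x ^ l * g y ^ (1 - l) ≤ h (l * x + (1 - l) * y)) :
    ENNReal.ofReal l * (∫⁻ x, f x) + ENNReal.ofReal (1 - l) * (∫⁻ x, g x) ≤ ∫⁻ x, h x := by
  have level (f : ℝ → ℝ≥0∞) := measurable_measure_ofReal_lt volume f
  rw [lintegral_eq_setLIntegral_Ioo_measure_lt volume hf fun x ↦ hf1 ▸ le_iSup f x,
    lintegral_eq_setLIntegral_Ioo_measure_lt volume hg fun x ↦ hg1 ▸ le_iSup g x,
    ← lintegral_const_mul _ (level f), ← lintegral_const_mul _ (level g),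
    ← lintegral_add_left ((level f).const_mul _)]
  refine le_trans (setLIntegral_mono (level h) fun t ht ↦ ?_)
    (setLIntegral_Ioo_measure_lt_le_lintegral volume hh)
  have ht1 : ENNReal.ofReal t < 1 := by simpa using ht.2
  refine weighted_volume_add_le_volume hl0 hl1 (measurableSet_lt measurable_const hf)
    (measurableSet_lt measurable_const hg) (by exact lt_iSup_iff.1 (hf1 ▸ ht1))
    (by exact lt_iSup_iff.1 (hg1 ▸ ht1)) fun a ha b hb ↦ lt_of_lt_of_le ?_ (hfgh a b)
  calc ENNReal.ofReal t = ENNReal.ofReal t ^ l * ENNReal.ofReal t ^ (1 - l) := by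
        rw [← ENNReal.rpow_add _ _ (by simpa using ht.1) ENNReal.ofReal_ne_top]; simp
    _ < _ := ENNReal.mul_lt_mul (ENNReal.rpow_lt_rpow ha hl0)
        (ENNReal.rpow_lt_rpow hb (sub_pos.2 hl1))

lemma lintegral_rpow_mul_le_of_iSup_ne_top (hl0 : 0 < l) (hl1 : l < 1)
    (hf : Measurable f) (hg : Measurable g) (hh : Measurable h)
    (hf_top : ⨆ x, f x ≠ ⊤) (hg_top : ⨆ x, g x ≠ ⊤)
    (hfgh : ∀ x y, f x ^ l * g y ^ (1 - l) ≤ h (l * x + (1 - l) * y)) :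
    (∫⁻ x, f x) ^ l * (∫⁻ x, g x) ^ (1 - l) ≤ ∫⁻ x, h x := by
  have hm0 : (0 : ℝ) < 1 - l := sub_pos.2 hl1
  set F := ⨆ x, f x with hF
  set G := ⨆ x, g x with hG
  by_cases hF0 : F = 0
  · have hf0 : ∀ x, f x = 0 := by simpa [hF] using hF0
    simp [hf0, hl0]
  by_cases hG0 : G = 0
  · have hg0 : ∀ x, g x = 0 := by simpa [hG] using hG0
    simp [hg0, hm0]
  set c := F ^ l * G ^ (1 - l) with hc
  have hc0 : c ≠ 0 := by simp [hc, ENNReal.rpow_eq_zero_iff, hF0, hf_top, hG0, hg_top]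
  have hc_top : c ≠ ⊤ := ENNReal.mul_ne_top (by simp [hF0, hf_top]) (by simp [hG0, hg_top])
  have scale (a b : ℝ≥0∞) : (F⁻¹ * a) ^ l * (G⁻¹ * b) ^ (1 - l) = c⁻¹ * (a ^ l * b ^ (1 - l)) := by
    rw [ENNReal.mul_rpow_of_nonneg _ _ hl0.le, ENNReal.mul_rpow_of_nonneg _ _ hm0.le,
      ENNReal.inv_rpow, ENNReal.inv_rpow, hc, ENNReal.mul_inv
        (.inl (by simp [ENNReal.rpow_eq_zero_iff, hF0, hf_top])) (.inl (by simp [hF0, hf_top]))]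
    ring
  have normalized := (rpow_mul_rpow_le_weighted_add hl0 hl1 _ _).trans <|
    weighted_lintegral_add_le_of_iSup_eq_one hl0 hl1 (hf.const_mul F⁻¹) (hg.const_mul G⁻¹)
      (hh.const_mul c⁻¹) (by rw [← ENNReal.mul_iSup, ENNReal.inv_mul_cancel hF0 hf_top])
      (by rw [← ENNReal.mul_iSup, ENNReal.inv_mul_cancel hG0 hg_top])
      fun x y ↦ by rw [scale]; gcongr; exact hfgh x y
  rw [lintegral_const_mul _ hf, lintegral_const_mul _ hg, lintegral_const_mul _ hh, scale]
    at normalized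
  exact (ENNReal.mul_le_mul_iff_right (ENNReal.inv_ne_zero.2 hc_top)
    (ENNReal.inv_ne_top.2 hc0)).1 normalized

theorem prekopaLeindler_volume_real (hl0 : 0 < l) (hl1 : l < 1) :
    PrekopaLeindler (volume : Measure ℝ) l 1 := by
  intro f g h hf hg hh hfgh
  have iSup_rpow {p : ℝ} (hp : 0 < p) (a : ℕ → ℝ≥0∞) : (⨆ i, a i) ^ p = ⨆ i, a i ^ p :=
    (ENNReal.orderIsoRpow p hp).map_iSup a
  rw [lintegral_eq_iSup_lintegral_min_natCast volume hf,
    lintegral_eq_iSup_lintegral_min_natCast volume hg, iSup_rpow hl0, iSup_rpow (sub_pos.2 hl1),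
    ENNReal.iSup_mul]
  simp_rw [ENNReal.mul_iSup]
  refine iSup₂_le fun N M ↦ lintegral_rpow_mul_le_of_iSup_ne_top hl0 hl1
    (hf.min measurable_const) (hg.min measurable_const) hh
    ((iSup_le fun x ↦ min_le_right _ _).trans_lt (ENNReal.natCast_lt_top N)).ne
    ((iSup_le fun x ↦ min_le_right _ _).trans_lt (ENNReal.natCast_lt_top M)).ne fun x y ↦ ?_
  have : (0 : ℝ) ≤ 1 - l := (sub_pos.2 hl1).le
  calc min (f x) N ^ l * min (g y) M ^ (1 - l) ≤ f x ^ l * g y ^ (1 - l) := by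
        gcongr <;> exact min_le_left _ _
    _ ≤ h (l * x + (1 - l) * y) := by simpa using hfgh x y

end PrekopaLeindlerReal

namespace PrekopaLeindler

variable {α β : Type*} [AddCommGroup α] [Module ℝ α] [MeasurableSpace α]
  [AddCommGroup β] [Module ℝ β] [MeasurableSpace β] {μ : Measure α} {ν : Measure β}
  {l : ℝ} {q : α → α → ℝ≥0∞} {q' : β → β → ℝ≥0∞}

lemma prod [SFinite ν] (hμ : PrekopaLeindler μ l q) (hν : PrekopaLeindler ν l q') :
    PrekopaLeindler (μ.prod ν) l (fun x y ↦ q x.1 y.1 * q' x.2 y.2) := by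
  intro f g h hf hg hh hfgh
  rw [lintegral_prod _ hf.aemeasurable, lintegral_prod _ hg.aemeasurable,
    lintegral_prod _ hh.aemeasurable]
  refine hμ _ _ _ hf.lintegral_prod_right' hg.lintegral_prod_right' hh.lintegral_prod_right'
    fun x y ↦ ?_
  have hslice : Measurable fun b ↦ h (l • x + (1 - l) • y, b) := hh.comp measurable_prodMk_left
  rw [← lintegral_const_mul _ hslice]
  refine hν (fun a ↦ f (x, a)) (fun a ↦ g (y, a)) _ (hf.comp measurable_prodMk_left)
    (hg.comp measurable_prodMk_left) (hslice.const_mul _) fun a b ↦ ?_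
  refine (hfgh (x, a) (y, b)).trans_eq ?_
  simp only [Prod.smul_mk, Prod.mk_add_mk]
  ring

lemma map (hμ : PrekopaLeindler μ l q) {e : α → β} (he : MeasurePreserving e μ ν)
    (he_affine : ∀ x y, e (l • x + (1 - l) • y) = l • e x + (1 - l) • e y)
    (hq : ∀ x y, q' (e x) (e y) ≤ q x y) : PrekopaLeindler ν l q' := by
  intro f g h hf hg hh hfgh
  rw [← he.lintegral_comp hf, ← he.lintegral_comp hg, ← he.lintegral_comp hh]
  refine hμ _ _ _ (hf.comp he.measurable) (hg.comp he.measurable) (hh.comp he.measurable)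
    fun x y ↦ (hfgh (e x) (e y)).trans ?_
  rw [← he_affine]
  gcongr
  exact hq x y

lemma pi_fin [SigmaFinite μ] (hμ : PrekopaLeindler μ l q) (n : ℕ) :
    PrekopaLeindler (Measure.pi (fun _ : Fin n ↦ μ)) l (fun x y ↦ ∏ i, q (x i) (y i)) := by
  induction n with
  | zero =>
    intro f g h _ _ _ hfgh
    rw [Measure.pi_of_empty (fun _ : Fin 0 ↦ μ) (x := 0), lintegral_dirac, lintegral_dirac,
      lintegral_dirac]
    simpa using hfgh 0 0
  | succ n ih =>
    refine (hμ.prod ih).map (e := fun p ↦ Fin.cons p.1 p.2) ?_ (fun x y ↦ ?_) fun x y ↦ ?_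
    · convert (measurePreserving_piFinSuccAbove (fun _ : Fin (n + 1) ↦ μ) 0).symm using 1
      ext p i
      simp [MeasurableEquiv.piFinSuccAbove, Fin.insertNthEquiv]
    · ext i
      refine Fin.cases ?_ ?_ i <;> simp
    · simp [Fin.prod_univ_succ]

lemma withDensity (hμ : PrekopaLeindler μ l q) (hl0 : 0 ≤ l) (hl1 : l ≤ 1) {ρ : α → ℝ≥0∞}
    (hρ : Measurable ρ) {q' : α → α → ℝ≥0∞}
    (hqq' : ∀ x y, ρ x ^ l * ρ y ^ (1 - l) * q' x y ≤ q x y * ρ (l • x + (1 - l) • y)) :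
    PrekopaLeindler (μ.withDensity ρ) l q' := by
  intro f g h hf hg hh hfgh
  simp only [lintegral_withDensity_eq_lintegral_mul _ hρ, hf, hg, hh]
  refine hμ _ _ _ (hρ.mul hf) (hρ.mul hg) (hρ.mul hh) fun x y ↦ ?_
  simp only [Pi.mul_apply, ENNReal.mul_rpow_of_nonneg _ _ hl0,
    ENNReal.mul_rpow_of_nonneg _ _ (sub_nonneg.2 hl1)]
  calc ρ x ^ l * f x ^ l * (ρ y ^ (1 - l) * g y ^ (1 - l))
      = ρ x ^ l * ρ y ^ (1 - l) * (f x ^ l * g y ^ (1 - l)) := by ring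
    _ ≤ ρ x ^ l * ρ y ^ (1 - l) * (q' x y * h (l • x + (1 - l) • y)) :=
      mul_le_mul_right (hfgh x y) _
    _ = ρ x ^ l * ρ y ^ (1 - l) * q' x y * h (l • x + (1 - l) • y) := by ring
    _ ≤ q x y * ρ (l • x + (1 - l) • y) * h (l • x + (1 - l) • y) := mul_le_mul_left (hqq' x y) _
    _ = q x y * (ρ (l • x + (1 - l) • y) * h (l • x + (1 - l) • y)) := by ring

lemma setLIntegral_mul_le (hμ : PrekopaLeindler μ (1 / 2) q) {S T U : Set α}
    (hS : MeasurableSet S) (hT : MeasurableSet T) (hU : MeasurableSet U) {f g h : α → ℝ≥0∞}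
    (hf : Measurable f) (hg : Measurable g) (hh : Measurable h)
    (hSTU : ∀ x ∈ S, ∀ y ∈ T, (1 / 2 : ℝ) • (x + y) ∈ U)
    (hfgh : ∀ x ∈ S, ∀ y ∈ T, f x * g y ≤ (q x y * h ((1 / 2 : ℝ) • (x + y))) ^ 2) :
    (∫⁻ x in S, f x ∂μ) * ∫⁻ x in T, g x ∂μ ≤ (∫⁻ x in U, h x ∂μ) ^ 2 := by
  have half_add (x y : α) : (1 / 2 : ℝ) • x + (1 - 1 / 2 : ℝ) • y = (1 / 2 : ℝ) • (x + y) := by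
    module
  have sq_rpow_half (a : ℝ≥0∞) : (a ^ 2) ^ (1 / 2 : ℝ) = a := by
    rw [← ENNReal.rpow_natCast_mul]
    norm_num
  have rpow_half_sq (a : ℝ≥0∞) : (a ^ (1 / 2 : ℝ)) ^ 2 = a := by
    rw [← ENNReal.rpow_mul_natCast]
    norm_num
  have key := hμ _ _ _ (hf.indicator hS) (hg.indicator hT) (hh.indicator hU) fun x y ↦ ?_
  · rw [lintegral_indicator hS, lintegral_indicator hT, lintegral_indicator hU] at key
    calc _ = ((∫⁻ x in S, f x ∂μ) ^ (1 / 2 : ℝ) * (∫⁻ x in T, g x ∂μ) ^ (1 - 1 / 2 : ℝ)) ^ 2 := by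
          rw [sub_half, mul_pow, rpow_half_sq, rpow_half_sq]
      _ ≤ _ := pow_le_pow_left' key 2
  · by_cases hx : x ∈ S
    · by_cases hy : y ∈ T
      · rw [half_add, Set.indicator_of_mem hx, Set.indicator_of_mem hy,
          Set.indicator_of_mem (hSTU x hx y hy), sub_half,
          ← ENNReal.mul_rpow_of_nonneg _ _ one_half_pos.le]
        exact (ENNReal.rpow_le_rpow (hfgh x hx y hy) one_half_pos.le).trans_eq (sq_rpow_half _)
      · rw [Set.indicator_of_notMem hy]
        norm_num
    · rw [Set.indicator_of_notMem hx]
      norm_num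

end PrekopaLeindler

section PrekopaLeindlerInnerProductSpace

variable {E : Type*} [NormedAddCommGroup E] [InnerProductSpace ℝ E] [FiniteDimensional ℝ E]
  [MeasurableSpace E] [BorelSpace E] {l : ℝ}

lemma prekopaLeindler_volume (hl0 : 0 < l) (hl1 : l < 1) :
    PrekopaLeindler (volume : Measure E) l 1 := by
  let b := stdOrthonormalBasis ℝ E
  refine ((prekopaLeindler_volume_real hl0 hl1).pi_fin _).map
    (e := fun x ↦ b.repr.symm (WithLp.toLp 2 x))
    (b.measurePreserving_repr_symm.comp (PiLp.volume_preserving_toLp _)) (fun x y ↦ ?_)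
    fun x y ↦ ?_
  · simp
  · simp

lemma gaussianPDFReal_rpow_mul_rpow_mul_exp (x y l : ℝ) :
    gaussianPDFReal 0 1 x ^ l * gaussianPDFReal 0 1 y ^ (1 - l) *
      rexp (l * (1 - l) * (x - y) ^ 2 / 2) = gaussianPDFReal 0 1 (l * x + (1 - l) * y) := by
  simp only [gaussianPDFReal, NNReal.coe_one, mul_one, sub_zero]
  have hs : (0 : ℝ) < (√(2 * π))⁻¹ := by positivity
  generalize (√(2 * π))⁻¹ = s at hs
  calc _ = s ^ l * s ^ (1 - l) * (rexp (-x ^ 2 / 2 * l) * rexp (-y ^ 2 / 2 * (1 - l)) *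
          rexp (l * (1 - l) * (x - y) ^ 2 / 2)) := by
        rw [mul_rpow hs.le (exp_pos _).le, mul_rpow hs.le (exp_pos _).le, ← exp_mul, ← exp_mul]
        ring
    _ = _ := by
        rw [← rpow_add hs, ← exp_add, ← exp_add, add_sub_cancel, rpow_one]
        ring_nf

lemma prekopaLeindler_gaussianReal (hl0 : 0 < l) (hl1 : l < 1) :
    PrekopaLeindler (gaussianReal 0 1) l
      (fun x y ↦ ENNReal.ofReal (rexp (l * (1 - l) * (x - y) ^ 2 / 2))) := by
  rw [gaussianReal_of_var_ne_zero _ one_ne_zero]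
  refine (prekopaLeindler_volume_real hl0 hl1).withDensity hl0.le hl1.le
    (measurable_gaussianPDF 0 1) fun x y ↦ le_of_eq ?_
  have hx := gaussianPDFReal_nonneg 0 1 x
  have hy := gaussianPDFReal_nonneg 0 1 y
  simp only [gaussianPDF, Pi.one_apply, one_mul, smul_eq_mul]
  rw [ENNReal.ofReal_rpow_of_nonneg hx hl0.le, ENNReal.ofReal_rpow_of_nonneg hy (by linarith),
    ← ENNReal.ofReal_mul (by positivity), ← ENNReal.ofReal_mul (by positivity),
    gaussianPDFReal_rpow_mul_rpow_mul_exp]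

lemma prekopaLeindler_stdGaussian (hl0 : 0 < l) (hl1 : l < 1) :
    PrekopaLeindler (stdGaussian E) l
      (fun x y ↦ ENNReal.ofReal (rexp (l * (1 - l) * ‖x - y‖ ^ 2 / 2))) := by
  let b := stdOrthonormalBasis ℝ E
  refine ((prekopaLeindler_gaussianReal hl0 hl1).pi_fin _).map
    (e := fun x ↦ b.repr.symm (WithLp.toLp 2 x)) ⟨by fun_prop, ?_⟩ (fun x y ↦ ?_) fun x y ↦ ?_
  · rw [← stdGaussian_map (E := EuclideanSpace ℝ (Fin (Module.finrank ℝ E))) b.repr.symm,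
      ← map_pi_eq_stdGaussian, Measure.map_map (by fun_prop) (by fun_prop)]
    rfl
  · simp
  · rw [← map_sub, b.repr.symm.norm_map, ← WithLp.toLp_sub, EuclideanSpace.real_norm_sq_eq,
      ← ENNReal.ofReal_prod_of_nonneg (fun _ _ ↦ (exp_pos _).le), ← exp_sum, ← Finset.sum_div,
      ← Finset.mul_sum]
    rfl

end PrekopaLeindlerInnerProductSpace

/-! ### Log-concave measures -/

section LogConcaveFn

namespace IsLogConcaveFn

lemma indicator {E : Type*} [AddCommGroup E] [Module ℝ E] {f : E → ℝ} (hf : IsLogConcaveFn f)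
    {T : Set E} (hT : Convex ℝ T) : IsLogConcaveFn (T.indicator f) := by
  have nonneg : ∀ x, 0 ≤ T.indicator f x := fun x ↦ Set.indicator_nonneg (fun y _ ↦ hf.1 y) x
  refine ⟨nonneg, fun x y l hl0 hl1 ↦ ?_⟩
  rcases hl0.eq_or_lt with rfl | hl0
  · simp
  rcases hl1.eq_or_lt with rfl | hl1
  · simp
  by_cases hx : x ∈ T
  · by_cases hy : y ∈ T
    · rw [Set.indicator_of_mem hx, Set.indicator_of_mem hy,
        Set.indicator_of_mem (hT hx hy hl0.le (sub_pos.2 hl1).le (by ring))]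
      exact hf.2 x y l hl0.le hl1.le
    · simpa [hy, zero_rpow (sub_pos.2 hl1).ne'] using nonneg _
  · simpa [hx, zero_rpow hl0.ne'] using nonneg _

variable {E : Type*} [NormedAddCommGroup E] [InnerProductSpace ℝ E] {f : E → ℝ}

lemma convex_setOf_pos (hf : IsLogConcaveFn f) : Convex ℝ {x | 0 < f x} := by
  intro x (hx : 0 < f x) y (hy : 0 < f y) a b ha hb hab
  obtain rfl : b = 1 - a := by linarith
  exact lt_of_lt_of_le (by positivity) (hf.2 x y a ha (by linarith))

variable [FiniteDimensional ℝ E]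

lemma continuousOn_interior_setOf_pos (hf : IsLogConcaveFn f) :
    ContinuousOn f (interior {x | 0 < f x}) := by
  have pos : ∀ x ∈ interior {x | 0 < f x}, 0 < f x :=
    fun x hx ↦ interior_subset (s := {x | 0 < f x}) hx
  have concave : ConcaveOn ℝ (interior {x | 0 < f x}) (fun x ↦ log (f x)) := by
    refine ⟨hf.convex_setOf_pos.interior, fun x hx y hy a b ha hb hab ↦ ?_⟩
    obtain rfl : b = 1 - a := by linarith
    have hx := pos x hx
    have hy := pos y hy
    have hlog := log_le_log (by positivity) (hf.2 x y a ha (by linarith))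
    rwa [log_mul (by positivity) (by positivity), log_rpow hx, log_rpow hy] at hlog
  exact (continuous_exp.comp_continuousOn (concave.continuousOn isOpen_interior)).congr
    fun x hx ↦ (exp_log (pos x hx)).symm

variable [MeasurableSpace E] [BorelSpace E]

lemma measurable_indicator_interior_setOf_pos (hf : IsLogConcaveFn f) :
    Measurable ((interior {x | 0 < f x}).indicator f) := by
  classical
  rw [← Set.piecewise_eq_indicator]
  exact hf.continuousOn_interior_setOf_pos.measurable_piecewise continuousOn_const
    isOpen_interior.measurableSet

lemma indicator_interior_setOf_pos_ae_eq (hf : IsLogConcaveFn f) :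
    (interior {x | 0 < f x}).indicator f =ᵐ[volume] f := by
  have off_frontier : ∀ᵐ x ∂(volume : Measure E), x ∉ frontier {x | 0 < f x} :=
    measure_eq_zero_iff_ae_notMem.1 (hf.convex_setOf_pos.addHaar_frontier volume)
  filter_upwards [off_frontier] with x hx
  by_cases hxS : x ∈ interior {x | 0 < f x}
  · simp [hxS]
  · have hfx : f x ≤ 0 := not_lt.1 fun h : x ∈ {x | 0 < f x} ↦ hx ⟨subset_closure h, hxS⟩
    simp [hxS, hfx.antisymm (hf.1 x)]

end IsLogConcaveFn

end LogConcaveFn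

section LogConcaveMeasure

variable {E : Type*} [NormedAddCommGroup E] [InnerProductSpace ℝ E] [MeasurableSpace E]

/-- A log-concave measure, in the functional form: it satisfies the same Prékopa–Leindler
inequality as Lebesgue measure. For full-dimensional finite measures this amounts to having a
log-concave density. -/
def IsLogConcaveMeasure (μ : Measure E) : Prop :=
  ∀ l : ℝ, 0 < l → l < 1 → PrekopaLeindler μ l 1

lemma IsLogConcaveFn.isLogConcaveMeasure_withDensity [FiniteDimensional ℝ E] [BorelSpace E]
    {f : E → ℝ} (hf : IsLogConcaveFn f) :
    IsLogConcaveMeasure (volume.withDensity fun x ↦ ENNReal.ofReal (f x)) := by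
  -- `f` need not be Borel, but it is continuous off the null set `frontier {f > 0}`.
  set g := (interior {x | 0 < f x}).indicator f
  have hg : IsLogConcaveFn g := hf.indicator hf.convex_setOf_pos.interior
  have hfg : (fun x ↦ ENNReal.ofReal (f x)) =ᵐ[volume] fun x ↦ ENNReal.ofReal (g x) := by
    filter_upwards [hf.indicator_interior_setOf_pos_ae_eq] with x hx
    exact congrArg _ hx.symm
  rw [withDensity_congr_ae hfg]
  intro l hl0 hl1
  refine (prekopaLeindler_volume hl0 hl1).withDensity hl0.le hl1.le
    hf.measurable_indicator_interior_setOf_pos.ennreal_ofReal fun x y ↦ ?_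
  have hgx := hg.1 x
  simp only [Pi.one_apply, mul_one, one_mul]
  rw [ENNReal.ofReal_rpow_of_nonneg hgx hl0.le,
    ENNReal.ofReal_rpow_of_nonneg (hg.1 y) (sub_pos.2 hl1).le, ← ENNReal.ofReal_mul (by positivity)]
  exact ENNReal.ofReal_le_ofReal (hg.2 x y l hl0.le hl1.le)

namespace IsLogConcaveMeasure

variable {μ : Measure E}

lemma measureReal_rpow_mul_le [IsFiniteMeasure μ] (hμ : IsLogConcaveMeasure μ) {l : ℝ}
    (hl0 : 0 < l) (hl1 : l < 1) {A B C : Set E} (hA : MeasurableSet A) (hB : MeasurableSet B)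
    (hC : MeasurableSet C) (hABC : ∀ x ∈ A, ∀ y ∈ B, l • x + (1 - l) • y ∈ C) :
    μ.real A ^ l * μ.real B ^ (1 - l) ≤ μ.real C := by
  have key := hμ l hl0 hl1 (A.indicator 1) (B.indicator 1) (C.indicator 1)
    (measurable_one.indicator hA) (measurable_one.indicator hB) (measurable_one.indicator hC)
    fun x y ↦ ?_
  · rw [lintegral_indicator_one hA, lintegral_indicator_one hB, lintegral_indicator_one hC] at key
    simpa [measureReal_def, ENNReal.toReal_rpow] using
      ENNReal.toReal_mono (measure_ne_top _ _) key
  · by_cases hx : x ∈ A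
    · by_cases hy : y ∈ B
      · simp [hx, hy, hABC x hx y hy]
      · simp [hy, hl1]
    · simp [hx, hl0]

-- Borell's lemma: `{r ≤ p}` contains `l {s ≤ p} + (1 - l) {p < r}` for `l = 2 r / (s + r)`.
lemma measureReal_le_seminorm_le [BorelSpace E] [IsProbabilityMeasure μ]
    (hμ : IsLogConcaveMeasure μ) {p : Seminorm ℝ E} (hp : Continuous p) {r s : ℝ} (hr : 0 < r)
    (hrs : r < s) (hpos : 0 < μ.real {x | p x < r}) :
    μ.real {x | s ≤ p x} ≤
      (μ.real {x | r ≤ p x} / μ.real {x | p x < r}) ^ ((s + r) / (2 * r)) := by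
  set l := 2 * r / (s + r) with hl
  have hl0 : 0 < l := div_pos (by linarith) (by linarith)
  have hl1 : l < 1 := by rw [hl, div_lt_one (by linarith)]; linarith
  have hls : l * (s + r) = 2 * r := div_mul_cancel₀ _ (by linarith)
  have interp := hμ.measureReal_rpow_mul_le hl0 hl1 (A := {x | s ≤ p x}) (B := {x | p x < r})
    (C := {x | r ≤ p x}) (measurableSet_le measurable_const hp.measurable)
    (measurableSet_lt hp.measurable measurable_const)
    (measurableSet_le measurable_const hp.measurable) fun x hx y hy ↦ by
      simp only [Set.mem_ofPred_eq] at hx hy ⊢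
      have := map_sub_le_add p (l • x + (1 - l) • y) ((1 - l) • y)
      rw [add_sub_cancel_right, map_smul_eq_mul, map_smul_eq_mul, norm_of_nonneg hl0.le,
        norm_of_nonneg (sub_pos.2 hl1).le] at this
      nlinarith
  set θ := μ.real {x | p x < r}
  have hθ : θ ≤ θ ^ (1 - l) := by
    simpa using rpow_le_rpow_of_exponent_ge hpos measureReal_le_one (by linarith : 1 - l ≤ 1)
  have bound : μ.real {x | s ≤ p x} ^ l ≤ μ.real {x | r ≤ p x} / θ :=
    (le_div_iff₀ hpos).2 ((mul_le_mul_of_nonneg_left hθ (by positivity)).trans interp)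
  calc μ.real {x | s ≤ p x} = (μ.real {x | s ≤ p x} ^ l) ^ ((s + r) / (2 * r)) := by
        rw [← rpow_mul measureReal_nonneg, hl, div_mul_div_cancel₀ (by linarith),
          div_self (by positivity), rpow_one]
    _ ≤ _ := by gcongr; exact div_nonneg (by linarith) (by linarith)

end IsLogConcaveMeasure

end LogConcaveMeasure

section ExponentialTail

variable {α : Type*} [MeasurableSpace α] {μ : Measure α} {Y : α → ℝ} {A a b : ℝ}

lemma lintegral_exp_mul_sub_one_le_of_tail [IsFiniteMeasure μ] (hY : Measurable Y) (hY0 : 0 ≤ Y)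
    (ha : 0 < a) (hab : a < b) (tail : ∀ s ≥ 0, μ.real {x | s ≤ Y x} ≤ A * rexp (-b * s)) :
    ∫⁻ x, ENNReal.ofReal (rexp (a * Y x) - 1) ∂μ ≤ ENNReal.ofReal (A * a / (b - a)) := by
  have hA : 0 ≤ A := by simpa using measureReal_nonneg.trans (tail 0 le_rfl)
  have primitive (s : ℝ) : ∫ t in (0 : ℝ)..s, a * rexp (a * t) = rexp (a * s) - 1 := by
    rw [intervalIntegral.integral_const_mul,
      intervalIntegral.integral_comp_mul_left (fun t ↦ rexp t) ha.ne', integral_exp]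
    simp [ha.ne']
  have hint : IntegrableOn (fun t ↦ A * a * rexp (-(b - a) * t)) (Set.Ioi 0) :=
    (exp_neg_integrableOn_Ioi 0 (sub_pos.2 hab)).const_mul _
  calc
    _ = ∫⁻ t in Set.Ioi 0, μ {x | t ≤ Y x} * ENNReal.ofReal (a * rexp (a * t)) := by
      simp_rw [← primitive]
      exact lintegral_comp_eq_lintegral_meas_le_mul μ (.of_forall hY0) hY.aemeasurable
        (fun t _ ↦ Continuous.intervalIntegrable (by fun_prop) _ _)
        (.of_forall fun t ↦ by positivity)
    _ ≤ ∫⁻ t in Set.Ioi 0, ENNReal.ofReal (A * a * rexp (-(b - a) * t)) := by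
      refine setLIntegral_mono (by fun_prop) fun t ht ↦ ?_
      rw [← ofReal_measureReal, ← ENNReal.ofReal_mul measureReal_nonneg]
      refine ENNReal.ofReal_le_ofReal ?_
      calc _ ≤ A * rexp (-b * t) * (a * rexp (a * t)) := by gcongr; exact tail t (le_of_lt ht)
        _ = A * a * (rexp (-b * t) * rexp (a * t)) := by ring
        _ = _ := by rw [← exp_add]; ring_nf
    _ = _ := by
      rw [← ofReal_integral_eq_lintegral_ofReal hint (.of_forall fun t ↦ by positivity),
        integral_const_mul, integral_exp_mul_Ioi (by linarith)]
      congr 1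
      have : b - a ≠ 0 := (sub_pos.2 hab).ne'
      field_simp
      simp

lemma integrable_exp_mul_and_integral_le_of_tail [IsProbabilityMeasure μ] (hY : Measurable Y)
    (hY0 : 0 ≤ Y) (ha : 0 < a) (hab : a < b)
    (tail : ∀ s ≥ 0, μ.real {x | s ≤ Y x} ≤ A * rexp (-b * s)) :
    Integrable (fun x ↦ rexp (a * Y x)) μ ∧ ∫ x, rexp (a * Y x) ∂μ ≤ 1 + A * a / (b - a) := by
  have hA : 0 ≤ A := by simpa using measureReal_nonneg.trans (tail 0 le_rfl)
  have excess := lintegral_exp_mul_sub_one_le_of_tail hY hY0 ha hab tail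
  have nonneg (x : α) : 0 ≤ rexp (a * Y x) - 1 :=
    sub_nonneg.2 (one_le_exp (mul_nonneg ha.le (hY0 x)))
  have hint : Integrable (fun x ↦ rexp (a * Y x) - 1) μ := by
    refine ⟨by fun_prop, ?_⟩
    rw [hasFiniteIntegral_iff_ofReal (.of_forall nonneg)]
    exact excess.trans_lt ENNReal.ofReal_lt_top
  have hint' : Integrable (fun x ↦ rexp (a * Y x)) μ :=
    (hint.add (integrable_const 1)).congr (.of_forall fun x ↦ sub_add_cancel _ _)
  refine ⟨hint', ?_⟩
  rw [← ofReal_integral_eq_lintegral_ofReal hint (.of_forall nonneg), ENNReal.ofReal_le_ofReal_iff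
    (div_nonneg (by positivity) (sub_pos.2 hab).le), integral_sub hint' (integrable_const _)]
    at excess
  simp only [integral_const, probReal_univ, smul_eq_mul, one_mul] at excess
  linarith

end ExponentialTail

section NormalizedLogConcave

variable {E : Type*} [NormedAddCommGroup E] [InnerProductSpace ℝ E] [MeasurableSpace E]

/-- A log-concave probability measure whose second moment form `v ↦ ∫ ⟪x, v⟫ ^ 2` is the Euclidean
one. A log-concave random vector is isotropic iff it is centred and its law has this property. -/
structure IsNormalizedLogConcave (μ : Measure E) : Prop where
  isProbabilityMeasure : IsProbabilityMeasure μ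
  isLogConcaveMeasure : IsLogConcaveMeasure μ
  integral_inner_sq : ∀ v, ∫ x, ⟪x, v⟫ ^ 2 ∂μ = ‖v‖ ^ 2

namespace IsNormalizedLogConcave

variable {μ : Measure E} (hμ : IsNormalizedLogConcave μ)
include hμ

lemma integrable_inner_sq (v : E) : Integrable (fun x ↦ ⟪x, v⟫ ^ 2) μ := by
  rcases eq_or_ne v 0 with rfl | hv
  · simp
  · refine Integrable.of_integral_ne_zero ?_
    rw [hμ.integral_inner_sq]
    positivity

lemma measureReal_two_le_abs_inner_le {v : E} (hv : ‖v‖ = 1) :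
    μ.real {x | 2 ≤ |⟪x, v⟫|} ≤ 1 / 4 := by
  have markov := mul_meas_ge_le_integral_of_nonneg (.of_forall fun _ ↦ sq_nonneg _)
    (hμ.integrable_inner_sq v) 4
  have hset : {x | 2 ≤ |⟪x, v⟫|} = {x : E | (4 : ℝ) ≤ ⟪x, v⟫ ^ 2} := by
    ext x
    rw [Set.mem_ofPred_eq, Set.mem_ofPred_eq, ← sq_abs, show (4 : ℝ) = 2 ^ 2 by norm_num, sq_le_sq,
      abs_abs, abs_two]
  rw [hset]
  rw [hμ.integral_inner_sq, hv] at markov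
  linarith

variable [BorelSpace E]

lemma measureReal_le_abs_inner_le {v : E} (hv : ‖v‖ = 1) (s : ℝ) :
    μ.real {x | s ≤ |⟪x, v⟫|} ≤ 2 * rexp (-(1 / 4) * s) := by
  have := hμ.isProbabilityMeasure
  rcases le_or_gt s 2 with hs | hs
  · have : μ.real {x | s ≤ |⟪x, v⟫|} ≤ 1 := measureReal_le_one
    linarith [add_one_le_exp (-(1 / 4) * s)]
  have hcont : Continuous fun x : E ↦ |⟪x, v⟫| := by fun_prop
  have cheb := hμ.measureReal_two_le_abs_inner_le hv
  have compl : μ.real {x | |⟪x, v⟫| < 2} = 1 - μ.real {x | 2 ≤ |⟪x, v⟫|} := by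
    rw [← probReal_compl_eq_one_sub (measurableSet_le measurable_const hcont.measurable)]
    congr 1
    ext x
    simp
  have ratio : μ.real {x | 2 ≤ |⟪x, v⟫|} / μ.real {x | |⟪x, v⟫| < 2} ≤ rexp (-1) := calc
    _ ≤ (1 / 4) / (3 / 4) := by gcongr; linarith
    _ ≤ (rexp 1)⁻¹ := by
      rw [le_inv_comm₀ (by norm_num) (exp_pos 1)]
      linarith [exp_one_lt_d9]
    _ = rexp (-1) := (exp_neg 1).symm
  have borell := hμ.isLogConcaveMeasure.measureReal_le_seminorm_le
    (p := ((innerₗ E).flip v).toSeminorm) (r := 2) hcont two_pos hs (by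
      change 0 < μ.real {x | |⟪x, v⟫| < 2}
      linarith)
  calc μ.real {x | s ≤ |⟪x, v⟫|} ≤ rexp (-1) ^ ((s + 2) / (2 * 2)) := by
        refine borell.trans ?_
        gcongr
        exact ratio
    _ = rexp (-(s + 2) / 4) := by rw [← exp_mul]; ring_nf
    _ ≤ rexp (-(1 / 4) * s) := by gcongr; linarith
    _ ≤ _ := by linarith [exp_pos (-(1 / 4) * s)]

lemma integrable_exp_and_integral_exp_abs_inner_le {v : E} (hv : ‖v‖ = 1) :
    Integrable (fun x ↦ rexp (1 / 8 * |⟪x, v⟫|)) μ ∧ ∫ x, rexp (1 / 8 * |⟪x, v⟫|) ∂μ ≤ 3 := by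
  have := hμ.isProbabilityMeasure
  have key := integrable_exp_mul_and_integral_le_of_tail (μ := μ) (Y := fun x ↦ |⟪x, v⟫|)
    (A := 2) (a := 1 / 8) (b := 1 / 4) (by fun_prop) (fun x ↦ abs_nonneg _) (by norm_num)
    (by norm_num) fun s _ ↦ hμ.measureReal_le_abs_inner_le hv s
  norm_num at key ⊢
  exact key

end IsNormalizedLogConcave

end NormalizedLogConcave

/-! ### The density of a Gaussian linear image plus noise -/

section ExponentialTilting

variable {α : Type*} [MeasurableSpace α] {μ : Measure α} {f V : α → ℝ}

lemma integrable_mul_exp_neg (hf : Integrable f μ) (hV : Measurable V) (hV0 : 0 ≤ V) :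
    Integrable (fun x ↦ f x * rexp (-V x)) μ := by
  refine hf.mono (hf.aestronglyMeasurable.mul (by fun_prop)) (.of_forall fun x ↦ ?_)
  rw [norm_mul, norm_of_nonneg (exp_pos _).le]
  exact mul_le_of_le_one_right (norm_nonneg _) (exp_le_one_iff.2 (neg_nonpos.2 (hV0 x)))

-- Jensen's inequality for the measure `f • μ`, from the tangent line of `exp` at `-a`.
lemma exp_neg_mul_integral_le_integral_mul_exp_neg {a : ℝ} (hf : Integrable f μ) (hf0 : 0 ≤ f)
    (hfV : Integrable (fun x ↦ V x * f x) μ) (hfexp : Integrable (fun x ↦ f x * rexp (-V x)) μ)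
    (mean_le : ∫ x, V x * f x ∂μ ≤ a * ∫ x, f x ∂μ) :
    rexp (-a) * ∫ x, f x ∂μ ≤ ∫ x, f x * rexp (-V x) ∂μ := by
  have hdev : Integrable (fun x ↦ V x * f x - a * f x) μ := hfV.sub (hf.const_mul a)
  calc rexp (-a) * ∫ x, f x ∂μ
      ≤ rexp (-a) * (∫ x, f x ∂μ - (∫ x, V x * f x ∂μ - a * ∫ x, f x ∂μ)) := by
        gcongr
        linarith
    _ = ∫ x, rexp (-a) * (f x - (V x * f x - a * f x)) ∂μ := by
        rw [integral_const_mul, integral_sub hf hdev,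
          integral_sub hfV (hf.const_mul a), integral_const_mul]
    _ ≤ ∫ x, f x * rexp (-V x) ∂μ := by
        refine integral_mono ((hf.sub hdev).const_mul _) hfexp fun x ↦ ?_
        have tangent : rexp (-a) * (1 - (V x - a)) ≤ rexp (-V x) := calc
          _ ≤ rexp (-a) * rexp (-(V x - a)) := by
            gcongr
            linarith [add_one_le_exp (-(V x - a))]
          _ = _ := by rw [← exp_add]; ring_nf
        calc _ = f x * (rexp (-a) * (1 - (V x - a))) := by ring
          _ ≤ _ := mul_le_mul_of_nonneg_left tangent (hf0 x)

end ExponentialTilting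

section ColumnSum

variable {ι F : Type*} [Fintype ι] [NormedAddCommGroup F] [InnerProductSpace ℝ F]

/-- The image `∑ j, x j • Γ j` of `x` under the linear map with columns `Γ j`. The family of columns
lives in `PiLp 2`, so that its norm is the Hilbert–Schmidt norm of the map. -/
def columnSum (Γ : PiLp 2 fun _ : ι ↦ F) (x : EuclideanSpace ℝ ι) : F := ∑ j, x j • Γ j

lemma columnSum_add_left (Γ D : PiLp 2 fun _ : ι ↦ F) (x : EuclideanSpace ℝ ι) :
    columnSum (Γ + D) x = columnSum Γ x + columnSum D x := by
  simp [columnSum, Finset.sum_add_distrib]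

lemma columnSum_add_right (Γ : PiLp 2 fun _ : ι ↦ F) (x y : EuclideanSpace ℝ ι) :
    columnSum Γ (x + y) = columnSum Γ x + columnSum Γ y := by
  simp [columnSum, Finset.sum_add_distrib, add_smul]

lemma columnSum_smul_right (Γ : PiLp 2 fun _ : ι ↦ F) (a : ℝ) (x : EuclideanSpace ℝ ι) :
    columnSum Γ (a • x) = a • columnSum Γ x := by
  simp [columnSum, Finset.smul_sum, smul_smul]

lemma columnSum_piLpCongrRight (φ : F ≃ₗᵢ[ℝ] F) (Γ : PiLp 2 fun _ : ι ↦ F)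
    (x : EuclideanSpace ℝ ι) :
    columnSum (LinearIsometryEquiv.piLpCongrRight 2 (fun _ ↦ φ) Γ) x = φ (columnSum Γ x) := by
  simp [columnSum]

@[fun_prop]
lemma continuous_columnSum {X : Type*} [TopologicalSpace X] {f : X → PiLp 2 fun _ : ι ↦ F}
    {g : X → EuclideanSpace ℝ ι} (hf : Continuous f) (hg : Continuous g) :
    Continuous fun a ↦ columnSum (f a) (g a) := by
  unfold columnSum
  fun_prop

variable {κ : Type*} [Fintype κ] (b : OrthonormalBasis κ ℝ F)

/-- The rows, in the orthonormal basis `b`, of the linear map with columns `Γ j`. -/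
def row (Γ : PiLp 2 fun _ : ι ↦ F) (i : κ) : EuclideanSpace ℝ ι := WithLp.toLp 2 fun j ↦ ⟪b i, Γ j⟫

lemma norm_sq_columnSum (Γ : PiLp 2 fun _ : ι ↦ F) (x : EuclideanSpace ℝ ι) :
    ‖columnSum Γ x‖ ^ 2 = ∑ i, ⟪x, row b Γ i⟫ ^ 2 := by
  rw [← b.sum_sq_norm_inner_right]
  refine Finset.sum_congr rfl fun i _ ↦ ?_
  simp [columnSum, row, inner_sum, real_inner_smul_right, PiLp.inner_apply, mul_comm]

lemma sum_norm_sq_row (Γ : PiLp 2 fun _ : ι ↦ F) : ∑ i, ‖row b Γ i‖ ^ 2 = ‖Γ‖ ^ 2 := by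
  simp only [PiLp.norm_sq_eq_of_L2, row]
  rw [Finset.sum_comm]
  exact Finset.sum_congr rfl fun j _ ↦ b.sum_sq_norm_inner_right (Γ j)

end ColumnSum

section SmoothedDensity

variable {ι F : Type*} [Fintype ι] [NormedAddCommGroup F] [InnerProductSpace ℝ F]

/-- The exponent of the Gaussian density of variance `s` centred at `Γ x`, evaluated at `y`. -/
def noisePotential (s : ℝ) (Γ : PiLp 2 fun _ : ι ↦ F) (y : F) (x : EuclideanSpace ℝ ι) : ℝ :=
  ‖y - columnSum Γ x‖ ^ 2 / (2 * s)

/-- The density at `y` of `ΓX + √s Z` where `X` has law `μ` and `Z` is an independent standard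
Gaussian vector, without the normalizing constant of the Gaussian density. -/
def smoothedDensity (μ : Measure (EuclideanSpace ℝ ι)) (s : ℝ) (Γ : PiLp 2 fun _ : ι ↦ F) (y : F) :
    ℝ :=
  ∫ x, rexp (-noisePotential s Γ y x) ∂μ

variable {μ : Measure (EuclideanSpace ℝ ι)} {s : ℝ} {Γ : PiLp 2 fun _ : ι ↦ F} {y : F}

@[fun_prop]
lemma continuous_noisePotential {X : Type*} [TopologicalSpace X] {f : X → PiLp 2 fun _ : ι ↦ F}
    {g : X → F} {h : X → EuclideanSpace ℝ ι} (hf : Continuous f) (hg : Continuous g)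
    (hh : Continuous h) : Continuous fun a ↦ noisePotential s (f a) (g a) (h a) := by
  unfold noisePotential
  fun_prop

lemma noisePotential_nonneg (hs : 0 ≤ s) : 0 ≤ noisePotential s Γ y := fun x ↦ by
  simp only [Pi.zero_apply, noisePotential]
  positivity

lemma noisePotential_le (hs : 0 ≤ s) (x : EuclideanSpace ℝ ι) :
    noisePotential s Γ y x ≤ (‖y‖ ^ 2 + ‖columnSum Γ x‖ ^ 2) / s := by
  have := parallelogram_law_with_norm ℝ y (columnSum Γ x)
  rw [noisePotential, ← div_div]
  gcongr
  linarith [sq_nonneg ‖y + columnSum Γ x‖]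

-- Comes from `2 ‖u‖ ‖w‖ ≤ τ ‖u‖² + ‖w‖² / τ` for `u = y - Γ x`, `w = D x`.
lemma noisePotential_add_sub_le (hs : 0 < s) {τ : ℝ} (hτ : 0 < τ) (D : PiLp 2 fun _ : ι ↦ F)
    (x : EuclideanSpace ℝ ι) :
    noisePotential s (Γ + D) y x - noisePotential s Γ y x ≤
      τ * noisePotential s Γ y x + (1 / (2 * τ * s) + 1 / (2 * s)) * ‖columnSum D x‖ ^ 2 := by
  simp only [noisePotential, columnSum_add_left, ← sub_sub]
  set u := y - columnSum Γ x
  set w := columnSum D x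
  have amgm : -2 * ⟪u, w⟫ ≤ τ * ‖u‖ ^ 2 + ‖w‖ ^ 2 / τ := by
    have cauchy := neg_le_of_abs_le (abs_real_inner_le_norm u w)
    have : τ * ‖u‖ ^ 2 + ‖w‖ ^ 2 / τ - 2 * (‖u‖ * ‖w‖) = τ * (‖u‖ - ‖w‖ / τ) ^ 2 := by
      field_simp
      ring
    have : 0 ≤ τ * (‖u‖ - ‖w‖ / τ) ^ 2 := by positivity
    linarith
  calc _ = (-2 * ⟪u, w⟫ + ‖w‖ ^ 2) / (2 * s) := by rw [norm_sub_sq_real]; ring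
    _ ≤ (τ * ‖u‖ ^ 2 + ‖w‖ ^ 2 / τ + ‖w‖ ^ 2) / (2 * s) := by gcongr
    _ = _ := by field_simp; ring

lemma smoothedDensity_nonneg : 0 ≤ smoothedDensity μ s Γ y :=
  integral_nonneg fun _ ↦ (exp_pos _).le

lemma integrable_exp_neg_noisePotential [IsFiniteMeasure μ] (hs : 0 ≤ s)
    (Γ : PiLp 2 fun _ : ι ↦ F) (y : F) :
    Integrable (fun x ↦ rexp (-noisePotential s Γ y x)) μ := by
  simpa using integrable_mul_exp_neg (integrable_const (1 : ℝ))
    (by fun_prop : Continuous (noisePotential s Γ y)).measurable (noisePotential_nonneg hs)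

lemma ofReal_smoothedDensity [IsFiniteMeasure μ] (hs : 0 ≤ s) (Γ : PiLp 2 fun _ : ι ↦ F) (y : F) :
    ENNReal.ofReal (smoothedDensity μ s Γ y) =
      ∫⁻ x, ENNReal.ofReal (rexp (-noisePotential s Γ y x)) ∂μ :=
  ofReal_integral_eq_lintegral_ofReal (integrable_exp_neg_noisePotential hs Γ y)
    (.of_forall fun _ ↦ (exp_pos _).le)

lemma IsLogConcaveMeasure.smoothedDensity_rpow_mul_le [IsFiniteMeasure μ]
    (hμ : IsLogConcaveMeasure μ) (hs : 0 ≤ s) {l : ℝ} (hl0 : 0 < l) (hl1 : l < 1)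
    (Γ : PiLp 2 fun _ : ι ↦ F) (y z : F) :
    ENNReal.ofReal (smoothedDensity μ s Γ y) ^ l *
        ENNReal.ofReal (smoothedDensity μ s Γ z) ^ (1 - l) ≤
      ENNReal.ofReal (smoothedDensity μ s Γ (l • y + (1 - l) • z)) := by
  simp only [ofReal_smoothedDensity hs]
  have hmeas (y : F) : Measurable fun x ↦ ENNReal.ofReal (rexp (-noisePotential s Γ y x)) :=
    (ENNReal.continuous_ofReal.comp (by fun_prop)).measurable
  refine hμ l hl0 hl1 _ _ _ (hmeas _) (hmeas _) (hmeas _) fun x x' ↦ ?_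
  rw [Pi.one_apply, Pi.one_apply, one_mul, ENNReal.ofReal_rpow_of_pos (exp_pos _),
    ENNReal.ofReal_rpow_of_pos (exp_pos _), ← ENNReal.ofReal_mul (by positivity), ← exp_mul,
    ← exp_mul, ← exp_add]
  refine ENNReal.ofReal_le_ofReal (exp_le_exp.2 ?_)
  simp only [noisePotential, columnSum_add_right, columnSum_smul_right]
  have hsplit : l • y + (1 - l) • z - (l • columnSum Γ x + (1 - l) • columnSum Γ x') =
      l • (y - columnSum Γ x) + (1 - l) • (z - columnSum Γ x') := by module
  rw [hsplit]
  set u := y - columnSum Γ x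
  set w := z - columnSum Γ x'
  have convex : ‖l • u + (1 - l) • w‖ ^ 2 ≤ l * ‖u‖ ^ 2 + (1 - l) * ‖w‖ ^ 2 :=
    (convexOn_univ_norm.pow (fun _ _ ↦ norm_nonneg _) 2).2 (Set.mem_univ u) (Set.mem_univ w) hl0.le
      (sub_nonneg.2 hl1.le) (add_sub_cancel _ _)
  calc _ = -((l * ‖u‖ ^ 2 + (1 - l) * ‖w‖ ^ 2) / (2 * s)) := by ring
    _ ≤ _ := by gcongr

end SmoothedDensity

section Stability

variable {ι F : Type*} [Fintype ι] [NormedAddCommGroup F] [InnerProductSpace ℝ F]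
  {μ : Measure (EuclideanSpace ℝ ι)} {s a : ℝ} {Γ : PiLp 2 fun _ : ι ↦ F} {y : F}

lemma sq_le_two_mul_sq_add_four_mul_exp {u : ℝ} (hu : 0 ≤ u) (a : ℝ) :
    u ^ 2 ≤ 2 * a ^ 2 + 4 * rexp (u - a) := by
  rcases le_or_gt u a with h | h
  · nlinarith [exp_pos (u - a)]
  · nlinarith [quadratic_le_exp_of_nonneg (sub_pos.2 h).le, sq_nonneg (u - a - a)]

lemma sq_mul_exp_neg_le {u V : ℝ} (hu : 0 ≤ u) (hV : 0 ≤ V) (a : ℝ) :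
    u ^ 2 * rexp (-V) ≤ 2 * a ^ 2 * rexp (-V) + 4 * rexp (-a) * rexp u := calc
  _ ≤ (2 * a ^ 2 + 4 * rexp (u - a)) * rexp (-V) := by
    gcongr
    exact sq_le_two_mul_sq_add_four_mul_exp hu a
  _ = 2 * a ^ 2 * rexp (-V) + 4 * rexp (u - a) * rexp (-V) := by ring
  _ ≤ 2 * a ^ 2 * rexp (-V) + 4 * rexp (u - a) := by
    linarith [mul_le_of_le_one_right (by positivity : 0 ≤ 4 * rexp (u - a))
      (exp_le_one_iff.2 (neg_nonpos.2 hV))]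
  _ = _ := by rw [sub_eq_neg_add, exp_add]; ring

namespace IsNormalizedLogConcave

variable (hμ : IsNormalizedLogConcave μ)
include hμ

lemma integrable_inner_sq_mul_exp_neg_noisePotential (hs : 0 ≤ s) (v : EuclideanSpace ℝ ι) :
    Integrable (fun x ↦ ⟪x, v⟫ ^ 2 * rexp (-noisePotential s Γ y x)) μ :=
  integrable_mul_exp_neg (hμ.integrable_inner_sq v)
    (by fun_prop : Continuous (noisePotential s Γ y)).measurable (noisePotential_nonneg hs)

variable [FiniteDimensional ℝ F]

lemma integrable_norm_sq_columnSum (Γ : PiLp 2 fun _ : ι ↦ F) :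
    Integrable (fun x ↦ ‖columnSum Γ x‖ ^ 2) μ := by
  simp only [norm_sq_columnSum (stdOrthonormalBasis ℝ F)]
  exact integrable_finsetSum _ fun i _ ↦ hμ.integrable_inner_sq _

lemma integral_norm_sq_columnSum (Γ : PiLp 2 fun _ : ι ↦ F) :
    ∫ x, ‖columnSum Γ x‖ ^ 2 ∂μ = ‖Γ‖ ^ 2 := by
  simp only [norm_sq_columnSum (stdOrthonormalBasis ℝ F)]
  rw [integral_finsetSum _ fun i _ ↦ hμ.integrable_inner_sq _]
  simp only [hμ.integral_inner_sq, sum_norm_sq_row]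

lemma integrable_noisePotential (hs : 0 ≤ s) (Γ : PiLp 2 fun _ : ι ↦ F) (y : F) :
    Integrable (noisePotential s Γ y) μ := by
  have := hμ.isProbabilityMeasure
  refine (((integrable_const (‖y‖ ^ 2)).add (hμ.integrable_norm_sq_columnSum Γ)).div_const s).mono'
    (by fun_prop : Continuous (noisePotential s Γ y)).aestronglyMeasurable (.of_forall fun x ↦ ?_)
  rw [norm_of_nonneg (noisePotential_nonneg hs x)]
  exact noisePotential_le hs x

lemma integral_noisePotential_le (hs : 0 ≤ s) :
    ∫ x, noisePotential s Γ y x ∂μ ≤ (‖y‖ ^ 2 + ‖Γ‖ ^ 2) / s := by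
  have := hμ.isProbabilityMeasure
  have hint := (integrable_const (‖y‖ ^ 2)).add (hμ.integrable_norm_sq_columnSum Γ)
  calc _ ≤ ∫ x, (‖y‖ ^ 2 + ‖columnSum Γ x‖ ^ 2) / s ∂μ :=
        integral_mono (hμ.integrable_noisePotential hs Γ y) (hint.div_const s)
          (noisePotential_le hs)
    _ = _ := by
        rw [integral_div, integral_add (integrable_const _) (hμ.integrable_norm_sq_columnSum Γ),
          hμ.integral_norm_sq_columnSum]
        simp

lemma exp_neg_le_smoothedDensity (hs : 0 ≤ s) (ha : (‖y‖ ^ 2 + ‖Γ‖ ^ 2) / s ≤ a) :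
    rexp (-a) ≤ smoothedDensity μ s Γ y := by
  have := hμ.isProbabilityMeasure
  have jensen := exp_neg_mul_integral_le_integral_mul_exp_neg (μ := μ) (f := fun _ ↦ 1)
    (V := noisePotential s Γ y) (a := a) (integrable_const _) (fun _ ↦ zero_le_one)
    (by simpa using hμ.integrable_noisePotential hs Γ y)
    (by simpa using integrable_exp_neg_noisePotential hs Γ y)
    (by simpa using (hμ.integral_noisePotential_le hs).trans ha)
  simpa [smoothedDensity] using jensen

-- Pointwise `V e^{-V} ≤ a e^{-V} + e^{-a}`, and the total mass of `e^{-V}` is at least `e^{-a}`.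
lemma integral_noisePotential_mul_exp_neg_le (hs : 0 ≤ s) (ha : (‖y‖ ^ 2 + ‖Γ‖ ^ 2) / s ≤ a) :
    ∫ x, noisePotential s Γ y x * rexp (-noisePotential s Γ y x) ∂μ ≤
      (a + 1) * smoothedDensity μ s Γ y := by
  have := hμ.isProbabilityMeasure
  have hexp := integrable_exp_neg_noisePotential (μ := μ) hs Γ y
  calc _ ≤ ∫ x, (a * rexp (-noisePotential s Γ y x) + rexp (-a)) ∂μ := by
        refine integral_mono (integrable_mul_exp_neg (hμ.integrable_noisePotential hs Γ y)
          (by fun_prop : Continuous (noisePotential s Γ y)).measurable (noisePotential_nonneg hs))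
          ((hexp.const_mul a).add (integrable_const _)) fun x ↦ ?_
        simp only
        set V := noisePotential s Γ y x
        have hexp_a : rexp (-a) = rexp (V - a) * rexp (-V) := by rw [← exp_add]; ring_nf
        rw [hexp_a, ← add_mul]
        gcongr
        linarith [add_one_le_exp (V - a)]
    _ = a * smoothedDensity μ s Γ y + rexp (-a) := by
        rw [integral_add (hexp.const_mul a) (integrable_const _), integral_const_mul]
        simp [smoothedDensity]
    _ ≤ _ := by linarith [hμ.exp_neg_le_smoothedDensity hs ha]

lemma integral_inner_sq_mul_exp_neg_le_of_norm_eq_one (hs : 0 ≤ s)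
    (ha : (‖y‖ ^ 2 + ‖Γ‖ ^ 2) / s ≤ a) {v : EuclideanSpace ℝ ι} (hv : ‖v‖ = 1) :
    ∫ x, ⟪x, v⟫ ^ 2 * rexp (-noisePotential s Γ y x) ∂μ ≤
      (128 * a ^ 2 + 768) * smoothedDensity μ s Γ y := by
  have := hμ.isProbabilityMeasure
  have hexp := integrable_exp_neg_noisePotential (μ := μ) hs Γ y
  obtain ⟨hint, hle⟩ := hμ.integrable_exp_and_integral_exp_abs_inner_le hv
  calc _ ≤ ∫ x, (128 * a ^ 2 * rexp (-noisePotential s Γ y x) +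
          256 * rexp (-a) * rexp (1 / 8 * |⟪x, v⟫|)) ∂μ := by
        refine integral_mono (hμ.integrable_inner_sq_mul_exp_neg_noisePotential hs v)
          ((hexp.const_mul _).add (hint.const_mul _)) fun x ↦ ?_
        have hsq := sq_mul_exp_neg_le (by positivity : 0 ≤ 1 / 8 * |⟪x, v⟫|)
          (noisePotential_nonneg hs x : 0 ≤ noisePotential s Γ y x) a
        rw [mul_pow, sq_abs] at hsq
        linarith
    _ = 128 * a ^ 2 * smoothedDensity μ s Γ y +
          256 * (rexp (-a) * ∫ x, rexp (1 / 8 * |⟪x, v⟫|) ∂μ) := by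
        rw [integral_add (hexp.const_mul _) (hint.const_mul _), integral_const_mul,
          integral_const_mul, smoothedDensity, mul_assoc 256]
    _ ≤ 128 * a ^ 2 * smoothedDensity μ s Γ y + 256 * (smoothedDensity μ s Γ y * 3) := by
        have := hμ.exp_neg_le_smoothedDensity hs ha
        gcongr
        exact smoothedDensity_nonneg
    _ = _ := by ring

lemma integral_inner_sq_mul_exp_neg_le (hs : 0 ≤ s) (ha : (‖y‖ ^ 2 + ‖Γ‖ ^ 2) / s ≤ a)
    (v : EuclideanSpace ℝ ι) :
    ∫ x, ⟪x, v⟫ ^ 2 * rexp (-noisePotential s Γ y x) ∂μ ≤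
      (128 * a ^ 2 + 768) * ‖v‖ ^ 2 * smoothedDensity μ s Γ y := by
  rcases eq_or_ne v 0 with rfl | hv
  · simp
  have unit := hμ.integral_inner_sq_mul_exp_neg_le_of_norm_eq_one hs ha
    (norm_smul_inv_norm (𝕜 := ℝ) hv)
  have hscale (x : EuclideanSpace ℝ ι) : ⟪x, v⟫ ^ 2 = ‖v‖ ^ 2 * ⟪x, (‖v‖ : ℝ)⁻¹ • v⟫ ^ 2 := by
    rw [real_inner_smul_right]
    field_simp
  simp only [hscale, mul_assoc (‖v‖ ^ 2)]
  rw [integral_const_mul]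
  calc _ ≤ ‖v‖ ^ 2 * ((128 * a ^ 2 + 768) * smoothedDensity μ s Γ y) := by gcongr; exact unit
    _ = _ := by ring

lemma integral_norm_sq_columnSum_mul_exp_neg_le (hs : 0 ≤ s) (ha : (‖y‖ ^ 2 + ‖Γ‖ ^ 2) / s ≤ a)
    (D : PiLp 2 fun _ : ι ↦ F) :
    ∫ x, ‖columnSum D x‖ ^ 2 * rexp (-noisePotential s Γ y x) ∂μ ≤
      (128 * a ^ 2 + 768) * ‖D‖ ^ 2 * smoothedDensity μ s Γ y := by
  simp only [norm_sq_columnSum (stdOrthonormalBasis ℝ F), Finset.sum_mul]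
  rw [integral_finsetSum _ fun i _ ↦ hμ.integrable_inner_sq_mul_exp_neg_noisePotential hs _,
    ← sum_norm_sq_row (stdOrthonormalBasis ℝ F), Finset.mul_sum, Finset.sum_mul]
  exact Finset.sum_le_sum fun i _ ↦ hμ.integral_inner_sq_mul_exp_neg_le hs ha _


lemma integral_noisePotential_add_sub_mul_exp_neg_le (hs : 0 < s)
    (ha : (‖y‖ ^ 2 + ‖Γ‖ ^ 2) / s ≤ a) {c : ℝ} (hc : 128 * a ^ 2 + 768 ≤ c) (hcs : 4 * c ≤ s)
    (D : PiLp 2 fun _ : ι ↦ F) :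
    ∫ x, (noisePotential s (Γ + D) y x - noisePotential s Γ y x) *
        rexp (-noisePotential s Γ y x) ∂μ ≤
      (4 * c / s * (a + 1) + ‖D‖ ^ 2 / 4) * smoothedDensity μ s Γ y := by
  have hV : Measurable (noisePotential s Γ y) := (by fun_prop : Continuous _).measurable
  have hV0 := noisePotential_nonneg hs.le (Γ := Γ) (y := y)
  have hc0 : 0 < c := by nlinarith
  set τ := 4 * c / s with hτ
  have hτ0 : 0 < τ := by positivity
  have hcoef : (1 / (2 * τ * s) + 1 / (2 * s)) * c ≤ 1 / 4 := by
    have : 1 / (2 * τ * s) * c = 1 / 8 := by rw [hτ]; field_simp; norm_num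
    have : 1 / (2 * s) * c ≤ 1 / 8 := by
      rw [div_mul_eq_mul_div, one_mul, div_le_iff₀ (by positivity)]
      linarith
    linarith
  have hpot := (integrable_mul_exp_neg (hμ.integrable_noisePotential hs.le Γ y) hV hV0).const_mul τ
  have hcol := (integrable_mul_exp_neg (hμ.integrable_norm_sq_columnSum D) hV hV0).const_mul
    (1 / (2 * τ * s) + 1 / (2 * s))
  set W := smoothedDensity μ s Γ y
  have hW0 : 0 ≤ W := smoothedDensity_nonneg
  calc _ ≤ ∫ x, (τ * (noisePotential s Γ y x * rexp (-noisePotential s Γ y x)) +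
          (1 / (2 * τ * s) + 1 / (2 * s)) *
            (‖columnSum D x‖ ^ 2 * rexp (-noisePotential s Γ y x))) ∂μ := by
        refine integral_mono (integrable_mul_exp_neg ((hμ.integrable_noisePotential hs.le _ y).sub
          (hμ.integrable_noisePotential hs.le Γ y)) hV hV0) (hpot.add hcol) fun x ↦ ?_
        simp only [← mul_assoc, ← add_mul]
        gcongr
        exact noisePotential_add_sub_le hs hτ0 D x
    _ ≤ τ * ((a + 1) * W) + (1 / (2 * τ * s) + 1 / (2 * s)) * (c * ‖D‖ ^ 2 * W) := by
        rw [integral_add hpot hcol, integral_const_mul, integral_const_mul]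
        have := hμ.integral_norm_sq_columnSum_mul_exp_neg_le hs.le ha D
        gcongr
        · exact hμ.integral_noisePotential_mul_exp_neg_le hs.le ha
        · exact this.trans (by gcongr)
    _ = τ * (a + 1) * W + ((1 / (2 * τ * s) + 1 / (2 * s)) * c) * (‖D‖ ^ 2 * W) := by ring
    _ ≤ τ * (a + 1) * W + 1 / 4 * (‖D‖ ^ 2 * W) := by gcongr
    _ = _ := by ring

lemma exp_neg_mul_smoothedDensity_le_add (hs : 0 < s) (ha : (‖y‖ ^ 2 + ‖Γ‖ ^ 2) / s ≤ a) {c : ℝ}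
    (hc : 128 * a ^ 2 + 768 ≤ c) (hcs : 4 * c ≤ s) (D : PiLp 2 fun _ : ι ↦ F) :
    rexp (-(4 * c / s * (a + 1) + ‖D‖ ^ 2 / 4)) * smoothedDensity μ s Γ y ≤
      smoothedDensity μ s (Γ + D) y := by
  have := hμ.isProbabilityMeasure
  have hprod (x : EuclideanSpace ℝ ι) : rexp (-noisePotential s Γ y x) *
      rexp (-(noisePotential s (Γ + D) y x - noisePotential s Γ y x)) =
        rexp (-noisePotential s (Γ + D) y x) := by
    rw [← exp_add]
    ring_nf
  have jensen := exp_neg_mul_integral_le_integral_mul_exp_neg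
    (integrable_exp_neg_noisePotential (μ := μ) hs.le Γ y) (fun _ ↦ (exp_pos _).le)
    (integrable_mul_exp_neg ((hμ.integrable_noisePotential hs.le (Γ + D) y).sub
      (hμ.integrable_noisePotential hs.le Γ y))
      (by fun_prop : Continuous (noisePotential s Γ y)).measurable (noisePotential_nonneg hs.le))
    (by simpa only [Pi.sub_apply, hprod] using integrable_exp_neg_noisePotential hs.le (Γ + D) y)
    (hμ.integral_noisePotential_add_sub_mul_exp_neg_le hs ha hc hcs D)
  simpa only [Pi.sub_apply, hprod, smoothedDensity] using jensen

end IsNormalizedLogConcave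

end Stability

/-! ### The radial law of a truncated Gaussian image plus noise -/

section MidpointStability

lemma mul_le_mul_sq_half_add {a b r s : ℝ} (hr : 0 < r) (hra : r ≤ a) (hab : a ≤ b) (hbs : b ≤ s) :
    r * s ≤ 4 * (a * b) / (a + b) ^ 2 * ((r + s) / 2) ^ 2 := by
  have ha : 0 < a := hr.trans_le hra
  have hb : 0 < b := ha.trans_le hab
  have hcross : 0 ≤ (b * s - a * r) * (a * s - b * r) := by
    apply mul_nonneg <;> nlinarith
  rw [div_mul_eq_mul_div, le_div_iff₀ (by positivity)]
  nlinarith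

variable {ι F : Type*} [Fintype ι] [NormedAddCommGroup F] [InnerProductSpace ℝ F]
  {μ : Measure (EuclideanSpace ℝ ι)} {s R ρ κ : ℝ}

/-- Moving the columns of `Γ` by `D` costs the smoothed density at most a factor
`exp (-(κ + ‖D‖ ^ 2 / 4))`, uniformly over `‖Γ‖ ≤ R` and `‖y‖ ≤ ρ`. The quadratic loss is one that
the strong log-concavity of the Gaussian law of `Γ` can absorb. -/
def IsSmoothedDensityStable (F : Type*) [NormedAddCommGroup F] [InnerProductSpace ℝ F]
    (μ : Measure (EuclideanSpace ℝ ι)) (s R ρ κ : ℝ) : Prop :=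
  ∀ Γ D : PiLp 2 fun _ : ι ↦ F, ∀ y : F, ‖Γ‖ ≤ R → ‖y‖ ≤ ρ →
    rexp (-(κ + ‖D‖ ^ 2 / 4)) * smoothedDensity μ s Γ y ≤ smoothedDensity μ s (Γ + D) y

lemma IsLogConcaveMeasure.smoothedDensity_mul_le [IsFiniteMeasure μ] (hμ : IsLogConcaveMeasure μ)
    (hs : 0 ≤ s) (Γ : PiLp 2 fun _ : ι ↦ F) (y z : F) :
    smoothedDensity μ s Γ y * smoothedDensity μ s Γ z ≤
      smoothedDensity μ s Γ ((1 / 2 : ℝ) • (y + z)) ^ 2 := by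
  have h := hμ.smoothedDensity_rpow_mul_le hs one_half_pos one_half_lt_one Γ y z
  rw [sub_half, ← ENNReal.mul_rpow_of_nonneg _ _ one_half_pos.le,
    ← ENNReal.ofReal_mul smoothedDensity_nonneg, ← smul_add,
    ENNReal.ofReal_rpow_of_nonneg (mul_nonneg smoothedDensity_nonneg smoothedDensity_nonneg)
      one_half_pos.le, ← sqrt_eq_rpow, ENNReal.ofReal_le_ofReal_iff smoothedDensity_nonneg] at h
  exact (sqrt_le_left smoothedDensity_nonneg).1 h

namespace IsSmoothedDensityStable

variable (hst : IsSmoothedDensityStable F μ s R ρ κ)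
include hst

lemma smoothedDensity_le_midpoint {Γ : PiLp 2 fun _ : ι ↦ F} {y : F} (hΓ : ‖Γ‖ ≤ R) (hy : ‖y‖ ≤ ρ)
    (Γ' : PiLp 2 fun _ : ι ↦ F) :
    smoothedDensity μ s Γ y ≤
      rexp (κ + ‖Γ - Γ'‖ ^ 2 / 16) * smoothedDensity μ s ((1 / 2 : ℝ) • (Γ + Γ')) y := by
  have h := hst Γ ((1 / 2 : ℝ) • (Γ' - Γ)) y hΓ hy
  have hmid : Γ + (1 / 2 : ℝ) • (Γ' - Γ) = (1 / 2 : ℝ) • (Γ + Γ') := by module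
  have hnorm : ‖(1 / 2 : ℝ) • (Γ' - Γ)‖ ^ 2 / 4 = ‖Γ - Γ'‖ ^ 2 / 16 := by
    rw [norm_smul, norm_sub_rev, mul_pow]
    norm_num
    ring
  rw [hmid, hnorm, exp_neg, inv_mul_le_iff₀ (exp_pos _)] at h
  exact h

lemma smoothedDensity_mul_le_midpoint [IsFiniteMeasure μ] (hμ : IsLogConcaveMeasure μ) (hs : 0 ≤ s)
    {Γ Γ' : PiLp 2 fun _ : ι ↦ F} {y z : F} (hΓ : ‖Γ‖ ≤ R) (hΓ' : ‖Γ'‖ ≤ R) (hy : ‖y‖ ≤ ρ)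
    (hz : ‖z‖ ≤ ρ) :
    smoothedDensity μ s Γ y * smoothedDensity μ s Γ' z ≤
      (rexp (κ + ‖Γ - Γ'‖ ^ 2 / 8) *
        smoothedDensity μ s ((1 / 2 : ℝ) • (Γ + Γ')) ((1 / 2 : ℝ) • (y + z))) ^ 2 := by
  set W := smoothedDensity μ s ((1 / 2 : ℝ) • (Γ + Γ'))
  set e := rexp (κ + ‖Γ - Γ'‖ ^ 2 / 16)
  have h₁ : smoothedDensity μ s Γ y ≤ e * W y := hst.smoothedDensity_le_midpoint hΓ hy Γ'
  have h₂ : smoothedDensity μ s Γ' z ≤ e * W z := by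
    simpa only [add_comm, norm_sub_rev] using hst.smoothedDensity_le_midpoint hΓ' hz Γ
  calc _ ≤ e * W y * (e * W z) :=
        mul_le_mul h₁ h₂ smoothedDensity_nonneg (mul_nonneg (exp_pos _).le smoothedDensity_nonneg)
    _ = e ^ 2 * (W y * W z) := by ring
    _ ≤ e ^ 2 * W ((1 / 2 : ℝ) • (y + z)) ^ 2 := by
        gcongr
        exact hμ.smoothedDensity_mul_le hs _ y z
    _ ≤ _ := by
        rw [← mul_pow]
        have : 0 ≤ W ((1 / 2 : ℝ) • (y + z)) := smoothedDensity_nonneg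
        refine pow_le_pow_left₀ (mul_nonneg (exp_pos _).le this) ?_ 2
        refine mul_le_mul_of_nonneg_right (exp_le_exp.2 ?_) this
        linarith [sq_nonneg ‖Γ - Γ'‖]

lemma pow_mul_smoothedDensity_mul_le [IsFiniteMeasure μ]
    (hμ : IsLogConcaveMeasure μ) (hs : 0 ≤ s) {θ : F}
    (hθ : ‖θ‖ = 1) {Γ Γ' : PiLp 2 fun _ : ι ↦ F} (hΓ : ‖Γ‖ ≤ R) (hΓ' : ‖Γ'‖ ≤ R) {a b r r' : ℝ}
    (hr : 0 < r) (hra : r ≤ a) (hab : a ≤ b) (hbr : b ≤ r') (hrρ : r' ≤ ρ) (m : ℕ) :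
    r ^ m * smoothedDensity μ s Γ (r • θ) * (r' ^ m * smoothedDensity μ s Γ' (r' • θ)) ≤
      (rexp (‖Γ - Γ'‖ ^ 2 / 8) * (rexp κ * √(4 * (a * b) / (a + b) ^ 2) ^ m *
        (((r + r') / 2) ^ m *
          smoothedDensity μ s ((1 / 2 : ℝ) • (Γ + Γ')) (((r + r') / 2) • θ)))) ^ 2 := by
  have hr' : 0 < r' := by linarith
  have hnorm {u : ℝ} (hu : 0 < u) (huρ : u ≤ ρ) : ‖u • θ‖ ≤ ρ := by
    rwa [norm_smul, hθ, mul_one, norm_of_nonneg hu.le]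
  have hmid : (1 / 2 : ℝ) • (r • θ + r' • θ) = ((r + r') / 2) • θ := by module
  have hW := hst.smoothedDensity_mul_le_midpoint hμ hs hΓ hΓ' (hnorm hr (by linarith))
    (hnorm hr' hrρ)
  rw [hmid] at hW
  have hQ : 0 ≤ 4 * (a * b) / (a + b) ^ 2 := by
    have : 0 < a := by linarith
    have : 0 < b := by linarith
    positivity
  calc _ = (r * r') ^ m *
        (smoothedDensity μ s Γ (r • θ) * smoothedDensity μ s Γ' (r' • θ)) := by ring
    _ ≤ (4 * (a * b) / (a + b) ^ 2 * ((r + r') / 2) ^ 2) ^ m * _ := by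
        refine mul_le_mul (pow_le_pow_left₀ (by positivity)
          (mul_le_mul_sq_half_add hr hra hab hbr) m) hW ?_ (by positivity)
        exact mul_nonneg smoothedDensity_nonneg smoothedDensity_nonneg
    _ = _ := by
        nth_rw 1 [← sq_sqrt hQ]
        rw [exp_add]
        generalize √(4 * (a * b) / (a + b) ^ 2) = q
        generalize (r + r') / 2 = t
        ring

end IsSmoothedDensityStable

end MidpointStability

section GaussianDensity

/-- The normalizing constant of the Gaussian density of variance `s` on `E`. -/
def gaussianConstant (E : Type*) [NormedAddCommGroup E] [InnerProductSpace ℝ E] (s : ℝ) : ℝ≥0∞ :=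
  ENNReal.ofReal ((2 * π * s) ^ (Module.finrank ℝ E / 2 : ℝ))

lemma gaussianConstant_ne_top {E : Type*} [NormedAddCommGroup E] [InnerProductSpace ℝ E] {s : ℝ} :
    gaussianConstant E s ≠ ∞ := ENNReal.ofReal_ne_top

lemma gaussianConstant_ne_zero {E : Type*} [NormedAddCommGroup E] [InnerProductSpace ℝ E] {s : ℝ}
    (hs : 0 < s) : gaussianConstant E s ≠ 0 := by
  rw [gaussianConstant, Ne, ENNReal.ofReal_eq_zero, not_le]
  positivity

variable {E : Type*} [NormedAddCommGroup E] [InnerProductSpace ℝ E] [FiniteDimensional ℝ E]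
  [MeasurableSpace E] [BorelSpace E] {s : ℝ}

lemma integrable_exp_neg_norm_sq_div (hs : 0 < s) :
    Integrable fun x : E ↦ rexp (-(‖x‖ ^ 2 / (2 * s))) := by
  have hre : 0 < (((1 / (2 * s) : ℝ) : ℂ)).re := by
    rw [Complex.ofReal_re]
    positivity
  refine (GaussianFourier.integrable_cexp_neg_mul_sq_norm_add hre 0 (0 : E)).norm.congr
    (.of_forall fun x ↦ ?_)
  simp only [Complex.norm_exp]
  congr 1
  simp [← Complex.ofReal_pow]
  field_simp

lemma charFun_withDensity_exp_neg_norm_sq_div (hs : 0 < s) (t : E) :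
    charFun (volume.withDensity fun x : E ↦ ENNReal.ofReal (rexp (-(‖x‖ ^ 2 / (2 * s))))) t =
      ((2 * π * s) ^ (Module.finrank ℝ E / 2 : ℝ) : ℝ) * Complex.exp (-s * ‖t‖ ^ 2 / 2) := by
  have hre : 0 < (((1 / (2 * s) : ℝ) : ℂ)).re := by
    rw [Complex.ofReal_re]
    positivity
  have hintegrand (x : E) : (ENNReal.ofReal (rexp (-(‖x‖ ^ 2 / (2 * s))))).toReal •
      Complex.exp (⟪x, t⟫ * Complex.I) =
        Complex.exp (-((1 / (2 * s) : ℝ) : ℂ) * ‖x‖ ^ 2 + Complex.I * ⟪t, x⟫) := by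
    rw [ENNReal.toReal_ofReal (exp_pos _).le, Complex.real_smul, Complex.ofReal_exp,
      ← Complex.exp_add, real_inner_comm]
    congr 1
    push_cast
    ring
  rw [charFun_apply, integral_withDensity_eq_integral_toReal_smul (by fun_prop)
    (.of_forall fun _ ↦ ENNReal.ofReal_lt_top)]
  simp only [hintegrand]
  rw [GaussianFourier.integral_cexp_neg_mul_sq_norm_add hre Complex.I t,
    Complex.ofReal_cpow (by positivity)]
  have hs' : (s : ℂ) ≠ 0 := mod_cast hs.ne'
  congr 2
  · push_cast
    field_simp
  · push_cast
    rfl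
  · rw [Complex.I_sq]
    push_cast
    field_simp
    ring

lemma withDensity_exp_neg_norm_sq_div (hs : 0 < s) :
    (volume : Measure E).withDensity (fun x ↦ ENNReal.ofReal (rexp (-(‖x‖ ^ 2 / (2 * s))))) =
      gaussianConstant E s • (stdGaussian E).map fun z ↦ √s • z := by
  have := isFiniteMeasure_withDensity_ofReal (integrable_exp_neg_norm_sq_div (E := E) hs).2
  have : IsFiniteMeasure (gaussianConstant E s • (stdGaussian E).map fun z ↦ √s • z) :=
    Measure.smul_finite _ gaussianConstant_ne_top
  refine Measure.ext_of_charFun (funext fun t ↦ ?_)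
  have hsq : ((√s : ℝ) : ℂ) ^ 2 = s := mod_cast sq_sqrt hs.le
  rw [charFun_withDensity_exp_neg_norm_sq_div hs, charFun_apply (μ := _ • _),
    integral_smul_measure, ← charFun_apply, charFun_map_smul, charFun_stdGaussian, norm_smul,
    norm_of_nonneg (sqrt_nonneg s), Complex.ofReal_mul, mul_pow, hsq, gaussianConstant,
    ENNReal.toReal_ofReal (by positivity), Complex.real_smul, neg_mul]

lemma gaussianConstant_mul_stdGaussian_preimage (hs : 0 < s) (w : E) {S : Set E}
    (hS : MeasurableSet S) :
    gaussianConstant E s * stdGaussian E ((fun z ↦ w + √s • z) ⁻¹' S) =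
      ∫⁻ y in S, ENNReal.ofReal (rexp (-(‖y - w‖ ^ 2 / (2 * s)))) := by
  have hS' : MeasurableSet ((w + ·) ⁻¹' S) := measurable_const_add w hS
  have h := DFunLike.congr_fun (withDensity_exp_neg_norm_sq_div (E := E) hs) ((w + ·) ⁻¹' S)
  rw [withDensity_apply _ hS', Measure.smul_apply, Measure.map_apply (by fun_prop) hS'] at h
  rw [← (measurePreserving_add_left volume w).setLIntegral_comp_preimage hS (by fun_prop)]
  simp only [add_sub_cancel_left]
  exact h.symm

end GaussianDensity

section PolarCoordinates

variable {E : Type*} [NormedAddCommGroup E] [InnerProductSpace ℝ E] [FiniteDimensional ℝ E]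
  [MeasurableSpace E] [BorelSpace E]

lemma lintegral_fun_norm_addHaar [Nontrivial E] (μ : Measure E) [μ.IsAddHaarMeasure] {g : ℝ → ℝ≥0∞}
    (hg : Measurable g) :
    ∫⁻ y, g ‖y‖ ∂μ = μ.toSphere Set.univ *
      ∫⁻ r in Set.Ioi 0, ENNReal.ofReal (r ^ (Module.finrank ℝ E - 1)) * g r := by
  have hpolar := μ.measurePreserving_homeomorphUnitSphereProd.lintegral_comp
    (f := fun p ↦ g p.2) (by fun_prop)
  simp only [homeomorphUnitSphereProd_apply_snd_coe] at hpolar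
  calc _ = ∫⁻ y in ({0}ᶜ : Set E), g ‖y‖ ∂μ := by rw [restrict_compl_singleton]
    _ = _ := by
      rw [← lintegral_subtype_comap (measurableSet_singleton _).compl, hpolar,
        lintegral_prod _ (by fun_prop)]
      simp only [lintegral_const]
      rw [mul_comm, Measure.volumeIoiPow,
        lintegral_withDensity_eq_lintegral_mul _ (by fun_prop) (by fun_prop),
        ← lintegral_subtype_comap measurableSet_Ioi]
      rfl

lemma setLIntegral_norm_preimage_of_radial [Nontrivial E] {g : E → ℝ≥0∞} (hg : Measurable g)
    (hrad : ∀ y z, ‖y‖ = ‖z‖ → g y = g z) {θ : E} (hθ : ‖θ‖ = 1) {I : Set ℝ}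
    (hI : MeasurableSet I) (hI0 : I ⊆ Set.Ioi 0) :
    ∫⁻ y in norm ⁻¹' I, g y = (volume : Measure E).toSphere Set.univ *
      ∫⁻ r in I, ENNReal.ofReal (r ^ (Module.finrank ℝ E - 1)) * g (r • θ) := by
  have hgθ (y : E) :
      (norm ⁻¹' I).indicator g y = I.indicator (fun r ↦ g (r • θ)) ‖y‖ := by
    have hgy : g y = g (‖y‖ • θ) := hrad _ _ (by rw [norm_smul, hθ, norm_norm, mul_one])
    simp only [Set.indicator, hgy]
    rfl
  rw [← lintegral_indicator (measurable_norm hI)]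
  simp only [hgθ]
  rw [lintegral_fun_norm_addHaar volume (Measurable.indicator (by fun_prop) hI)]
  have hmul (r : ℝ) : ENNReal.ofReal (r ^ (Module.finrank ℝ E - 1)) *
      I.indicator (fun r ↦ g (r • θ)) r = I.indicator (fun r ↦
        ENNReal.ofReal (r ^ (Module.finrank ℝ E - 1)) * g (r • θ)) r :=
    (Set.indicator_mul_right I (fun r ↦ ENNReal.ofReal (r ^ (Module.finrank ℝ E - 1))) _).symm
  simp only [hmul]
  rw [setLIntegral_indicator hI, Set.inter_eq_left.2 hI0]

end PolarCoordinates

section RadialLaw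

variable {ι F : Type*} [Fintype ι] [NormedAddCommGroup F] [InnerProductSpace ℝ F]
  [FiniteDimensional ℝ F] [MeasurableSpace F] [BorelSpace F]
  {μ : Measure (EuclideanSpace ℝ ι)} {s R ρ κ : ℝ}

/-- The law of `ΓX + √s Z` for independent `X`, `Γ`, `Z` where `X` has law `μ` and `Γ`, `Z` are
standard Gaussian, restricted to the event `‖Γ‖ ≤ R`; it is not renormalized. -/
def truncatedImageLaw (F : Type*) [NormedAddCommGroup F] [InnerProductSpace ℝ F]
    [FiniteDimensional ℝ F] [MeasurableSpace F] [BorelSpace F] (μ : Measure (EuclideanSpace ℝ ι))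
    (s R : ℝ) : Measure F :=
  (μ.prod (((stdGaussian (PiLp 2 fun _ : ι ↦ F)).restrict (Metric.closedBall 0 R)).prod
    (stdGaussian F))).map fun p ↦ columnSum p.2.1 p.1 + √s • p.2.2

lemma truncatedImageLaw_le_one [IsProbabilityMeasure μ] (S : Set F) :
    truncatedImageLaw F μ s R S ≤ 1 := by
  have hmap : Measurable fun p : EuclideanSpace ℝ ι × (PiLp 2 fun _ : ι ↦ F) × F ↦
      columnSum p.2.1 p.1 + √s • p.2.2 := Continuous.measurable (by fun_prop)
  refine (measure_mono (Set.subset_univ S)).trans ?_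
  rw [truncatedImageLaw, Measure.map_apply hmap .univ, Set.preimage_univ, ← Set.univ_prod_univ,
    Measure.prod_prod, ← Set.univ_prod_univ, Measure.prod_prod]
  simpa using prob_le_one

/-- The density of `truncatedImageLaw`, without the normalizing constant of the Gaussian density. -/
def truncatedImageDensity (μ : Measure (EuclideanSpace ℝ ι)) (s R : ℝ) (y : F) : ℝ≥0∞ :=
  ∫⁻ Γ in Metric.closedBall (0 : PiLp 2 fun _ : ι ↦ F) R,
    ENNReal.ofReal (smoothedDensity μ s Γ y) ∂stdGaussian (PiLp 2 fun _ : ι ↦ F)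

@[fun_prop]
lemma measurable_smoothedDensity [SFinite μ] :
    Measurable fun p : (PiLp 2 fun _ : ι ↦ F) × F ↦ smoothedDensity μ s p.1 p.2 := by
  have hcont : Continuous fun q : ((PiLp 2 fun _ : ι ↦ F) × F) × EuclideanSpace ℝ ι ↦
      rexp (-noisePotential s q.1.1 q.1.2 q.2) := by fun_prop
  exact hcont.stronglyMeasurable.integral_prod_right'.measurable

lemma measurable_truncatedImageDensity [SFinite μ] :
    Measurable (truncatedImageDensity μ s R : F → ℝ≥0∞) :=
  Measurable.lintegral_prod_left' measurable_smoothedDensity.ennreal_ofReal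

lemma truncatedImageDensity_eq_of_norm_eq {y z : F} (h : ‖y‖ = ‖z‖) :
    truncatedImageDensity μ s R y = truncatedImageDensity μ s R z := by
  let φ : F ≃ₗᵢ[ℝ] F := Submodule.reflection (ℝ ∙ (y - z))ᗮ
  have hφ : φ y = z := Submodule.reflection_sub h
  let Φ := LinearIsometryEquiv.piLpCongrRight (𝕜 := ℝ) 2 fun _ : ι ↦ φ
  have hΦ : MeasurePreserving Φ (stdGaussian (PiLp 2 fun _ : ι ↦ F)) (stdGaussian _) :=
    ⟨Φ.continuous.measurable, stdGaussian_map Φ⟩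
  have hball : Φ ⁻¹' Metric.closedBall 0 R = Metric.closedBall 0 R := by
    ext Γ
    simp
  have hinv (Γ : PiLp 2 fun _ : ι ↦ F) :
      smoothedDensity μ s (Φ Γ) z = smoothedDensity μ s Γ y := by
    simp only [smoothedDensity, noisePotential, Φ, columnSum_piLpCongrRight, ← hφ, ← map_sub,
      LinearIsometryEquiv.norm_map]
  rw [truncatedImageDensity, truncatedImageDensity, eq_comm, ← hΦ.setLIntegral_comp_preimage_emb
    Φ.toHomeomorph.measurableEmbedding, hball]
  simp only [hinv]

lemma gaussianConstant_mul_truncatedImageLaw [IsFiniteMeasure μ] (hs : 0 < s) {S : Set F}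
    (hS : MeasurableSet S) :
    gaussianConstant F s * truncatedImageLaw F μ s R S =
      ∫⁻ y in S, truncatedImageDensity μ s R y := by
  let γ := (stdGaussian (PiLp 2 fun _ : ι ↦ F)).restrict (Metric.closedBall 0 R)
  have hmap : Measurable fun p : EuclideanSpace ℝ ι × (PiLp 2 fun _ : ι ↦ F) × F ↦
      columnSum p.2.1 p.1 + √s • p.2.2 := Continuous.measurable (by fun_prop)
  let e (x : EuclideanSpace ℝ ι) (Γ : PiLp 2 fun _ : ι ↦ F) (y : F) : ℝ≥0∞ :=
    ENNReal.ofReal (rexp (-noisePotential s Γ y x))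
  have he : Measurable fun q : (EuclideanSpace ℝ ι × (PiLp 2 fun _ : ι ↦ F)) × F ↦
      e q.1.1 q.1.2 q.2 := (ENNReal.continuous_ofReal.comp (by fun_prop)).measurable
  have hnoise (x : EuclideanSpace ℝ ι) (Γ : PiLp 2 fun _ : ι ↦ F) : gaussianConstant F s *
      stdGaussian F ((fun z ↦ columnSum Γ x + √s • z) ⁻¹' S) = ∫⁻ y in S, e x Γ y :=
    gaussianConstant_mul_stdGaussian_preimage hs _ hS
  have hlaw : gaussianConstant F s * truncatedImageLaw F μ s R S =
      ∫⁻ x, ∫⁻ Γ, (∫⁻ y in S, e x Γ y) ∂γ ∂μ := by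
    rw [truncatedImageLaw, Measure.map_apply hmap hS, Measure.prod_apply (hmap hS),
      ← lintegral_const_mul' _ _ gaussianConstant_ne_top]
    refine lintegral_congr fun x ↦ ?_
    rw [Measure.prod_apply (measurable_prodMk_left (hmap hS)),
      ← lintegral_const_mul' _ _ gaussianConstant_ne_top]
    exact lintegral_congr fun Γ ↦ hnoise x Γ
  have hy (y : F) : ∫⁻ x, ∫⁻ Γ, e x Γ y ∂γ ∂μ = truncatedImageDensity μ s R y := by
    rw [lintegral_lintegral_swap (f := fun x Γ ↦ e x Γ y)
      (he.comp measurable_prodMk_right).aemeasurable]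
    exact lintegral_congr fun Γ ↦ (ofReal_smoothedDensity hs.le Γ y).symm
  rw [hlaw, lintegral_lintegral (f := fun x Γ ↦ ∫⁻ y in S, e x Γ y)
    he.lintegral_prod_right'.aemeasurable, lintegral_lintegral_swap he.aemeasurable]
  refine lintegral_congr fun y ↦ ?_
  rw [← hy, lintegral_lintegral (f := fun x Γ ↦ e x Γ y)
    (he.comp measurable_prodMk_right).aemeasurable]

/-- The integral over `‖Γ‖ ≤ R` and `r ∈ I` of the joint density of `Γ` and `ΓX + √s Z` in polar
coordinates, along the ray spanned by `θ`. -/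
def polarMass (μ : Measure (EuclideanSpace ℝ ι)) (s R : ℝ) (θ : F) (I : Set ℝ) : ℝ≥0∞ :=
  ∫⁻ p in Metric.closedBall (0 : PiLp 2 fun _ : ι ↦ F) R ×ˢ I,
    ENNReal.ofReal (p.2 ^ (Module.finrank ℝ F - 1)) *
      ENNReal.ofReal (smoothedDensity μ s p.1 (p.2 • θ))
    ∂(stdGaussian (PiLp 2 fun _ : ι ↦ F)).prod volume

lemma gaussianConstant_mul_truncatedImageLaw_norm_preimage [IsFiniteMeasure μ] [Nontrivial F]
    (hs : 0 < s) {θ : F} (hθ : ‖θ‖ = 1) {I : Set ℝ} (hI : MeasurableSet I) (hI0 : I ⊆ Set.Ioi 0) :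
    gaussianConstant F s * truncatedImageLaw F μ s R (norm ⁻¹' I) =
      (volume : Measure F).toSphere Set.univ * polarMass μ s R θ I := by
  have hmeas : Measurable fun p : (PiLp 2 fun _ : ι ↦ F) × ℝ ↦
      ENNReal.ofReal (smoothedDensity μ s p.1 (p.2 • θ)) := by fun_prop
  rw [gaussianConstant_mul_truncatedImageLaw hs (measurable_norm hI),
    setLIntegral_norm_preimage_of_radial measurable_truncatedImageDensity
      (fun _ _ ↦ truncatedImageDensity_eq_of_norm_eq) hθ hI hI0, polarMass,
    ← Measure.prod_restrict, lintegral_prod_symm _ (by fun_prop)]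
  congr 1
  exact lintegral_congr fun r ↦ (lintegral_const_mul _ (hmeas.comp measurable_prodMk_right)).symm

/-- Prékopa–Leindler in the variables `(Γ, r)`: the weight `exp (‖Γ - Γ'‖ ^ 2 / 8)` gained from the
Gaussian law of `Γ` pays for the loss in the midpoint inequality for the smoothed density, and the
Jacobian `r ^ (d - 1)` produces the gain. -/
lemma IsSmoothedDensityStable.polarMass_mul_le [IsFiniteMeasure μ]
    (hst : IsSmoothedDensityStable F μ s R ρ κ) (hμ : IsLogConcaveMeasure μ) (hs : 0 ≤ s) {θ : F}
    (hθ : ‖θ‖ = 1) {a b : ℝ} (hab : a ≤ b) (hbρ : b ≤ ρ) :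
    polarMass μ s R θ (Set.Ioc 0 a) * polarMass μ s R θ (Set.Icc b ρ) ≤
      (ENNReal.ofReal
        (rexp κ * √(4 * (a * b) / (a + b) ^ 2) ^ (Module.finrank ℝ F - 1)) *
        polarMass μ s R θ (Set.Ioc 0 ρ)) ^ 2 := by
  let m := Module.finrank ℝ F - 1
  let f (p : (PiLp 2 fun _ : ι ↦ F) × ℝ) : ℝ≥0∞ :=
    ENNReal.ofReal (p.2 ^ m) * ENNReal.ofReal (smoothedDensity μ s p.1 (p.2 • θ))
  have hf : Measurable f := by fun_prop
  have hball : MeasurableSet (Metric.closedBall (0 : PiLp 2 fun _ : ι ↦ F) R) :=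
    Metric.isClosed_closedBall.measurableSet
  have hmid {Γ Γ' : PiLp 2 fun _ : ι ↦ F} (hΓ : Γ ∈ Metric.closedBall 0 R)
      (hΓ' : Γ' ∈ Metric.closedBall 0 R) : (1 / 2 : ℝ) • (Γ + Γ') ∈ Metric.closedBall 0 R := by
    rw [smul_add]
    exact convex_closedBall 0 R hΓ hΓ' one_half_pos.le one_half_pos.le (add_halves 1)
  change _ ≤ (_ * ∫⁻ p in _, f p ∂_) ^ 2
  rw [← lintegral_const_mul _ hf]
  refine ((prekopaLeindler_stdGaussian one_half_pos one_half_lt_one).prod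
    (prekopaLeindler_volume_real one_half_pos one_half_lt_one)).setLIntegral_mul_le
    (hball.prod measurableSet_Ioc) (hball.prod measurableSet_Icc) (hball.prod measurableSet_Ioc)
    hf hf (hf.const_mul _) ?_ ?_
  · rintro ⟨Γ, r⟩ ⟨hΓ, hr0, hra⟩ ⟨Γ', r'⟩ ⟨hΓ', hbr, hrρ⟩
    simp only [Prod.mk_add_mk, Prod.smul_mk, smul_eq_mul, Set.mem_prod, Set.mem_Ioc]
    exact ⟨hmid hΓ hΓ', by linarith, by linarith⟩
  · rintro ⟨Γ, r⟩ ⟨hΓ, hr0, hra⟩ ⟨Γ', r'⟩ ⟨hΓ', hbr, hrρ⟩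
    have hr' : 0 < r' := by linarith
    have hreal := hst.pow_mul_smoothedDensity_mul_le hμ hs hθ (mem_closedBall_zero_iff.1 hΓ)
      (mem_closedBall_zero_iff.1 hΓ') hr0 hra hab hbr hrρ m
    have hweight : (1 / 2 : ℝ) * (1 - 1 / 2) * ‖Γ - Γ'‖ ^ 2 / 2 = ‖Γ - Γ'‖ ^ 2 / 8 := by ring
    have hhalf : (1 / 2 : ℝ) * (r + r') = (r + r') / 2 := by ring
    simp only [f, Prod.mk_add_mk, Prod.smul_mk, smul_eq_mul, Pi.one_apply, mul_one, hweight, hhalf]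
    have hmid0 : 0 ≤ rexp (‖Γ - Γ'‖ ^ 2 / 8) * (rexp κ * √(4 * (a * b) / (a + b) ^ 2) ^ m *
        (((r + r') / 2) ^ m *
          smoothedDensity μ s ((1 / 2 : ℝ) • (Γ + Γ')) (((r + r') / 2) • θ))) := by
      have := smoothedDensity_nonneg (μ := μ) (s := s) (Γ := (1 / 2 : ℝ) • (Γ + Γ'))
        (y := ((r + r') / 2) • θ)
      positivity
    rw [← ENNReal.ofReal_mul' smoothedDensity_nonneg, ← ENNReal.ofReal_mul' smoothedDensity_nonneg,
      ← ENNReal.ofReal_mul' smoothedDensity_nonneg,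
      ← ENNReal.ofReal_mul (mul_nonneg (by positivity) smoothedDensity_nonneg),
      ← ENNReal.ofReal_mul (p := rexp κ * _) (by positivity), ← ENNReal.ofReal_mul (exp_pos _).le,
      ← ENNReal.ofReal_pow hmid0]
    exact ENNReal.ofReal_le_ofReal hreal

theorem IsSmoothedDensityStable.truncatedImageLaw_mul_le [IsProbabilityMeasure μ] [Nontrivial F]
    (hst : IsSmoothedDensityStable F μ s R ρ κ) (hμ : IsLogConcaveMeasure μ) (hs : 0 < s) {a b : ℝ}
    (ha : 0 < a) (hab : a ≤ b) (hbρ : b ≤ ρ) :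
    truncatedImageLaw F μ s R (norm ⁻¹' Set.Ioc 0 a) *
        truncatedImageLaw F μ s R (norm ⁻¹' Set.Icc b ρ) ≤
      ENNReal.ofReal
        (rexp (2 * κ) * (4 * (a * b) / (a + b) ^ 2) ^ (Module.finrank ℝ F - 1)) := by
  obtain ⟨θ, hθ⟩ := exists_norm_eq F zero_le_one
  have hlaw {I : Set ℝ} (hI : MeasurableSet I) (hI0 : I ⊆ Set.Ioi 0) :=
    gaussianConstant_mul_truncatedImageLaw_norm_preimage (μ := μ) (R := R) hs hθ hI hI0
  have hmass := truncatedImageLaw_le_one (μ := μ) (s := s) (R := R) (norm ⁻¹' Set.Ioc 0 ρ : Set F)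
  have hQ : 0 ≤ 4 * (a * b) / (a + b) ^ 2 := by
    have : 0 < b := by linarith
    positivity
  have hC : ENNReal.ofReal (rexp κ * √(4 * (a * b) / (a + b) ^ 2) ^ (Module.finrank ℝ F - 1)) ^ 2 =
      ENNReal.ofReal
        (rexp (2 * κ) * (4 * (a * b) / (a + b) ^ 2) ^ (Module.finrank ℝ F - 1)) := by
    rw [← ENNReal.ofReal_pow (by positivity), mul_pow, ← pow_mul, mul_comm _ 2, pow_mul,
      sq_sqrt hQ, ← exp_nat_mul, Nat.cast_ofNat]
  have hA : gaussianConstant F s ^ 2 ≠ 0 := pow_ne_zero 2 (gaussianConstant_ne_zero hs)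
  have hA' : gaussianConstant F s ^ 2 ≠ ∞ := ENNReal.pow_ne_top gaussianConstant_ne_top
  rw [← ENNReal.mul_le_mul_iff_right hA hA', ← hC]
  set K := ENNReal.ofReal
    (rexp κ * √(4 * (a * b) / (a + b) ^ 2) ^ (Module.finrank ℝ F - 1))
  set c := (volume : Measure F).toSphere Set.univ
  calc _ = gaussianConstant F s * truncatedImageLaw F μ s R (norm ⁻¹' Set.Ioc 0 a) *
        (gaussianConstant F s * truncatedImageLaw F μ s R (norm ⁻¹' Set.Icc b ρ)) := by ring
    _ = c ^ 2 * (polarMass μ s R θ (Set.Ioc 0 a) * polarMass μ s R θ (Set.Icc b ρ)) := by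
        rw [hlaw measurableSet_Ioc fun x hx ↦ hx.1,
          hlaw measurableSet_Icc fun x hx ↦ (ha.trans_le hab).trans_le hx.1]
        ring
    _ ≤ c ^ 2 * (K * polarMass μ s R θ (Set.Ioc 0 ρ)) ^ 2 := by
        gcongr
        exact hst.polarMass_mul_le hμ hs.le hθ hab hbρ
    _ = (K * (gaussianConstant F s * truncatedImageLaw F μ s R (norm ⁻¹' Set.Ioc 0 ρ))) ^ 2 := by
        rw [hlaw measurableSet_Ioc fun x hx ↦ hx.1]
        ring
    _ ≤ (K * (gaussianConstant F s * 1)) ^ 2 := by gcongr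
    _ = _ := by ring

end RadialLaw

/-! ### Two-sided bounds for the regularized norm -/

section GaussianNorm

lemma memLp_sq_gaussianReal : MemLp (fun w ↦ w ^ 2) 2 (gaussianReal 0 1) := by
  rw [memLp_two_iff_integrable_sq (by fun_prop)]
  refine ((memLp_id_gaussianReal (μ := 0) (v := 1) 4).integrable_norm_pow (by norm_num)).congr
    (.of_forall fun w ↦ ?_)
  simp only [id, Real.norm_eq_abs, ← pow_mul]
  exact Even.pow_abs ⟨2, rfl⟩ w

lemma integral_sq_gaussianReal : ∫ w, w ^ 2 ∂gaussianReal 0 1 = 1 := by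
  have hvar := variance_eq_sub (memLp_id_gaussianReal (μ := 0) (v := 1) 2)
  simpa using hvar.symm

variable {E : Type*} [NormedAddCommGroup E] [InnerProductSpace ℝ E] [FiniteDimensional ℝ E]
  [MeasurableSpace E] [BorelSpace E]

lemma identDistrib_norm_sq_stdGaussian :
    IdentDistrib (fun z : E ↦ ‖z‖ ^ 2)
      (∑ i, fun w : Fin (Module.finrank ℝ E) → ℝ ↦ w i ^ 2)
      (stdGaussian E) (Measure.pi fun _ ↦ gaussianReal 0 1) := by
  refine ⟨by fun_prop, Finset.aemeasurable_sum _ fun i _ ↦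
    ((measurable_pi_apply i).pow_const 2).aemeasurable, ?_⟩
  rw [stdGaussian_eq_map_pi_orthonormalBasis (stdOrthonormalBasis ℝ E),
    Measure.map_map (by fun_prop) (by fun_prop)]
  congr 1
  ext w
  simp only [Function.comp_apply, Finset.sum_apply]
  rw [← real_inner_self_eq_norm_sq, (stdOrthonormalBasis ℝ E).orthonormal.inner_sum]
  simp [sq]

lemma memLp_norm_sq_stdGaussian : MemLp (fun z : E ↦ ‖z‖ ^ 2) 2 (stdGaussian E) :=
  identDistrib_norm_sq_stdGaussian.memLp_iff.2 <| memLp_finsetSum' _ fun i _ ↦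
    memLp_sq_gaussianReal.comp_measurePreserving (measurePreserving_eval _ i)

lemma integral_norm_sq_stdGaussian :
    ∫ z, ‖z‖ ^ 2 ∂stdGaussian E = Module.finrank ℝ E := by
  have hint (i : Fin (Module.finrank ℝ E)) :
      Integrable (fun w ↦ w i ^ 2) (Measure.pi fun _ ↦ gaussianReal 0 1) :=
    (memLp_sq_gaussianReal.comp_measurePreserving (measurePreserving_eval _ i)).integrable
      one_le_two
  rw [identDistrib_norm_sq_stdGaussian.integral_eq]
  simp only [Finset.sum_apply]
  rw [integral_finsetSum _ fun i _ ↦ hint i]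
  simp [integral_comp_eval (μ := fun _ ↦ gaussianReal 0 1) (f := fun w : ℝ ↦ w ^ 2)
    memLp_sq_gaussianReal.1, integral_sq_gaussianReal]

lemma variance_norm_sq_stdGaussian :
    Var[fun z ↦ ‖z‖ ^ 2; stdGaussian E] =
      Module.finrank ℝ E * Var[fun w ↦ w ^ 2; gaussianReal 0 1] := by
  rw [identDistrib_norm_sq_stdGaussian.variance_eq,
    variance_sum_pi (X := fun _ w ↦ w ^ 2) fun _ ↦ memLp_sq_gaussianReal]
  simp

lemma stdGaussian_le_norm_sq_le {c : ℝ} (hc : 0 < c) :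
    stdGaussian E {z | c ≤ ‖z‖ ^ 2} ≤ ENNReal.ofReal (Module.finrank ℝ E / c) := by
  have hmarkov := mul_meas_ge_le_integral_of_nonneg (μ := stdGaussian E)
    (.of_forall fun z ↦ sq_nonneg ‖z‖) (memLp_norm_sq_stdGaussian.integrable one_le_two) c
  rw [integral_norm_sq_stdGaussian] at hmarkov
  rw [← ofReal_measureReal]
  exact ENNReal.ofReal_le_ofReal ((le_div_iff₀' hc).2 hmarkov)

lemma stdGaussian_le_abs_norm_sq_sub_finrank_le [Nontrivial E] {δ : ℝ} (hδ : 0 < δ) :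
    stdGaussian E {z | δ * Module.finrank ℝ E ≤ |‖z‖ ^ 2 - Module.finrank ℝ E|} ≤
      ENNReal.ofReal
        (Var[fun w ↦ w ^ 2; gaussianReal 0 1] / (Module.finrank ℝ E * δ ^ 2)) := by
  have hd : (0 : ℝ) < Module.finrank ℝ E := mod_cast Module.finrank_pos
  have hcheb := meas_ge_le_variance_div_sq (memLp_norm_sq_stdGaussian (E := E))
    (c := δ * Module.finrank ℝ E) (by positivity)
  rw [integral_norm_sq_stdGaussian, variance_norm_sq_stdGaussian] at hcheb
  convert hcheb using 2
  field_simp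

end GaussianNorm

section RegularizedNorm

variable {ι F : Type*} [Fintype ι]

/-- `√(‖x‖² + s)`: up to the factor `√(dim F)`, the typical norm of `Γx + √s Z` for independent
standard Gaussian `Γ` and `Z`. -/
def regularizedNorm (s : ℝ) (x : EuclideanSpace ℝ ι) : ℝ := √(‖x‖ ^ 2 + s)

@[fun_prop]
lemma continuous_regularizedNorm {s : ℝ} :
    Continuous (regularizedNorm s : EuclideanSpace ℝ ι → ℝ) := by
  unfold regularizedNorm
  fun_prop

lemma regularizedNorm_sq {s : ℝ} (hs : 0 ≤ s) (x : EuclideanSpace ℝ ι) :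
    regularizedNorm s x ^ 2 = ‖x‖ ^ 2 + s := sq_sqrt (by positivity)

lemma sqrt_le_regularizedNorm (s : ℝ) (x : EuclideanSpace ℝ ι) : √s ≤ regularizedNorm s x :=
  sqrt_le_sqrt (by simp)

lemma norm_le_regularizedNorm {s : ℝ} (hs : 0 ≤ s) (x : EuclideanSpace ℝ ι) :
    ‖x‖ ≤ regularizedNorm s x :=
  le_sqrt_of_sq_le (by linarith)

lemma regularizedNorm_le_add {s : ℝ} (hs : 0 ≤ s) (x : EuclideanSpace ℝ ι) :
    regularizedNorm s x ≤ ‖x‖ + √s := by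
  refine sqrt_le_iff.2 ⟨by positivity, ?_⟩
  nlinarith [sq_sqrt hs, mul_nonneg (norm_nonneg x) (sqrt_nonneg s)]

lemma regularizedNorm_le_two_mul_norm {s : ℝ} (hs : 0 ≤ s) {x : EuclideanSpace ℝ ι}
    (hx : 2 * √s ≤ regularizedNorm s x) : regularizedNorm s x ≤ 2 * ‖x‖ := by
  linarith [regularizedNorm_le_add hs x]

lemma abs_norm_sub_sqrt_le {s : ℝ} (hs : 0 ≤ s) (x : EuclideanSpace ℝ ι) :
    |‖x‖ - √s| ≤ 3 * |regularizedNorm s x - √(2 * s)| := by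
  have hsum : 0 ≤ ‖x‖ + √s := by positivity
  rcases hsum.eq_or_lt with hzero | hpos
  · have : ‖x‖ - √s = 0 := by linarith [norm_nonneg x, sqrt_nonneg s]
    simp [this]
  have hdiff : (‖x‖ - √s) * (‖x‖ + √s) =
      (regularizedNorm s x - √(2 * s)) * (regularizedNorm s x + √(2 * s)) := by
    linarith [regularizedNorm_sq hs x, sq_sqrt hs, sq_sqrt (by positivity : 0 ≤ 2 * s)]
  have hR : 0 ≤ regularizedNorm s x := sqrt_nonneg _
  have hsqrt : √(2 * s) ≤ 2 * √s :=
    sqrt_le_iff.2 ⟨by positivity, by linarith [sq_sqrt hs, mul_pow 2 (√s) 2]⟩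
  refine le_of_mul_le_mul_right ?_ hpos
  calc |‖x‖ - √s| * (‖x‖ + √s)
      = |regularizedNorm s x - √(2 * s)| * (regularizedNorm s x + √(2 * s)) := by
        rw [← abs_of_nonneg hsum, ← abs_mul, hdiff, abs_mul,
          abs_of_nonneg (add_nonneg hR (sqrt_nonneg _))]
    _ ≤ |regularizedNorm s x - √(2 * s)| * (3 * (‖x‖ + √s)) := by
        gcongr
        linarith [regularizedNorm_le_add hs x, norm_nonneg x]
    _ = _ := by ring

variable [NormedAddCommGroup F] [InnerProductSpace ℝ F] [FiniteDimensional ℝ F]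
  [MeasurableSpace F] [BorelSpace F] {s R : ℝ}

lemma map_columnSum_add_smul (hs : 0 ≤ s) (x : EuclideanSpace ℝ ι) :
    ((stdGaussian (PiLp 2 fun _ : ι ↦ F)).prod (stdGaussian F)).map
        (fun p ↦ columnSum p.1 x + √s • p.2) =
      (stdGaussian F).map fun z ↦ regularizedNorm s x • z := by
  have hmeas : Measurable fun p : (PiLp 2 fun _ : ι ↦ F) × F ↦ columnSum p.1 x + √s • p.2 :=
    Continuous.measurable (by fun_prop)
  have := Measure.isProbabilityMeasure_map (μ := (stdGaussian (PiLp 2 fun _ : ι ↦ F)).prod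
    (stdGaussian F)) hmeas.aemeasurable
  have := Measure.isProbabilityMeasure_map (μ := stdGaussian F)
    (f := fun z ↦ regularizedNorm s x • z) (by fun_prop)
  refine Measure.ext_of_charFun (funext fun t ↦ ?_)
  let u : PiLp 2 fun _ : ι ↦ F := WithLp.toLp 2 fun j ↦ x j • t
  have hinner (p : (PiLp 2 fun _ : ι ↦ F) × F) :
      ⟪columnSum p.1 x + √s • p.2, t⟫ = ⟪p.1, u⟫ + ⟪p.2, √s • t⟫ := by
    simp [columnSum, u, inner_add_left, sum_inner, PiLp.inner_apply, real_inner_smul_left,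
      real_inner_smul_right]
  have hu : ‖u‖ ^ 2 = ‖x‖ ^ 2 * ‖t‖ ^ 2 := by
    simp [u, PiLp.norm_sq_eq_of_L2, norm_smul, mul_pow, Finset.sum_mul]
  have hnorm : ‖u‖ ^ 2 + ‖√s • t‖ ^ 2 = ‖regularizedNorm s x • t‖ ^ 2 := by
    rw [norm_smul, norm_smul, mul_pow, mul_pow, hu, norm_eq_abs, norm_eq_abs, sq_abs, sq_abs,
      sq_sqrt hs, regularizedNorm_sq hs, add_mul]
  have hexp (p : (PiLp 2 fun _ : ι ↦ F) × F) :
      Complex.exp (⟪columnSum p.1 x + √s • p.2, t⟫ * Complex.I) =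
        Complex.exp (⟪p.1, u⟫ * Complex.I) * Complex.exp (⟪p.2, √s • t⟫ * Complex.I) := by
    rw [← Complex.exp_add, ← add_mul, hinner, Complex.ofReal_add]
  rw [charFun_map_smul, charFun_stdGaussian, charFun_apply,
    integral_map hmeas.aemeasurable (by fun_prop)]
  simp only [hexp]
  rw [integral_prod_mul (fun Γ ↦ Complex.exp (⟪Γ, u⟫ * Complex.I))
    (fun z ↦ Complex.exp (⟪z, √s • t⟫ * Complex.I)), ← charFun_apply, ← charFun_apply,
    charFun_stdGaussian, charFun_stdGaussian, ← Complex.exp_add, ← Complex.ofReal_pow,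
    ← Complex.ofReal_pow, ← Complex.ofReal_pow, ← hnorm]
  push_cast
  ring_nf

lemma stdGaussian_prod_abs_norm_sq_sub_le [Nontrivial F] (hs : 0 < s) (x : EuclideanSpace ℝ ι)
    {δ : ℝ} (hδ : 0 < δ) :
    (stdGaussian (PiLp 2 fun _ : ι ↦ F)).prod (stdGaussian F)
        {p | δ * (Module.finrank ℝ F * regularizedNorm s x ^ 2) ≤
          |‖columnSum p.1 x + √s • p.2‖ ^ 2 - Module.finrank ℝ F * regularizedNorm s x ^ 2|} ≤
      ENNReal.ofReal
        (Var[fun w ↦ w ^ 2; gaussianReal 0 1] / (Module.finrank ℝ F * δ ^ 2)) := by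
  set d := (Module.finrank ℝ F : ℝ)
  set r := regularizedNorm s x
  have hr : 0 < r ^ 2 := by
    rw [regularizedNorm_sq hs.le]
    positivity
  have hmeas : Measurable fun p : (PiLp 2 fun _ : ι ↦ F) × F ↦ columnSum p.1 x + √s • p.2 :=
    Continuous.measurable (by fun_prop)
  have hset : MeasurableSet {y : F | δ * (d * r ^ 2) ≤ |‖y‖ ^ 2 - d * r ^ 2|} :=
    measurableSet_le (by fun_prop) (by fun_prop)
  refine le_of_eq_of_le ?_ (stdGaussian_le_abs_norm_sq_sub_finrank_le (E := F) hδ)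
  calc _ = ((stdGaussian (PiLp 2 fun _ : ι ↦ F)).prod (stdGaussian F)).map
        (fun p ↦ columnSum p.1 x + √s • p.2) {y | δ * (d * r ^ 2) ≤ |‖y‖ ^ 2 - d * r ^ 2|} :=
        (Measure.map_apply hmeas hset).symm
    _ = _ := by
        rw [map_columnSum_add_smul hs.le, Measure.map_apply (by fun_prop) hset]
        congr 1
        ext z
        have hfactor : ‖r • z‖ ^ 2 - d * r ^ 2 = r ^ 2 * (‖z‖ ^ 2 - d) := by
          rw [norm_smul, mul_pow, norm_eq_abs, sq_abs]
          ring
        change δ * (d * r ^ 2) ≤ |‖r • z‖ ^ 2 - d * r ^ 2| ↔ δ * d ≤ |‖z‖ ^ 2 - d|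
        rw [hfactor, abs_mul, abs_of_pos hr, ← mul_assoc, mul_comm, mul_le_mul_iff_right₀ hr]

lemma stdGaussian_restrict_prod_abs_norm_sq_sub_lt_ge [Nontrivial F] (hs : 0 < s) (hR : 0 < R)
    (hRF : 4 * (Fintype.card ι * Module.finrank ℝ F) ≤ R ^ 2) (x : EuclideanSpace ℝ ι) {δ : ℝ}
    (hδ : 0 < δ) (hδF : 4 * Var[fun w ↦ w ^ 2; gaussianReal 0 1] ≤ Module.finrank ℝ F * δ ^ 2) :
    2⁻¹ ≤ (((stdGaussian (PiLp 2 fun _ : ι ↦ F)).restrict (Metric.closedBall 0 R)).prod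
      (stdGaussian F)) {p | |‖columnSum p.1 x + √s • p.2‖ ^ 2 -
        Module.finrank ℝ F * regularizedNorm s x ^ 2| <
          δ * (Module.finrank ℝ F * regularizedNorm s x ^ 2)} := by
  let Q := (stdGaussian (PiLp 2 fun _ : ι ↦ F)).prod (stdGaussian F)
  set G := {p : (PiLp 2 fun _ : ι ↦ F) × F | |‖columnSum p.1 x + √s • p.2‖ ^ 2 -
    Module.finrank ℝ F * regularizedNorm s x ^ 2| <
      δ * (Module.finrank ℝ F * regularizedNorm s x ^ 2)} with hG
  have hGmeas : MeasurableSet G := measurableSet_lt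
    (Continuous.measurable (by fun_prop)) measurable_const
  have hd : (0 : ℝ) < Module.finrank ℝ F := mod_cast Module.finrank_pos
  have hlarge : Q ({Γ | R ^ 2 ≤ ‖Γ‖ ^ 2} ×ˢ Set.univ) ≤ ENNReal.ofReal (1 / 4) := by
    rw [Measure.prod_prod, measure_univ, mul_one]
    refine (stdGaussian_le_norm_sq_le (by positivity)).trans (ENNReal.ofReal_le_ofReal ?_)
    rw [div_le_iff₀ (by positivity), (WithLp.linearEquiv 2 ℝ (ι → F)).finrank_eq,
      Module.finrank_pi_fintype]
    simp only [Finset.sum_const, Finset.card_univ, smul_eq_mul, Nat.cast_mul]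
    linarith
  have hfar : Q Gᶜ ≤ ENNReal.ofReal (1 / 4) := by
    simp only [hG, Set.compl_ofPred, not_lt]
    refine (stdGaussian_prod_abs_norm_sq_sub_le hs x hδ).trans (ENNReal.ofReal_le_ofReal ?_)
    rw [div_le_iff₀ (by positivity)]
    linarith
  have hcover : (Set.univ : Set ((PiLp 2 fun _ : ι ↦ F) × F)) ⊆
      G ∩ (Metric.closedBall 0 R ×ˢ Set.univ) ∪ ({Γ | R ^ 2 ≤ ‖Γ‖ ^ 2} ×ˢ Set.univ ∪ Gᶜ) := by
    intro p _
    by_cases hp : ‖p.1‖ ≤ R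
    · by_cases hpG : p ∈ G <;> simp [hp, hpG]
    · have : R ^ 2 ≤ ‖p.1‖ ^ 2 := pow_le_pow_left₀ hR.le (not_le.1 hp).le 2
      simp [this]
  have hquarter : ENNReal.ofReal (1 / 4) + ENNReal.ofReal (1 / 4) = 2⁻¹ := by
    rw [← ENNReal.ofReal_add (by norm_num) (by norm_num), ← add_div, one_add_one_eq_two,
      ← ENNReal.ofReal_ofNat, ← ENNReal.ofReal_inv_of_pos two_pos]
    norm_num
  have hrestrict : ((stdGaussian (PiLp 2 fun _ : ι ↦ F)).restrict (Metric.closedBall 0 R)).prod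
      (stdGaussian F) = Q.restrict (Metric.closedBall 0 R ×ˢ Set.univ) := by
    rw [← Measure.prod_restrict, Measure.restrict_univ]
  rw [hrestrict, Measure.restrict_apply hGmeas]
  refine ENNReal.le_of_add_le_add_right (a := 2⁻¹) (by simp) ?_
  calc 2⁻¹ + 2⁻¹ = Q Set.univ := by rw [ENNReal.inv_two_add_inv_two, measure_univ]
    _ ≤ _ + (_ + _) := (measure_mono hcover).trans
        ((measure_union_le _ _).trans (add_le_add_right (measure_union_le _ _) _))
    _ ≤ _ := add_le_add_right ((add_le_add hlarge hfar).trans_eq hquarter) _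

lemma half_mul_measure_le_truncatedImageLaw {μ : Measure (EuclideanSpace ℝ ι)} [SFinite μ]
    [Nontrivial F] (hs : 0 < s) (hR : 0 < R)
    (hRF : 4 * (Fintype.card ι * Module.finrank ℝ F) ≤ R ^ 2) {δ : ℝ} (hδ : 0 < δ) (hδ1 : δ ≤ 1)
    (hδF : 4 * Var[fun w ↦ w ^ 2; gaussianReal 0 1] ≤ Module.finrank ℝ F * δ ^ 2) {α β : ℝ}
    (hα : 0 ≤ α) :
    2⁻¹ * μ {x | α ≤ regularizedNorm s x ∧ regularizedNorm s x ≤ β} ≤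
      truncatedImageLaw F μ s R (norm ⁻¹' Set.Icc (√((1 - δ) * Module.finrank ℝ F) * α)
        (√((1 + δ) * Module.finrank ℝ F) * β)) := by
  have hS : MeasurableSet {x : EuclideanSpace ℝ ι | α ≤ regularizedNorm s x ∧
      regularizedNorm s x ≤ β} :=
    measurableSet_Icc.preimage continuous_regularizedNorm.measurable
  have hmap : Measurable fun p : EuclideanSpace ℝ ι × (PiLp 2 fun _ : ι ↦ F) × F ↦
      columnSum p.2.1 p.1 + √s • p.2.2 := Continuous.measurable (by fun_prop)
  have hI := measurable_norm (α := F) (measurableSet_Icc (a := √((1 - δ) * Module.finrank ℝ F) * α)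
    (b := √((1 + δ) * Module.finrank ℝ F) * β))
  rw [truncatedImageLaw, Measure.map_apply hmap hI, Measure.prod_apply (hmap hI),
    ← setLIntegral_const, ← lintegral_indicator hS]
  refine lintegral_mono fun x ↦ Set.indicator_apply_le' ?_ fun _ ↦ zero_le
  rintro ⟨hαx, hxβ⟩
  refine (stdGaussian_restrict_prod_abs_norm_sq_sub_lt_ge hs hR hRF x hδ hδF).trans
    (measure_mono fun p hp ↦ ?_)
  rw [Set.mem_ofPred_eq, abs_lt] at hp
  obtain ⟨hlow, hup⟩ := hp
  set d := (Module.finrank ℝ F : ℝ)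
  set r := regularizedNorm s x
  have : 0 ≤ d := Nat.cast_nonneg _
  have hr : 0 ≤ r := sqrt_nonneg _
  have hβ : 0 ≤ β := hr.trans hxβ
  have : 0 ≤ 1 - δ := by linarith
  constructor
  · rw [← sq_le_sq₀ (by positivity) (norm_nonneg _), mul_pow, sq_sqrt (by positivity)]
    calc (1 - δ) * d * α ^ 2 ≤ (1 - δ) * d * r ^ 2 := by gcongr
      _ ≤ _ := by linarith
  · rw [← sq_le_sq₀ (norm_nonneg _) (by positivity), mul_pow, sq_sqrt (by positivity)]
    calc _ ≤ (1 + δ) * d * r ^ 2 := by linarith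
      _ ≤ (1 + δ) * d * β ^ 2 := by gcongr

end RegularizedNorm

section TwoSidedBound

lemma four_mul_div_sq_add_le_exp {t a b : ℝ} (ht : 0 < t) (ht1 : t ≤ 1) (ha : 0 < a)
    (hab : (1 + t / 4) * a ≤ b) : 4 * (a * b) / (a + b) ^ 2 ≤ rexp (-(t ^ 2 / 160)) := by
  have : t / 4 * a ≤ b - a := by linarith
  have hta : 0 < t / 4 * a := by positivity
  have hb : 0 < b := by linarith
  have : t ^ 2 ≤ 1 := pow_le_one₀ ht.le ht1
  have hsum : t / 9 * (a + b) ≤ b - a := by nlinarith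
  have hsq : (t / 9 * (a + b)) ^ 2 ≤ (b - a) ^ 2 :=
    pow_le_pow_left₀ (by positivity) hsum 2
  calc 4 * (a * b) / (a + b) ^ 2 ≤ 1 - t ^ 2 / 160 := by
        rw [div_le_iff₀ (by positivity)]
        nlinarith [mul_nonneg (sq_nonneg t) (sq_nonneg (a + b))]
    _ ≤ _ := one_sub_le_exp_neg _

lemma one_add_mul_sqrt_mul_le {t d ρ : ℝ} (ht : 0 < t) (ht1 : t ≤ 1) (hd : 0 ≤ d) (hρ : 0 ≤ ρ) :
    (1 + t / 4) * (√((1 + t / 8) * d) * ρ) ≤ √((1 - t / 8) * d) * ((1 + t) * ρ) := by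
  have hcoeff : (1 + t / 4) ^ 2 * (1 + t / 8) ≤ (1 - t / 8) * (1 + t) ^ 2 := by
    nlinarith [pow_pos ht 2, pow_pos ht 3, mul_nonneg (pow_pos ht 2).le (sub_nonneg.2 ht1)]
  have : 0 ≤ 1 - t / 8 := by linarith
  rw [← sq_le_sq₀ (by positivity) (by positivity)]
  simp only [mul_pow]
  rw [sq_sqrt (by positivity), sq_sqrt (by positivity)]
  calc _ = (1 + t / 4) ^ 2 * (1 + t / 8) * (d * ρ ^ 2) := by ring
    _ ≤ (1 - t / 8) * (1 + t) ^ 2 * (d * ρ ^ 2) := by gcongr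
    _ = _ := by ring

lemma sqrt_one_add_mul_mul_sqrt_le {t d s : ℝ} (ht : 0 ≤ t) (ht1 : t ≤ 1) (hd : 0 ≤ d)
    (hs : 0 ≤ s) : √((1 + t / 8) * d) * (20 * √s) ≤ √(600 * (s * d)) := by
  rw [← sq_le_sq₀ (by positivity) (by positivity), mul_pow, mul_pow, sq_sqrt (by positivity),
    sq_sqrt (by positivity), sq_sqrt (by positivity)]
  nlinarith [mul_nonneg hs hd]

lemma exp_mul_pow_le_exp_neg {m : ℕ} (hm : 2 ≤ m) {t x : ℝ} (hx : 0 ≤ x)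
    (hxt : x ≤ rexp (-(t ^ 2 / 160))) :
    rexp (2 * (t ^ 2 / 1280 * m)) * x ^ (m - 1) ≤ rexp (-(t ^ 2 * m / 640)) := by
  have hm2 : (2 : ℝ) ≤ m := mod_cast hm
  calc _ ≤ rexp (2 * (t ^ 2 / 1280 * m)) * rexp (-(t ^ 2 / 160)) ^ (m - 1) := by gcongr
    _ = rexp (2 * (t ^ 2 / 1280 * m) + (m - 1) * -(t ^ 2 / 160)) := by
        rw [← exp_nat_mul, ← exp_add, Nat.cast_pred (by omega)]
    _ ≤ _ := exp_le_exp.2 (by nlinarith [mul_nonneg (sq_nonneg t) (sub_nonneg.2 hm2)])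

variable {ι F : Type*} [Fintype ι] [NormedAddCommGroup F] [InnerProductSpace ℝ F]
  [FiniteDimensional ℝ F] {μ : Measure (EuclideanSpace ℝ ι)} {s : ℝ}

lemma IsNormalizedLogConcave.isSmoothedDensityStable [Nontrivial F]
    (hμ : IsNormalizedLogConcave μ) (hs : 0 < s) {η : ℝ} (hη : η ≤ 1)
    (hηs : 10 ^ 12 * (Module.finrank ℝ F : ℝ) ^ 2 ≤ η * s) :
    IsSmoothedDensityStable F μ s √(4 * (s * Module.finrank ℝ F))
      √(600 * (s * Module.finrank ℝ F)) (η * Module.finrank ℝ F) := by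
  intro Γ D y hΓ hy
  have hd : (1 : ℝ) ≤ Module.finrank ℝ F := mod_cast Module.finrank_pos (R := ℝ) (M := F)
  set d := (Module.finrank ℝ F : ℝ)
  rw [← abs_norm, ← sqrt_sq_eq_abs, sqrt_le_sqrt_iff (by positivity)] at hΓ hy
  set c := 128 * (604 * d) ^ 2 + 768 with hc
  have hd2 : 1 ≤ d ^ 2 := one_le_pow₀ hd
  have hcη : 4 * c * 605 ≤ η * s := by linarith
  have hcs : 4 * c ≤ s := by nlinarith
  have ha : (‖y‖ ^ 2 + ‖Γ‖ ^ 2) / s ≤ 604 * d := by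
    rw [div_le_iff₀ hs]
    linarith
  have hκ : 4 * c / s * (604 * d + 1) ≤ η * d := by
    rw [div_mul_eq_mul_div, div_le_iff₀ hs]
    calc 4 * c * (604 * d + 1) ≤ 4 * c * (605 * d) := by gcongr; linarith
      _ = 4 * c * 605 * d := by ring
      _ ≤ η * s * d := by gcongr
      _ = _ := by ring
  refine le_trans ?_ (hμ.exp_neg_mul_smoothedDensity_le_add hs ha hc.ge hcs D)
  exact mul_le_mul_of_nonneg_right (exp_le_exp.2 (by linarith)) smoothedDensity_nonneg

lemma half_mul_measure_regularizedNorm_le_le [SFinite μ] [MeasurableSpace F] [BorelSpace F]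
    [Nontrivial F] (hs : 0 < s) {R : ℝ} (hR : 0 < R)
    (hRF : 4 * (Fintype.card ι * Module.finrank ℝ F) ≤ R ^ 2) {δ : ℝ} (hδ : 0 < δ) (hδ1 : δ < 1)
    (hδF : 4 * Var[fun w ↦ w ^ 2; gaussianReal 0 1] ≤ Module.finrank ℝ F * δ ^ 2) {β : ℝ} :
    2⁻¹ * μ {x | regularizedNorm s x ≤ β} ≤
      truncatedImageLaw F μ s R
        (norm ⁻¹' Set.Ioc 0 (√((1 + δ) * Module.finrank ℝ F) * β)) := by
  have hd : (0 : ℝ) < Module.finrank ℝ F := mod_cast Module.finrank_pos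
  have hpos : 0 < √((1 - δ) * Module.finrank ℝ F) * √s := by
    have : 0 < 1 - δ := sub_pos.2 hδ1
    positivity
  have hset : {x : EuclideanSpace ℝ ι | regularizedNorm s x ≤ β} =
      {x | √s ≤ regularizedNorm s x ∧ regularizedNorm s x ≤ β} := by
    ext x
    exact (and_iff_right (sqrt_le_sqrt (by simp))).symm
  rw [hset]
  exact (half_mul_measure_le_truncatedImageLaw hs hR hRF hδ hδ1.le hδF (sqrt_nonneg s)).trans
    (measure_mono (Set.preimage_mono fun y hy ↦ ⟨hpos.trans_le hy.1, hy.2⟩))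

lemma IsNormalizedLogConcave.measureReal_regularizedNorm_mul_le
    (hμ : IsNormalizedLogConcave μ) (hs : 0 < s) (hι : Fintype.card ι ≤ s)
    (hF : 2 ≤ Module.finrank ℝ F) {ρ t : ℝ} (hρ : 0 < ρ) (ht : 0 < t) (ht1 : t ≤ 1)
    (hFt : 256 * Var[fun w ↦ w ^ 2; gaussianReal 0 1] ≤ Module.finrank ℝ F * t ^ 2)
    (hFs : 10 ^ 16 * (Module.finrank ℝ F : ℝ) ^ 2 ≤ t ^ 2 * s) (hρs : (1 + t) * ρ ≤ 20 * √s) :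
    μ.real {x | regularizedNorm s x ≤ ρ} *
        μ.real {x | (1 + t) * ρ ≤ regularizedNorm s x ∧ regularizedNorm s x ≤ 20 * √s} ≤
      4 * rexp (-(t ^ 2 * Module.finrank ℝ F / 640)) := by
  have := hμ.isProbabilityMeasure
  have : Nontrivial F := Module.nontrivial_of_finrank_pos (R := ℝ) (by omega)
  borelize F
  have hd : (2 : ℝ) ≤ Module.finrank ℝ F := mod_cast hF
  have hstable : IsSmoothedDensityStable F μ s √(4 * (s * Module.finrank ℝ F))
      √(600 * (s * Module.finrank ℝ F)) (t ^ 2 / 1280 * Module.finrank ℝ F) :=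
    hμ.isSmoothedDensityStable hs (by nlinarith)
      (by nlinarith [sq_nonneg (Module.finrank ℝ F : ℝ)])
  have hRF : 4 * (Fintype.card ι * Module.finrank ℝ F) ≤ √(4 * (s * Module.finrank ℝ F)) ^ 2 := by
    rw [sq_sqrt (by positivity)]
    gcongr
  have hVar : 4 * Var[fun w ↦ w ^ 2; gaussianReal 0 1] ≤ Module.finrank ℝ F * (t / 8) ^ 2 := by
    linarith
  set d := (Module.finrank ℝ F : ℝ)
  set a := √((1 + t / 8) * d) * ρ
  set b := √((1 - t / 8) * d) * ((1 + t) * ρ)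
  have ha : 0 < a := by positivity
  have hab : (1 + t / 4) * a ≤ b := one_add_mul_sqrt_mul_le ht ht1 (by positivity) hρ.le
  have hab' : a ≤ b := by nlinarith [mul_pos ht ha]
  have houter : √((1 + t / 8) * d) * (20 * √s) ≤ √(600 * (s * d)) :=
    sqrt_one_add_mul_mul_sqrt_le ht.le ht1 (by positivity) hs.le
  have hb : b ≤ √(600 * (s * d)) :=
    (mul_le_mul (sqrt_le_sqrt (by nlinarith)) hρs (by positivity) (by positivity)).trans houter
  have hlow : 2⁻¹ * μ {x | regularizedNorm s x ≤ ρ} ≤ _ :=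
    half_mul_measure_regularizedNorm_le_le hs (by positivity) hRF (by positivity) (by linarith)
      hVar
  have hhigh : 2⁻¹ * μ {x | (1 + t) * ρ ≤ regularizedNorm s x ∧ regularizedNorm s x ≤ 20 * √s} ≤
      truncatedImageLaw F μ s √(4 * (s * d)) (norm ⁻¹' Set.Icc b √(600 * (s * d))) :=
    (half_mul_measure_le_truncatedImageLaw hs (by positivity) hRF (by positivity) (by linarith)
      hVar (by positivity)).trans
      (measure_mono (Set.preimage_mono (Set.Icc_subset_Icc_right houter)))
  have hprod := ENNReal.toReal_mono ENNReal.ofReal_ne_top <| (mul_le_mul' hlow hhigh).trans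
    (hstable.truncatedImageLaw_mul_le hμ.isLogConcaveMeasure hs ha hab' hb)
  have hexp := exp_mul_pow_le_exp_neg hF (by positivity)
    (four_mul_div_sq_add_le_exp ht ht1 ha hab)
  rw [ENNReal.toReal_ofReal (by positivity)] at hprod
  simp only [ENNReal.toReal_mul, ENNReal.toReal_inv, ENNReal.toReal_ofNat] at hprod
  simp only [Measure.real]
  linarith

end TwoSidedBound

/-! ### Concentration of the regularized norm about its median -/

section Median

lemma exists_half_le_measureReal_Iic_and_Ici (ν : Measure ℝ) [IsProbabilityMeasure ν] :
    ∃ m, 1 / 2 ≤ ν.real (Set.Iic m) ∧ 1 / 2 ≤ ν.real (Set.Ici m) := by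
  let S := {r | 1 / 2 ≤ cdf ν r}
  have hne : S.Nonempty :=
    ((tendsto_cdf_atTop ν).eventually (Ici_mem_nhds (by norm_num : (1 / 2 : ℝ) < 1))).exists
  obtain ⟨a, ha⟩ := ((tendsto_cdf_atBot ν).eventually
    (Iio_mem_nhds (by norm_num : (0 : ℝ) < 1 / 2))).exists
  have hbdd : BddBelow S := ⟨a, fun r hr ↦ le_of_not_gt fun hra ↦
    absurd (hr.trans (monotone_cdf ν hra.le)) (not_le.2 ha)⟩
  refine ⟨sInf S, ?_, ?_⟩
  · rw [← cdf_eq_real]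
    refine ge_of_tendsto (((cdf ν).right_continuous _).mono Set.Ioi_subset_Ici_self) ?_
    filter_upwards [self_mem_nhdsWithin] with r hr
    obtain ⟨u, hu, hur⟩ := exists_lt_of_csInf_lt hne hr
    exact le_trans hu (monotone_cdf ν hur.le)
  · have hleft : Function.leftLim (cdf ν) (sInf S) ≤ 1 / 2 := by
      refine le_of_tendsto ((monotone_cdf ν).tendsto_leftLim _) ?_
      filter_upwards [self_mem_nhdsWithin] with r hr
      exact le_of_not_ge fun h ↦ absurd (csInf_le hbdd h) (not_le.2 hr)
    rw [← measure_cdf ν, Measure.real, (cdf ν).measure_Ici (tendsto_cdf_atTop ν),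
      ENNReal.toReal_ofReal (by linarith)]
    linarith

variable {α : Type*} [MeasurableSpace α] {μ : Measure α} {f : α → ℝ} {m s t b ε : ℝ}

lemma exists_half_le_measureReal_le_and_ge [IsProbabilityMeasure μ] (hf : Measurable f) :
    ∃ m, 1 / 2 ≤ μ.real {x | f x ≤ m} ∧ 1 / 2 ≤ μ.real {x | m ≤ f x} := by
  have := Measure.isProbabilityMeasure_map (μ := μ) hf.aemeasurable
  obtain ⟨m, hle, hge⟩ := exists_half_le_measureReal_Iic_and_Ici (μ.map f)
  rw [map_measureReal_apply hf measurableSet_Iic] at hle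
  rw [map_measureReal_apply hf measurableSet_Ici] at hge
  exact ⟨m, hle, hge⟩

lemma measureReal_add_le_and_le_le [IsFiniteMeasure μ] (hm : 1 / 2 ≤ μ.real {x | f x ≤ m})
    (hts : t * m ≤ s)
    (hprod : μ.real {x | f x ≤ m} * μ.real {x | (1 + t) * m ≤ f x ∧ f x ≤ b} ≤ ε) :
    μ.real {x | m + s ≤ f x ∧ f x ≤ b} ≤ 2 * ε := by
  have hmono : μ.real {x | m + s ≤ f x ∧ f x ≤ b} ≤
      μ.real {x | (1 + t) * m ≤ f x ∧ f x ≤ b} :=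
    measureReal_mono fun x hx ↦ ⟨by linarith [hx.1], hx.2⟩
  nlinarith [measureReal_nonneg (μ := μ) (s := {x | m + s ≤ f x ∧ f x ≤ b})]

lemma measureReal_le_sub_le [IsFiniteMeasure μ] (hm : 1 / 2 ≤ μ.real {x | m ≤ f x})
    (hb : μ.real {x | b ≤ f x} ≤ 1 / 4) (hts : t * (m - s) ≤ s)
    (hprod : μ.real {x | f x ≤ m - s} *
      μ.real {x | (1 + t) * (m - s) ≤ f x ∧ f x ≤ b} ≤ ε) :
    μ.real {x | f x ≤ m - s} ≤ 4 * ε := by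
  have hcover : {x | m ≤ f x} ⊆ {x | (1 + t) * (m - s) ≤ f x ∧ f x ≤ b} ∪ {x | b ≤ f x} :=
    fun x (hx : m ≤ f x) ↦ (le_total (f x) b).imp (fun h ↦ ⟨by linarith, h⟩) id
  have hquarter : 1 / 4 ≤ μ.real {x | (1 + t) * (m - s) ≤ f x ∧ f x ≤ b} := by
    linarith [(measureReal_mono (μ := μ) hcover).trans (measureReal_union_le _ _)]
  nlinarith [measureReal_nonneg (μ := μ) (s := {x | f x ≤ m - s})]

end Median

section SecondMoment

lemma measureReal_le_le_integral_sq_div {α : Type*} [MeasurableSpace α] {μ : Measure α}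
    [IsFiniteMeasure μ] {f : α → ℝ} (hf : Integrable (fun x ↦ f x ^ 2) μ) {r : ℝ} (hr : 0 < r) :
    μ.real {x | r ≤ f x} ≤ (∫ x, f x ^ 2 ∂μ) / r ^ 2 := by
  rw [le_div_iff₀' (by positivity)]
  refine le_trans ?_ (mul_meas_ge_le_integral_of_nonneg (.of_forall fun _ ↦ sq_nonneg _) hf (r ^ 2))
  refine mul_le_mul_of_nonneg_left (measureReal_mono fun x (hx : r ≤ f x) ↦ ?_) (sq_nonneg r)
  exact pow_le_pow_left₀ hr.le hx 2

namespace IsNormalizedLogConcave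

section Norm

variable {E : Type*} [NormedAddCommGroup E] [InnerProductSpace ℝ E] [FiniteDimensional ℝ E]
  [MeasurableSpace E] {μ : Measure E}

lemma integrable_norm_sq (hμ : IsNormalizedLogConcave μ) : Integrable (fun x ↦ ‖x‖ ^ 2) μ := by
  simp only [← (stdOrthonormalBasis ℝ E).sum_sq_inner_left]
  exact integrable_finsetSum _ fun i _ ↦ hμ.integrable_inner_sq _

lemma integral_norm_sq (hμ : IsNormalizedLogConcave μ) :
    ∫ x, ‖x‖ ^ 2 ∂μ = Module.finrank ℝ E := by
  simp only [← (stdOrthonormalBasis ℝ E).sum_sq_inner_left]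
  rw [integral_finsetSum _ fun i _ ↦ hμ.integrable_inner_sq _]
  simp [hμ.integral_inner_sq]

end Norm

variable {n : ℕ} {μ : Measure (EuclideanSpace ℝ (Fin n))}

lemma integrable_regularizedNorm_sq (hμ : IsNormalizedLogConcave μ) :
    Integrable (fun x ↦ regularizedNorm n x ^ 2) μ := by
  have := hμ.isProbabilityMeasure
  simp only [regularizedNorm_sq (Nat.cast_nonneg n)]
  exact hμ.integrable_norm_sq.add (integrable_const _)

lemma integral_regularizedNorm_sq (hμ : IsNormalizedLogConcave μ) :
    ∫ x, regularizedNorm n x ^ 2 ∂μ = 2 * n := by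
  have := hμ.isProbabilityMeasure
  simp only [regularizedNorm_sq (Nat.cast_nonneg n)]
  rw [integral_add hμ.integrable_norm_sq (integrable_const _), hμ.integral_norm_sq]
  simp [two_mul]

lemma measureReal_le_norm_le (hμ : IsNormalizedLogConcave μ) {r : ℝ} (hr : 0 < r) :
    μ.real {x | r ≤ ‖x‖} ≤ n / r ^ 2 := by
  have := hμ.isProbabilityMeasure
  simpa [hμ.integral_norm_sq] using measureReal_le_le_integral_sq_div hμ.integrable_norm_sq hr

lemma measureReal_le_regularizedNorm_le (hμ : IsNormalizedLogConcave μ) {r : ℝ} (hr : 0 < r) :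
    μ.real {x | r ≤ regularizedNorm n x} ≤ 2 * n / r ^ 2 := by
  have := hμ.isProbabilityMeasure
  simpa only [hμ.integral_regularizedNorm_sq] using
    measureReal_le_le_integral_sq_div hμ.integrable_regularizedNorm_sq hr

lemma exists_median_regularizedNorm (hμ : IsNormalizedLogConcave μ) (hn : 0 < n) :
    ∃ m, √n ≤ m ∧ m ≤ 2 * √n ∧ 1 / 2 ≤ μ.real {x | regularizedNorm n x ≤ m} ∧
      1 / 2 ≤ μ.real {x | m ≤ regularizedNorm n x} := by
  have := hμ.isProbabilityMeasure
  obtain ⟨m, hle, hge⟩ := exists_half_le_measureReal_le_and_ge (μ := μ)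
    (f := regularizedNorm n) continuous_regularizedNorm.measurable
  have hr : 0 < √(n : ℝ) := sqrt_pos.2 (mod_cast hn)
  obtain ⟨x, hx⟩ : {x | regularizedNorm n x ≤ m}.Nonempty :=
    nonempty_of_measureReal_ne_zero (by linarith)
  have hlow : √n ≤ m := (sqrt_le_regularizedNorm _ x).trans hx
  refine ⟨m, hlow, ?_, hle, hge⟩
  have hm : 0 < m := hr.trans_le hlow
  have hmarkov := hge.trans (hμ.measureReal_le_regularizedNorm_le hm)
  rw [le_div_iff₀ (by positivity)] at hmarkov
  refine le_of_sq_le_sq ?_ (by positivity)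
  rw [mul_pow, sq_sqrt (Nat.cast_nonneg n)]
  linarith

end IsNormalizedLogConcave

end SecondMoment

section MedianConcentration

namespace IsNormalizedLogConcave

variable {n : ℕ} {μ : Measure (EuclideanSpace ℝ (Fin n))} {ρ t : ℝ}

-- The Gaussian image lives in dimension `k ≍ t √n`, the largest for which the density is stable.
lemma measureReal_regularizedNorm_mul_le_of_large (hμ : IsNormalizedLogConcave μ) (hρ : 0 < ρ)
    (ht : 0 ≤ t) (ht1 : t ≤ 1)
    (hlarge : 512 * 10 ^ 8 * (Var[fun w ↦ w ^ 2; gaussianReal 0 1] + 1) ≤ t ^ 3 * √n)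
    (hρn : (1 + t) * ρ ≤ 20 * √n) :
    μ.real {x | regularizedNorm n x ≤ ρ} *
        μ.real {x | (1 + t) * ρ ≤ regularizedNorm n x ∧ regularizedNorm n x ≤ 20 * √n} ≤
      4 * rexp (-(1 / (1280 * 10 ^ 8) * (t ^ 3 * √n))) := by
  have hV := variance_nonneg (fun w : ℝ ↦ w ^ 2) (gaussianReal 0 1)
  have hr2 : √(n : ℝ) ^ 2 = n := sq_sqrt (Nat.cast_nonneg n)
  have ht3r : 0 < t ^ 3 * √(n : ℝ) := by linarith
  have ht0 : 0 < t := ht.lt_of_ne fun h ↦ by simp [← h] at ht3r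
  have hr0 : 0 < √(n : ℝ) := pos_of_mul_pos_right ht3r (by positivity)
  have ht3 : t ^ 3 * √(n : ℝ) ≤ t * √n := by
    gcongr
    exact pow_le_of_le_one ht ht1 (by norm_num)
  set k := ⌊t * √(n : ℝ) / 10 ^ 8⌋₊
  have hk : (k : ℝ) ≤ t * √(n : ℝ) / 10 ^ 8 := Nat.floor_le (by positivity)
  have hk' : t * √(n : ℝ) / 10 ^ 8 < k + 1 := Nat.lt_floor_add_one _
  have hk2 : 2 ≤ k := Nat.le_floor (by push_cast; linarith)
  have hkhalf : t * √(n : ℝ) / (2 * 10 ^ 8) ≤ k := by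
    have : (2 : ℝ) ≤ k := mod_cast hk2
    linarith
  have hkt : t ^ 3 * √(n : ℝ) / (2 * 10 ^ 8) ≤ t ^ 2 * k :=
    le_of_eq_of_le (by ring) (mul_le_mul_of_nonneg_left hkhalf (sq_nonneg t))
  have hkn : 10 ^ 16 * (k : ℝ) ^ 2 ≤ t ^ 2 * n :=
    calc 10 ^ 16 * (k : ℝ) ^ 2 ≤ 10 ^ 16 * (t * √(n : ℝ) / 10 ^ 8) ^ 2 := by gcongr
      _ = t ^ 2 * n := by rw [div_pow, mul_pow, hr2]; ring
  have hn : (0 : ℝ) < n := sqrt_pos.1 hr0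
  have hbound := hμ.measureReal_regularizedNorm_mul_le (F := EuclideanSpace ℝ (Fin k)) (t := t)
    hn (by simp) (by simpa) hρ ht0 ht1
  rw [finrank_euclideanSpace_fin] at hbound
  refine (hbound (by linarith) hkn hρn).trans ?_
  rw [mul_le_mul_iff_right₀ four_pos, exp_le_exp]
  linarith

end IsNormalizedLogConcave

lemma one_le_exp_mul_exp_neg {u v : ℝ} (h : v ≤ u) : 1 ≤ rexp u * rexp (-v) := by
  rw [← exp_add]
  exact one_le_exp (by linarith)

lemma exists_measureReal_regularizedNorm_mul_le :
    ∃ c C : ℝ, 0 < c ∧ 1 ≤ C ∧ ∀ (n : ℕ) (μ : Measure (EuclideanSpace ℝ (Fin n))),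
      IsNormalizedLogConcave μ → ∀ ρ t : ℝ, 0 < ρ → 0 ≤ t → t ≤ 1 →
        μ.real {x | regularizedNorm n x ≤ ρ} *
            μ.real {x | (1 + t) * ρ ≤ regularizedNorm n x ∧ regularizedNorm n x ≤ 20 * √n} ≤
          C * rexp (-(c * (t ^ 3 * √n))) := by
  set L := 512 * 10 ^ 8 * (Var[fun w ↦ w ^ 2; gaussianReal 0 1] + 1)
  set c : ℝ := 1 / (1280 * 10 ^ 8)
  have hL : 1 ≤ rexp (c * L) := one_le_exp (by
    have := variance_nonneg (fun w : ℝ ↦ w ^ 2) (gaussianReal 0 1)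
    positivity)
  refine ⟨c, 4 * rexp (c * L), by positivity, by linarith, fun n μ hμ ρ t hρ ht ht1 ↦ ?_⟩
  have := hμ.isProbabilityMeasure
  rw [mul_assoc]
  rcases le_total (t ^ 3 * √n) L with hsmall | hlarge
  · have hone : 1 ≤ rexp (c * L) * rexp (-(c * (t ^ 3 * √n))) :=
      one_le_exp_mul_exp_neg (by gcongr)
    exact (mul_le_one₀ measureReal_le_one measureReal_nonneg measureReal_le_one).trans
      (by linarith)
  rcases le_or_gt ((1 + t) * ρ) (20 * √n) with hρn | hρn
  · refine (hμ.measureReal_regularizedNorm_mul_le_of_large hρ ht ht1 hlarge hρn).trans ?_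
    gcongr
    exact le_mul_of_one_le_left (exp_nonneg _) hL
  · have hempty : {x : EuclideanSpace ℝ (Fin n) | (1 + t) * ρ ≤ regularizedNorm n x ∧
        regularizedNorm n x ≤ 20 * √n} = ∅ :=
      Set.eq_empty_of_forall_notMem fun x hx ↦ by linarith [hx.1, hx.2]
    rw [hempty, measureReal_empty, mul_zero]
    positivity

end MedianConcentration

section MedianTail

lemma measureReal_le_abs_sub_and_le_le {α : Type*} [MeasurableSpace α] {μ : Measure α}
    [IsFiniteMeasure μ] {f : α → ℝ} {m s t b ε : ℝ} (hf : ∀ x, 0 < f x)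
    (hle : 1 / 2 ≤ μ.real {x | f x ≤ m}) (hge : 1 / 2 ≤ μ.real {x | m ≤ f x}) (hm : 0 < m)
    (hb : μ.real {x | b ≤ f x} ≤ 1 / 4) (ht : 0 ≤ t) (hts : t * m ≤ s)
    (hprod : ∀ ρ, 0 < ρ →
      μ.real {x | f x ≤ ρ} * μ.real {x | (1 + t) * ρ ≤ f x ∧ f x ≤ b} ≤ ε) :
    μ.real {x | s ≤ |f x - m| ∧ f x ≤ b} ≤ 6 * ε := by
  have hs : 0 ≤ s := le_trans (by positivity) hts
  have hupper : μ.real {x | m + s ≤ f x ∧ f x ≤ b} ≤ 2 * ε :=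
    measureReal_add_le_and_le_le hle hts (hprod m hm)
  have hlower : μ.real {x | f x ≤ m - s} ≤ 4 * ε := by
    rcases le_or_gt (m - s) 0 with hms | hms
    · have hempty : {x | f x ≤ m - s} = ∅ :=
        Set.eq_empty_of_forall_notMem fun x (hx : f x ≤ m - s) ↦ by linarith [hf x]
      rw [hempty, measureReal_empty]
      linarith [measureReal_nonneg.trans hupper]
    · exact measureReal_le_sub_le hge hb (by nlinarith) (hprod (m - s) hms)
  have hcover : {x | s ≤ |f x - m| ∧ f x ≤ b} ⊆
      {x | m + s ≤ f x ∧ f x ≤ b} ∪ {x | f x ≤ m - s} := fun x hx ↦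
    (le_abs.1 hx.1).imp (fun h ↦ ⟨by linarith, hx.2⟩) fun h ↦ show f x ≤ m - s by linarith
  linarith [(measureReal_mono (μ := μ) hcover).trans (measureReal_union_le _ _)]

lemma exists_measureReal_le_abs_regularizedNorm_sub_and_le_le :
    ∃ c C : ℝ, 0 < c ∧ 1 ≤ C ∧ ∀ (n : ℕ) (μ : Measure (EuclideanSpace ℝ (Fin n))),
      IsNormalizedLogConcave μ → 0 < n → ∃ m, √n ≤ m ∧ m ≤ 2 * √n ∧ ∀ t, 0 ≤ t →
        μ.real {x | t * √n ≤ |regularizedNorm n x - m| ∧ regularizedNorm n x ≤ 20 * √n} ≤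
          C * rexp (-(c * (t ^ 3 * √n))) := by
  obtain ⟨c, C, hc, hC, hprod⟩ := exists_measureReal_regularizedNorm_mul_le
  refine ⟨c / 20 ^ 3, 6 * C, by positivity, by linarith, fun n μ hμ hn ↦ ?_⟩
  have := hμ.isProbabilityMeasure
  obtain ⟨m, hm, hm', hle, hge⟩ := hμ.exists_median_regularizedNorm hn
  refine ⟨m, hm, hm', fun t ht ↦ ?_⟩
  have hr : 0 < √(n : ℝ) := sqrt_pos.2 (mod_cast hn)
  rcases le_or_gt t 20 with ht20 | ht20
  · have hb : μ.real {x | 20 * √n ≤ regularizedNorm n x} ≤ 1 / 4 := by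
      refine (hμ.measureReal_le_regularizedNorm_le (by positivity)).trans ?_
      rw [mul_pow, sq_sqrt (Nat.cast_nonneg n), div_le_iff₀ (by positivity)]
      linarith [(Nat.cast_nonneg n : (0 : ℝ) ≤ n)]
    refine (measureReal_le_abs_sub_and_le_le (t := t / 20)
      (fun x ↦ hr.trans_le (sqrt_le_regularizedNorm _ x)) hle hge (hr.trans_le hm) hb
      (by positivity) (by nlinarith [mul_nonneg ht hr.le])
      fun ρ hρ ↦ hprod n μ hμ ρ _ hρ (by positivity) (by linarith)).trans_eq ?_
    rw [div_pow, mul_assoc 6]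
    ring_nf
  · have hempty : {x : EuclideanSpace ℝ (Fin n) |
        t * √n ≤ |regularizedNorm n x - m| ∧ regularizedNorm n x ≤ 20 * √n} = ∅ := by
      refine Set.eq_empty_of_forall_notMem fun x ⟨hx, hx'⟩ ↦ absurd hx (not_le.2 ?_)
      calc |regularizedNorm n x - m| ≤ 20 * √n := abs_le.2
            ⟨by linarith [sqrt_le_regularizedNorm (n : ℝ) x], by linarith⟩
        _ < t * √n := by gcongr
    rw [hempty, measureReal_empty]
    positivity

end MedianTail

/-! ### Large deviations of the norm -/

section LargeDeviations

lemma le_exp_neg_of_le_mul_exp_neg {C η u : ℝ} (hC : 1 ≤ C) (hη : η ≤ rexp (-1))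
    (h : η ≤ C * rexp (-u)) : η ≤ rexp (-(u / (log C + 1))) := by
  have hlog : 0 ≤ log C := log_nonneg hC
  rcases le_or_gt η 0 with hη0 | hη0
  · exact hη0.trans (exp_nonneg _)
  have hη1 : log η ≤ -1 := (log_le_iff_le_exp hη0).2 hη
  have hη2 : log η ≤ log C - u :=
    (log_le_log hη0 h).trans_eq (by rw [log_mul (by positivity) (exp_ne_zero _), log_exp]; ring)
  rw [← log_le_iff_le_exp hη0, ← neg_div, le_div_iff₀ (by linarith)]
  nlinarith

namespace IsNormalizedLogConcave

variable {n : ℕ} {μ : Measure (EuclideanSpace ℝ (Fin n))}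

lemma measureReal_six_mul_sqrt_le_norm_le (hμ : IsNormalizedLogConcave μ) (hn : 0 < n) :
    μ.real {x | 6 * √n ≤ ‖x‖} ≤ 1 / 36 := by
  have hn0 : (0 : ℝ) < n := mod_cast hn
  refine (hμ.measureReal_le_norm_le (by positivity)).trans_eq ?_
  rw [mul_pow, sq_sqrt hn0.le]
  field_simp
  norm_num

lemma measureReal_le_norm_le_rpow (hμ : IsNormalizedLogConcave μ) (hn : 0 < n) {s : ℝ}
    (hs : 6 * √n < s) :
    μ.real {x | s ≤ ‖x‖} ≤
      (36 / 35 * μ.real {x | 6 * √n ≤ ‖x‖}) ^ ((s + 6 * √n) / (2 * (6 * √n))) := by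
  have := hμ.isProbabilityMeasure
  have : 0 < √(n : ℝ) := sqrt_pos.2 (mod_cast hn)
  have hs0 : 0 < s := lt_trans (by positivity) hs
  have hinner : 35 / 36 ≤ μ.real {x | ‖x‖ < 6 * √n} := by
    have hcompl : {x : EuclideanSpace ℝ (Fin n) | ‖x‖ < 6 * √n} = {x | 6 * √n ≤ ‖x‖}ᶜ := by
      ext
      simp
    rw [hcompl, probReal_compl_eq_one_sub (measurableSet_le measurable_const measurable_norm)]
    linarith [hμ.measureReal_six_mul_sqrt_le_norm_le hn]
  refine (hμ.isLogConcaveMeasure.measureReal_le_seminorm_le (p := normSeminorm ℝ _)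
    continuous_norm (by positivity) hs (lt_of_lt_of_le (by norm_num) hinner)).trans ?_
  simp only [coe_normSeminorm]
  refine rpow_le_rpow (by positivity) ?_ (by positivity)
  rw [div_le_iff₀ (by linarith)]
  nlinarith [measureReal_nonneg (μ := μ) (s := {x | 6 * √n ≤ ‖x‖})]

lemma measureReal_six_mul_sqrt_le_norm_le_shell (hμ : IsNormalizedLogConcave μ) (hn : 0 < n) :
    μ.real {x | 6 * √n ≤ ‖x‖} ≤ 2 * μ.real {x | 6 * √n ≤ ‖x‖ ∧ ‖x‖ ≤ 18 * √n} := by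
  have := hμ.isProbabilityMeasure
  have : 0 < √(n : ℝ) := sqrt_pos.2 (mod_cast hn)
  have hfar := hμ.measureReal_le_norm_le_rpow hn (s := 18 * √n) (by linarith)
  rw [show (18 * √n + 6 * √n) / (2 * (6 * √n)) = 2 by field_simp; norm_num, rpow_two] at hfar
  have hcover : {x : EuclideanSpace ℝ (Fin n) | 6 * √n ≤ ‖x‖} ⊆
      {x | 6 * √n ≤ ‖x‖ ∧ ‖x‖ ≤ 18 * √n} ∪ {x | 18 * √n ≤ ‖x‖} :=
    fun x (hx : _ ≤ _) ↦ (le_total ‖x‖ (18 * √n)).imp (fun h ↦ ⟨hx, h⟩) id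
  nlinarith [(measureReal_mono (μ := μ) hcover).trans (measureReal_union_le _ _),
    hμ.measureReal_six_mul_sqrt_le_norm_le hn,
    measureReal_nonneg (μ := μ) (s := {x | 6 * √n ≤ ‖x‖})]

end IsNormalizedLogConcave

-- The shell between `6 √n` and `18 √n` carries at least half of the mass beyond `6 √n`, and it is
-- at distance `4 √n` from the median.
lemma exists_measureReal_six_mul_sqrt_le_norm_le_exp :
    ∃ c : ℝ, 0 < c ∧ ∀ (n : ℕ) (μ : Measure (EuclideanSpace ℝ (Fin n))),
      IsNormalizedLogConcave μ → 0 < n →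
        36 / 35 * μ.real {x | 6 * √n ≤ ‖x‖} ≤ rexp (-(c * √n)) := by
  obtain ⟨c, C, hc, hC, hshell⟩ := exists_measureReal_le_abs_regularizedNorm_sub_and_le_le
  have hlog : 0 ≤ log (3 * C) := log_nonneg (by linarith)
  refine ⟨c * 4 ^ 3 / (log (3 * C) + 1), by positivity, fun n μ hμ hn ↦ ?_⟩
  have := hμ.isProbabilityMeasure
  obtain ⟨m, -, hm, hdev⟩ := hshell n μ hμ hn
  have hsub : {x : EuclideanSpace ℝ (Fin n) | 6 * √n ≤ ‖x‖ ∧ ‖x‖ ≤ 18 * √n} ⊆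
      {x | 4 * √n ≤ |regularizedNorm n x - m| ∧ regularizedNorm n x ≤ 20 * √n} := fun x hx ↦
    ⟨le_abs.2 (.inl (by linarith [norm_le_regularizedNorm (Nat.cast_nonneg n) x, hx.1])),
      by linarith [regularizedNorm_le_add (Nat.cast_nonneg n) x, hx.2, sqrt_nonneg (n : ℝ)]⟩
  have hexp : (1 : ℝ) / 35 ≤ rexp (-1) := by
    rw [exp_neg, ← one_div]
    gcongr
    linarith [exp_one_lt_three]
  have hq : 36 / 35 * μ.real {x | 6 * √n ≤ ‖x‖} ≤ 3 * C * rexp (-(c * (4 ^ 3 * √n))) :=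
    calc 36 / 35 * μ.real {x | 6 * √n ≤ ‖x‖}
        ≤ 36 / 35 * (2 * (C * rexp (-(c * (4 ^ 3 * √n))))) := by
          gcongr
          exact (hμ.measureReal_six_mul_sqrt_le_norm_le_shell hn).trans
            (by gcongr; exact (measureReal_mono hsub).trans (hdev 4 (by norm_num)))
      _ = 72 / 35 * C * rexp (-(c * (4 ^ 3 * √n))) := by ring
      _ ≤ 3 * C * rexp (-(c * (4 ^ 3 * √n))) := by
          gcongr
          norm_num
  have hp := hμ.measureReal_six_mul_sqrt_le_norm_le hn
  exact (le_exp_neg_of_le_mul_exp_neg (by linarith) (by linarith) hq).trans_eq (by ring_nf)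

lemma exists_measureReal_le_norm_le_exp :
    ∃ c : ℝ, 0 < c ∧ ∀ (n : ℕ) (μ : Measure (EuclideanSpace ℝ (Fin n))),
      IsNormalizedLogConcave μ → 0 < n → ∀ s, 6 * √n < s →
        μ.real {x | s ≤ ‖x‖} ≤ rexp (-(c * s)) := by
  obtain ⟨c, hc, hcore⟩ := exists_measureReal_six_mul_sqrt_le_norm_le_exp
  refine ⟨c / 12, by positivity, fun n μ hμ hn s hs ↦ ?_⟩
  have hr : 0 < √(n : ℝ) := sqrt_pos.2 (mod_cast hn)
  have hs0 : 0 < s := lt_trans (by positivity) hs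
  calc μ.real {x | s ≤ ‖x‖}
      ≤ (36 / 35 * μ.real {x | 6 * √n ≤ ‖x‖}) ^ ((s + 6 * √n) / (2 * (6 * √n))) :=
        hμ.measureReal_le_norm_le_rpow hn hs
    _ ≤ rexp (-(c * √n)) ^ ((s + 6 * √n) / (2 * (6 * √n))) := by
        gcongr
        exact hcore n μ hμ hn
    _ = rexp (-(c / 12 * (s + 6 * √n))) := by
        rw [← exp_mul]
        congr 1
        field_simp
        ring
    _ ≤ rexp (-(c / 12 * s)) := by
        gcongr
        linarith

end LargeDeviations

/-! ### Centring and conclusion -/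

section Centring

variable {α : Type*} [MeasurableSpace α] {μ : Measure α} [IsProbabilityMeasure μ] {f : α → ℝ}

lemma integral_sq_le_of_tail {A b : ℝ} (hf : Measurable f) (hf0 : 0 ≤ f)
    (hb : 0 < b) (tail : ∀ s ≥ 0, μ.real {x | s ≤ f x} ≤ A * rexp (-b * s)) :
    ∫ x, f x ^ 2 ∂μ ≤ 8 / b ^ 2 * (1 + A) := by
  obtain ⟨hint, hle⟩ := integrable_exp_mul_and_integral_le_of_tail hf hf0 (half_pos hb)
    (half_lt_self hb) tail
  have hpt (x : α) : f x ^ 2 ≤ 8 / b ^ 2 * rexp (b / 2 * f x) := by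
    have hquad := quadratic_le_exp_of_nonneg (mul_nonneg (half_pos hb).le (hf0 x))
    rw [div_mul_eq_mul_div, le_div_iff₀ (by positivity)]
    nlinarith [mul_nonneg hb.le (hf0 x)]
  calc ∫ x, f x ^ 2 ∂μ ≤ ∫ x, 8 / b ^ 2 * rexp (b / 2 * f x) ∂μ :=
        integral_mono_of_nonneg (.of_forall fun _ ↦ sq_nonneg _) (hint.const_mul _)
          (.of_forall hpt)
    _ ≤ 8 / b ^ 2 * (1 + A) := by
        rw [integral_const_mul]
        gcongr
        refine hle.trans_eq ?_
        rw [sub_half, mul_div_assoc, div_self (half_pos hb).ne', mul_one]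

lemma sq_sub_sqrt_integral_sq_le (hf : AEStronglyMeasurable f μ)
    (hf2 : Integrable (fun x ↦ f x ^ 2) μ) {m : ℝ} (hm : 0 ≤ m) :
    (m - √(∫ x, f x ^ 2 ∂μ)) ^ 2 ≤ ∫ x, (f x - m) ^ 2 ∂μ := by
  have hmem : MemLp f 2 μ := (memLp_two_iff_integrable_sq hf).2 hf2
  have hint : Integrable f μ := hmem.integrable one_le_two
  have hexpand : ∫ x, (f x - m) ^ 2 ∂μ = ∫ x, f x ^ 2 ∂μ - 2 * m * ∫ x, f x ∂μ + m ^ 2 := by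
    have hcross := hint.const_mul (2 * m)
    have hdiff : Integrable (fun x ↦ f x ^ 2 - 2 * m * f x) μ := hf2.sub hcross
    simp only [sub_sq, mul_right_comm 2 _ m]
    rw [integral_add hdiff (integrable_const _), integral_sub hf2 hcross,
      integral_const_mul]
    simp
  have hmean : ∫ x, f x ∂μ ≤ √(∫ x, f x ^ 2 ∂μ) := by
    refine le_sqrt_of_sq_le ?_
    have hvar := variance_nonneg f μ
    rw [variance_eq_sub hmem] at hvar
    simpa using hvar
  have hsq : √(∫ x, f x ^ 2 ∂μ) ^ 2 = ∫ x, f x ^ 2 ∂μ :=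
    sq_sqrt (integral_nonneg fun _ ↦ sq_nonneg _)
  nlinarith [mul_le_mul_of_nonneg_left hmean hm]

end Centring

section Conclusion

namespace IsNormalizedLogConcave

variable {n : ℕ} {μ : Measure (EuclideanSpace ℝ (Fin n))}

lemma measureReal_le_abs_regularizedNorm_sub_le_add (hμ : IsNormalizedLogConcave μ) {m t : ℝ}
    (hm0 : 0 ≤ m) (hm : m ≤ 2 * √n) :
    μ.real {x | t * √n ≤ |regularizedNorm n x - m|} ≤
      μ.real {x | t * √n ≤ |regularizedNorm n x - m| ∧ regularizedNorm n x ≤ 20 * √n} +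
        μ.real {x | max (10 * √n) (t / 2 * √n) ≤ ‖x‖} := by
  have := hμ.isProbabilityMeasure
  refine (measureReal_mono fun x hx ↦ ?_).trans (measureReal_union_le _ _)
  refine (le_or_gt (regularizedNorm n x) (20 * √n)).imp (fun h ↦ ⟨hx, h⟩) fun h ↦ ?_
  have := sqrt_nonneg (n : ℝ)
  have hnorm := regularizedNorm_le_two_mul_norm (Nat.cast_nonneg n) (x := x) (by linarith)
  have habs : |regularizedNorm n x - m| ≤ regularizedNorm n x :=
    abs_le.2 ⟨by linarith, by linarith⟩
  have hx' : t * √n ≤ |regularizedNorm n x - m| := hx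
  exact max_le (show 10 * √n ≤ ‖x‖ by linarith) (show t / 2 * √n ≤ ‖x‖ by linarith)

end IsNormalizedLogConcave

lemma exists_measureReal_le_abs_regularizedNorm_sub_le :
    ∃ c C : ℝ, 0 < c ∧ 1 ≤ C ∧ ∀ (n : ℕ) (μ : Measure (EuclideanSpace ℝ (Fin n))),
      IsNormalizedLogConcave μ → 0 < n → ∃ m, 0 ≤ m ∧ ∀ t, 0 ≤ t →
        μ.real {x | t * √n ≤ |regularizedNorm n x - m|} ≤
          C * rexp (-(c * (√n * min (t ^ 3) t))) := by
  obtain ⟨c, C, hc, hC, hshell⟩ := exists_measureReal_le_abs_regularizedNorm_sub_and_le_le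
  obtain ⟨c', hc', hfar⟩ := exists_measureReal_le_norm_le_exp
  refine ⟨min c (c' / 2), C + 1, lt_min hc (half_pos hc'), by linarith, fun n μ hμ hn ↦ ?_⟩
  obtain ⟨m, hm, hm', hdev⟩ := hshell n μ hμ hn
  have hr : 0 < √(n : ℝ) := sqrt_pos.2 (mod_cast hn)
  have hm0 : 0 ≤ m := hr.le.trans hm
  refine ⟨m, hm0, fun t ht ↦
    (hμ.measureReal_le_abs_regularizedNorm_sub_le_add hm0 hm').trans ?_⟩
  rw [add_mul, one_mul]
  refine add_le_add ((hdev t ht).trans ?_)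
    ((hfar n μ hμ hn _ (lt_max_of_lt_left (by linarith))).trans ?_)
  · have : min c (c' / 2) * (√n * min (t ^ 3) t) ≤ c * (t ^ 3 * √n) := by
      rw [mul_comm (t ^ 3)]
      gcongr
      exacts [min_le_left _ _, min_le_left _ _]
    gcongr
  · rw [exp_le_exp, neg_le_neg_iff]
    calc min c (c' / 2) * (√n * min (t ^ 3) t) ≤ c' / 2 * (√n * t) := by
          gcongr
          exacts [min_le_right _ _, min_le_right _ _]
      _ = c' * (t / 2 * √n) := by ring
      _ ≤ c' * max (10 * √n) (t / 2 * √n) := by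
          gcongr
          exact le_max_right _ _

lemma sub_one_le_mul_min {r h s : ℝ} (hr : 0 < r) (hh : 1 ≤ h) (hhr : h ^ 3 = r ^ 2)
    (hs : 0 ≤ s) : s - 1 ≤ r * min ((s * h / r) ^ 3) (s * h / r) := by
  rw [mul_min_of_nonneg _ _ hr.le]
  refine le_min ?_ ?_
  · have hcube : r * (s * h / r) ^ 3 = s ^ 3 := by
      rw [div_pow, mul_pow, hhr]
      field_simp
    rw [hcube]
    nlinarith [mul_nonneg hs (sq_nonneg (s - 1)), sq_nonneg (s - 1)]
  · rw [mul_div_cancel₀ _ hr.ne']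
    nlinarith

-- At scale `h = n ^ (1 / 3)` the tail of `|R - m|` is exponential with constants free of `n`, so
-- `m` is within `O(h)` of the quadratic mean of `R`.
lemma IsNormalizedLogConcave.abs_sub_sqrt_two_mul_le {n : ℕ}
    {μ : Measure (EuclideanSpace ℝ (Fin n))} (hμ : IsNormalizedLogConcave μ) {c C m h : ℝ}
    (hc : 0 < c) (hm : 0 ≤ m) (hh : 1 ≤ h) (hhn : h ^ 3 = n)
    (htail : ∀ t, 0 ≤ t → μ.real {x | t * √n ≤ |regularizedNorm n x - m|} ≤
      C * rexp (-(c * (√n * min (t ^ 3) t)))) :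
    |m - √(2 * n)| ≤ √(8 / c ^ 2 * (1 + C * rexp c)) * h := by
  have := hμ.isProbabilityMeasure
  have hh0 : 0 < h := by linarith
  have hr : 0 < √(n : ℝ) := sqrt_pos.2 (by rw [← hhn]; positivity)
  have hC : 0 ≤ C := by
    have := measureReal_nonneg.trans (htail 0 le_rfl)
    simpa using this
  have hscaled (s : ℝ) (hs : 0 ≤ s) : μ.real {x | s ≤ |regularizedNorm n x - m| / h} ≤
      C * rexp c * rexp (-c * s) := by
    have hscale := sub_one_le_mul_min hr hh (by rw [hhn, sq_sqrt n.cast_nonneg]) hs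
    have ht := htail (s * h / √n) (by positivity)
    rw [div_mul_cancel₀ _ hr.ne'] at ht
    simp only [le_div_iff₀ hh0]
    refine ht.trans ?_
    rw [mul_assoc, ← exp_add]
    gcongr
    nlinarith
  have hle := integral_sq_le_of_tail (μ := μ) (f := fun x ↦ |regularizedNorm n x - m| / h)
    (by fun_prop) (fun x ↦ by positivity) hc hscaled
  have hmean := sq_sub_sqrt_integral_sq_le continuous_regularizedNorm.aestronglyMeasurable
    hμ.integrable_regularizedNorm_sq hm
  rw [hμ.integral_regularizedNorm_sq] at hmean
  simp only [div_pow, sq_abs, integral_div] at hle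
  rw [div_le_iff₀ (by positivity)] at hle
  refine abs_le_of_sq_le_sq ?_ (by positivity)
  rw [mul_pow, sq_sqrt (by positivity)]
  exact hmean.trans hle

lemma pow_three_mul_min_le {a t : ℝ} (ha : 0 ≤ a) (ha1 : a ≤ 1) (ht : 0 ≤ t) :
    a ^ 3 * min (t ^ 3) t ≤ min ((a * t) ^ 3) (a * t) := by
  rw [mul_min_of_nonneg _ _ (by positivity), mul_pow]
  gcongr
  exact pow_le_of_le_one ha ha1 three_ne_zero

lemma IsNormalizedLogConcave.measureReal_le_abs_regularizedNorm_sub_sqrt_le {n : ℕ}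
    {μ : Measure (EuclideanSpace ℝ (Fin n))} (hμ : IsNormalizedLogConcave μ) (hn : 0 < n)
    {c C m t : ℝ} (hc : 0 < c) (hm : 0 ≤ m) (ht : 0 ≤ t)
    (htail : ∀ t, 0 ≤ t → μ.real {x | t * √n ≤ |regularizedNorm n x - m|} ≤
      C * rexp (-(c * (√n * min (t ^ 3) t))))
    (hlarge : (2 * √(8 / c ^ 2 * (1 + C * rexp c))) ^ 3 ≤ √n * t ^ 3) :
    μ.real {x | t * √n ≤ |regularizedNorm n x - √(2 * n)|} ≤
      C * rexp (-(c * (√n * min ((1 / 2 * t) ^ 3) (1 / 2 * t)))) := by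
  have := hμ.isProbabilityMeasure
  set D := √(8 / c ^ 2 * (1 + C * rexp c))
  obtain ⟨h, hh, hhn⟩ : ∃ h : ℝ, 1 ≤ h ∧ h ^ 3 = n :=
    ⟨(n : ℝ) ^ ((3 : ℕ) : ℝ)⁻¹, one_le_rpow (mod_cast hn) (by positivity),
      rpow_inv_natCast_pow n.cast_nonneg three_ne_zero⟩
  have hmean : |m - √(2 * n)| ≤ D * h := hμ.abs_sub_sqrt_two_mul_le hc hm hh hhn htail
  have hDh : 2 * D * h ≤ t * √n := by
    refine le_of_pow_le_pow_left₀ three_ne_zero (by positivity) ?_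
    calc (2 * D * h) ^ 3 = (2 * D) ^ 3 * n := by rw [mul_pow, hhn]
      _ ≤ √n * t ^ 3 * n := by gcongr
      _ = √n * t ^ 3 * √n ^ 2 := by rw [sq_sqrt n.cast_nonneg]
      _ = (t * √n) ^ 3 := by ring
  refine le_trans (measureReal_mono fun x (hx : t * √n ≤ |regularizedNorm n x - √(2 * n)|) ↦ ?_)
    (htail _ (by positivity))
  have htriangle := abs_sub_le (regularizedNorm n x) m √(2 * n)
  exact show 1 / 2 * t * √n ≤ |regularizedNorm n x - m| by linarith

lemma exists_measureReal_le_abs_regularizedNorm_sub_sqrt_le :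
    ∃ c C : ℝ, 0 < c ∧ 0 < C ∧ ∀ (n : ℕ) (μ : Measure (EuclideanSpace ℝ (Fin n))),
      IsNormalizedLogConcave μ → ∀ t, 0 ≤ t →
        μ.real {x | t * √n ≤ |regularizedNorm n x - √(2 * n)|} ≤
          C * rexp (-(c * (√n * min (t ^ 3) t))) := by
  obtain ⟨c, C, hc, hC, hdev⟩ := exists_measureReal_le_abs_regularizedNorm_sub_le
  set L := (2 * √(8 / c ^ 2 * (1 + C * rexp c))) ^ 3
  have hL : 0 ≤ L := by positivity
  have hexp : 1 ≤ rexp (c / 8 * L) := one_le_exp (by positivity)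
  refine ⟨c / 8, C * rexp (c / 8 * L), by positivity, by positivity, fun n μ hμ t ht ↦ ?_⟩
  have := hμ.isProbabilityMeasure
  rcases le_or_gt (√n * t ^ 3) L with hsmall | hlarge
  · refine measureReal_le_one.trans ?_
    rw [mul_assoc]
    refine one_le_mul_of_one_le_of_one_le hC (one_le_exp_mul_exp_neg ?_)
    gcongr
    exact (mul_le_mul_of_nonneg_left (min_le_left _ _) (sqrt_nonneg _)).trans hsmall
  have hn : 0 < n := Nat.pos_of_ne_zero fun h ↦ by
    simp only [h, Nat.cast_zero, sqrt_zero, zero_mul] at hlarge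
    linarith
  obtain ⟨m, hm, htail⟩ := hdev n μ hμ hn
  refine (hμ.measureReal_le_abs_regularizedNorm_sub_sqrt_le hn hc hm ht htail hlarge.le).trans ?_
  have hmin := pow_three_mul_min_le (a := 1 / 2) (by norm_num) (by norm_num) ht
  have hexponent : c / 8 * (√n * min (t ^ 3) t) ≤
      c * (√n * min ((1 / 2 * t) ^ 3) (1 / 2 * t)) :=
    calc c / 8 * (√n * min (t ^ 3) t) = c * (√n * ((1 / 2) ^ 3 * min (t ^ 3) t)) := by ring
      _ ≤ _ := by gcongr
  gcongr
  exact le_mul_of_one_le_right (by linarith) hexp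

theorem statement0_general :
    ∃ c C : ℝ, 0 < c ∧ 0 < C ∧ ∀ (n : ℕ) (μ : Measure (EuclideanSpace ℝ (Fin n))),
      IsNormalizedLogConcave μ → ∀ t : ℝ, 0 ≤ t →
        μ {x | t * √n ≤ |‖x‖ - √n|} ≤
          ENNReal.ofReal (C * rexp (-(c * (n : ℝ) ^ ((1 : ℝ) / 2) * min (t ^ 3) t))) := by
  obtain ⟨c, C, hc, hC, hdev⟩ := exists_measureReal_le_abs_regularizedNorm_sub_sqrt_le
  refine ⟨c / 27, C, by positivity, hC, fun n μ hμ t ht ↦ ?_⟩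
  have := hμ.isProbabilityMeasure
  rw [← ofReal_measureReal, ← sqrt_eq_rpow]
  refine ENNReal.ofReal_le_ofReal ?_
  refine le_trans (measureReal_mono fun x (hx : t * √n ≤ |‖x‖ - √n|) ↦ ?_)
    ((hdev n μ hμ (1 / 3 * t) (by positivity)).trans ?_)
  · exact show 1 / 3 * t * √n ≤ |regularizedNorm n x - √(2 * n)| by
      linarith [abs_norm_sub_sqrt_le n.cast_nonneg x]
  have hmin := pow_three_mul_min_le (a := 1 / 3) (by norm_num) (by norm_num) ht
  have hexponent : c / 27 * √n * min (t ^ 3) t ≤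
      c * (√n * min ((1 / 3 * t) ^ 3) (1 / 3 * t)) :=
    calc c / 27 * √n * min (t ^ 3) t = c * (√n * ((1 / 3) ^ 3 * min (t ^ 3) t)) := by ring
      _ ≤ _ := by gcongr
  gcongr

lemma HasDensityFn.isNormalizedLogConcave_map {n : ℕ} {Ω : Type*} [MeasurableSpace Ω]
    {P : Measure Ω} [IsProbabilityMeasure P] {X : Ω → EuclideanSpace ℝ (Fin n)}
    {f : EuclideanSpace ℝ (Fin n) → ℝ} (hX : HasDensityFn P X f) (hf : IsLogConcaveFn f)
    (hiso : Isotropic P X) : IsNormalizedLogConcave (P.map X) where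
  isProbabilityMeasure := Measure.isProbabilityMeasure_map hX.1.aemeasurable
  isLogConcaveMeasure := by
    rw [hX.2]
    exact hf.isLogConcaveMeasure_withDensity
  integral_inner_sq v := by
    rw [integral_map hX.1.aemeasurable (by fun_prop), ← real_inner_self_eq_norm_sq, ← hiso.2 v v]
    simp only [sq]

end Conclusion

/-- sharp interpolating thin-shell/large-deviation estimate for isotropic
log-concave random vectors. -/
theorem statement0 :
    ∃ c C : ℝ, 0 < c ∧ 0 < C ∧
      ∀ (n : ℕ) (Ω : Type) (_mΩ : MeasurableSpace Ω) (P : Measure Ω),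
        IsProbabilityMeasure P →
        ∀ (X : Ω → EuclideanSpace ℝ (Fin n)) (f : EuclideanSpace ℝ (Fin n) → ℝ),
          HasDensityFn P X f → IsLogConcaveFn f → Isotropic P X →
          ∀ t : ℝ, 0 ≤ t →
            P {ω | t * Real.sqrt n ≤ |‖X ω‖ - Real.sqrt n|} ≤
              ENNReal.ofReal (C * Real.exp (-(c * (n : ℝ) ^ ((1:ℝ)/2) * min (t ^ 3) t))) := by
  obtain ⟨c, C, hc, hC, hdev⟩ := statement0_general
  exact ⟨c, C, hc, hC, fun n Ω _ P _ X f hX hf hiso t ht ↦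
    (Measure.le_map_apply hX.1.aemeasurable _).trans
      (hdev n _ (hX.isNormalizedLogConcave_map hf hiso) t ht)⟩
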